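/- Let a and b be nonzero, multiplicatively independent integers, and let ε(t) be a weakly decreasing positive function of t ≥ 1 tending to 0 as t → ∞ and satisfying ε(t) ≥ 1/log log log(100t) for all t ≥ 1. For real x ≥ 16 set ξ = log log x, let U(x) be the set of primes p ≤ x such that p divides ab, or p ≤ ξ, or the ξ-smooth part of p−1 exceeds exp(√(log p)), or the ξ-rough part of p−1 is not squarefree, or ℓ_a(p) ≤ p^{1/2}/log p, or ℓ_b(p) ≤ p^{1/2}/log p, or ℓ_{a,b}(p) ≤ p^{2/3}/log p; and let V(x) be the set of primes p ≤ x with p ∉ U(x) and p^{2/3}/log p < ℓ_{a,b}(p) ≤ p^{2/3 + 5ε(p)}. Then there exist a constant C > 0 and x_0 (depending on a, b, ε) such that for all x ≥ x_0, uniformly for log log x < t ≤ x, the number of primes in V(x) that are at most t is at most C·ε(t/log t)^{1/12}·t/log t. -/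

import Mathlib

open Filter
open scoped Classical

/-- The `z`-smooth part of `m`: its largest `z`-smooth divisor. -/
noncomputable def smoothPart (z : ℝ) (m : ℕ) : ℕ :=
  ∏ p ∈ m.primeFactors.filter (fun p : ℕ => (p : ℝ) ≤ z), p ^ m.factorization p

/-- The `z`-rough part of `m`: the cofactor of the `z`-smooth part. -/
noncomputable def roughPart (z : ℝ) (m : ℕ) : ℕ :=
  ∏ p ∈ m.primeFactors.filter (fun p : ℕ => z < (p : ℝ)), p ^ m.factorization p

/-- The order of the subgroup of `(ℤ/pℤ)ˣ` generated by the residues of `a` and `b`. -/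
noncomputable def ellPair (a b : ℤ) (p : ℕ) : ℕ :=
  Nat.card (Submonoid.closure ({(a : ZMod p), (b : ZMod p)} : Set (ZMod p)))

/-- Membership in the exceptional set `U(x)`: with `ξ = log log x`, the prime `p`
divides `ab`, or `p ≤ ξ`, or the `ξ`-smooth part of `p - 1` exceeds `exp(√(log p))`,
or the `ξ`-rough part of `p - 1` is not squarefree, or `ℓ_a(p) ≤ p^(1/2)/log p`, or
`ℓ_b(p) ≤ p^(1/2)/log p`, or `ℓ_{a,b}(p) ≤ p^(2/3)/log p`. -/
def UCond (a b : ℤ) (x : ℝ) (p : ℕ) : Prop :=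
  (p : ℤ) ∣ a * b ∨ (p : ℝ) ≤ Real.log (Real.log x) ∨
  Real.exp (Real.sqrt (Real.log p)) < (smoothPart (Real.log (Real.log x)) (p - 1) : ℝ) ∨
  ¬ Squarefree (roughPart (Real.log (Real.log x)) (p - 1)) ∨
  (orderOf ((a : ZMod p)) : ℝ) ≤ (p : ℝ) ^ ((1 : ℝ) / 2) / Real.log p ∨
  (orderOf ((b : ZMod p)) : ℝ) ≤ (p : ℝ) ^ ((1 : ℝ) / 2) / Real.log p ∨
  (ellPair a b p : ℝ) ≤ (p : ℝ) ^ ((2 : ℝ) / 3) / Real.log p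

/-- Membership in `V(x)`: `p ∉ U(x)` and `p^(2/3)/log p < ℓ_{a,b}(p) ≤ p^(2/3+5ε(p))`. -/
def VCond (a b : ℤ) (ε : ℝ → ℝ) (x : ℝ) (p : ℕ) : Prop :=
  ¬ UCond a b x p ∧
  (p : ℝ) ^ ((2 : ℝ) / 3) / Real.log p < (ellPair a b p : ℝ) ∧
  (ellPair a b p : ℝ) ≤ (p : ℝ) ^ ((2 : ℝ) / 3 + 5 * ε p)

/-!
Every prime counted by the theorem either is at most `t / log t` or is such that `p - 1` has a
divisor, namely `ℓ_{a,b}(p)`, in the window `(t ^ (2/3 - e), t ^ (2/3 + 5 * e)]` with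
`e = ε (t / log t)`. Such primes are rare, as in the multiplication table problem.

Put `w = t ^ e`. Few `p` have `q ^ 2 ∣ p - 1` for some `q > w`, and by a sieve and Rankin's trick
few have a `w`-smooth divisor of `p - 1` larger than `t ^ (e * log (1 / e) / 3)`. For the remaining
`p` a product of distinct prime factors of `p - 1` above `w` lies in a slightly longer window.
Write `ω` for the number of prime factors of `p - 1` above `w`. Selberg's sieve bounds the sum of
`y ^ ω` over the `p ≤ t` for which `p - 1` is divisible by a given product of primes above `w`.
If `ω > K = log (1 / e) / log 2`, sum this over all products up to `√t`: since one of each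
complementary pair of products of prime factors of `p - 1` is at most `√t`, such a `p` is counted
with a weight of at least `(2 * y) ^ ω / 2`. If `ω ≤ K`, sum over the products in the window: each
such `p` has weight at least `y ^ K`, and the narrowness of the window saves a factor of about
`e * log (1 / e)`. Up to logarithms, both cases give the exponent `2 - 2 * y + log y / log 2` of
`e`; its maximum, at `y = 1 / (2 * log 2)`, is `1 - (1 + log (log 2)) / log 2 = 0.086… > 1 / 12`.
-/

section Mertens

open Finset Real MeasureTheory

/-- The primes `p` with `x < p ≤ y`. -/
noncomputable def primesIoc (x y : ℝ) : Finset ℕ := {p ∈ Ioc ⌊x⌋₊ ⌊y⌋₊ | p.Prime}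

/-- The primes `p ≤ x`. -/
noncomputable abbrev primesUpTo (x : ℝ) : Finset ℕ := primesIoc 0 x

theorem mem_primesIoc {x y : ℝ} {p : ℕ} : p ∈ primesIoc x y ↔ p.Prime ∧ x < p ∧ (p : ℝ) ≤ y := by
  rw [primesIoc, mem_filter, mem_Ioc, and_comm]
  refine and_congr_right fun hp => ?_
  rw [Nat.floor_lt' hp.ne_zero, Nat.le_floor_iff' hp.ne_zero]

theorem mem_primesUpTo {x : ℝ} {p : ℕ} : p ∈ primesUpTo x ↔ p.Prime ∧ (p : ℝ) ≤ x := by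
  rw [mem_primesIoc]
  exact ⟨fun h => ⟨h.1, h.2.2⟩, fun h => ⟨h.1, mod_cast h.1.pos, h.2⟩⟩

theorem primesUpTo_eq_primesLE (x : ℝ) : primesUpTo x = Nat.primesLE ⌊x⌋₊ := by
  rw [Nat.primesLE_eq_filter_Ioc_zero, primesUpTo, primesIoc, Nat.floor_zero]

theorem primesUpTo_mono {x y : ℝ} (hxy : x ≤ y) : primesUpTo x ⊆ primesUpTo y := fun p hp => by
  rw [mem_primesUpTo] at hp ⊢
  exact ⟨hp.1, hp.2.trans hxy⟩

theorem sum_primesUpTo_add_sum_primesIoc {x y : ℝ} (hxy : x ≤ y) (f : ℕ → ℝ) :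
    ∑ p ∈ primesUpTo x, f p + ∑ p ∈ primesIoc x y, f p = ∑ p ∈ primesUpTo y, f p := by
  have hfloor : ⌊x⌋₊ ≤ ⌊y⌋₊ := Nat.floor_le_floor hxy
  simp only [primesUpTo, primesIoc, Nat.floor_zero, sum_filter]
  rw [← sum_Ioc_consecutive _ (Nat.zero_le _) hfloor]

theorem log_factorial_eq_sum_primesLE (n : ℕ) :
    log n.factorial = ∑ p ∈ n.primesLE, n.factorial.factorization p * log p := by
  rw [log_nat_eq_sum_factorization]
  refine Finsupp.sum_of_support_subset _ (fun p hp => ?_) _ (by simp)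
  have hp' : p ∈ n.factorial.primeFactors := by simpa only [Nat.support_factorization] using hp
  have hprime := Nat.prime_of_mem_primeFactors hp'
  exact Nat.mem_primesLE.2
    ⟨hprime.dvd_factorial.1 (Nat.dvd_of_mem_primeFactors hp'), hprime⟩

theorem div_le_factorization_factorial {p : ℕ} (hp : p.Prime) (n : ℕ) :
    n / p ≤ n.factorial.factorization p := by
  have hdvd := Nat.factorial_dvd_factorial (Nat.mul_div_le n p)
  have hle := (Nat.factorization_le_iff_dvd (Nat.factorial_ne_zero _)
    (Nat.factorial_ne_zero _)).2 hdvd p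
  rw [Nat.factorization_factorial_mul hp] at hle
  lia

theorem sum_log_div_primesUpTo_natCast_le {n : ℕ} (hn : 1 ≤ n) :
    ∑ p ∈ primesUpTo n, log p / p ≤ log n + 2 := by
  rw [primesUpTo_eq_primesLE, Nat.floor_natCast]
  have hn0 : (0 : ℝ) < n := mod_cast hn
  have hfactorial : log n.factorial ≤ n * log n := by
    rw [← log_pow]
    exact log_le_log (mod_cast n.factorial_pos) (mod_cast n.factorial_le_pow)
  have htheta : ∑ p ∈ n.primesLE, log p ≤ 2 * n := by
    rw [← Chebyshev.theta_eq_sum_primesLE_log]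
    refine (Chebyshev.theta_le_log4_mul_x hn0.le).trans ?_
    gcongr
    linarith [log_four_eq, log_two_lt_d9]
  have hterm : ∀ p ∈ n.primesLE,
      (n : ℝ) * (log p / p) - log p ≤ n.factorial.factorization p * log p := by
    intro p hp
    have hdiv : (n : ℝ) / p - 1 ≤ n.factorial.factorization p := by
      have hfloor := Nat.lt_floor_add_one ((n : ℝ) / p)
      rw [Nat.floor_div_eq_div] at hfloor
      have hle : ((n / p : ℕ) : ℝ) ≤ n.factorial.factorization p :=
        mod_cast div_le_factorization_factorial (Nat.prime_of_mem_primesLE hp) n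
      linarith
    calc (n : ℝ) * (log p / p) - log p = ((n : ℝ) / p - 1) * log p := by ring
      _ ≤ _ := by gcongr
  have hsum := sum_le_sum hterm
  rw [← log_factorial_eq_sum_primesLE, sum_sub_distrib, ← mul_sum] at hsum
  refine le_of_mul_le_mul_left ?_ hn0
  linarith

theorem log_succ_div_le_sub (k : ℕ) (hk : 1 ≤ k) :
    log (k + 1) / ((k + 1) * k) ≤ (log k + 2) / k - (log (k + 1) + 2) / (k + 1) := by
  have hk1 : (1 : ℝ) ≤ k := mod_cast hk
  have hlog : log (k + 1) ≤ log k + 1 / k := by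
    have h := log_le_sub_one_of_pos (show (0 : ℝ) < (k + 1) / k by positivity)
    rw [log_div (by positivity) (by positivity), add_div, div_self (by positivity)] at h
    linarith
  have hmul : k * log (k + 1) ≤ k * log k + 1 := by
    calc k * log (k + 1) ≤ k * (log k + 1 / k) := by gcongr
      _ = k * log k + 1 := by field_simp
  have hinv : 1 / (k : ℝ) ≤ 1 := by rw [div_le_one (by positivity)]; exact hk1
  rw [div_sub_div _ _ (by positivity) (by positivity), mul_comm ((k : ℝ) + 1) k]
  gcongr
  linarith

theorem sum_Ioc_log_div_mul_sub_one_le {n : ℕ} (hn : 1 ≤ n) :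
    ∑ k ∈ Ioc 1 n, log k / (k * (k - 1)) ≤ 2 - (log n + 2) / n := by
  induction n, hn using Nat.le_induction with
  | base => simp
  | succ k hk ih =>
    rw [sum_Ioc_succ_top (by lia)]
    push_cast
    rw [add_sub_cancel_right]
    linarith [log_succ_div_le_sub k hk]

theorem sum_primesLE_log_div_mul_sub_one_le (n : ℕ) :
    ∑ p ∈ n.primesLE, log p / (p * (p - 1)) ≤ 2 := by
  obtain rfl | hn := n.eq_zero_or_pos
  · simp
  rw [Nat.primesLE_eq_filter_Ioc_one]
  calc ∑ p ∈ Ioc 1 n with p.Prime, log p / (p * (p - 1))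
      ≤ ∑ k ∈ Ioc 1 n, log k / (k * (k - 1)) := by
        refine sum_le_sum_of_subset_of_nonneg (filter_subset _ _) fun k hk _ => ?_
        have hk1 : (1 : ℝ) ≤ k := mod_cast (mem_Ioc.1 hk).1.le
        exact div_nonneg (log_natCast_nonneg k) (mul_nonneg (by positivity) (by linarith))
    _ ≤ 2 - (log n + 2) / n := sum_Ioc_log_div_mul_sub_one_le hn
    _ ≤ 2 := by
        have := log_natCast_nonneg n
        linarith [show 0 ≤ (log n + 2) / n by positivity]

theorem log_sub_three_le_sum_log_div_primesUpTo_natCast {n : ℕ} (hn : 1 ≤ n) :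
    log n - 3 ≤ ∑ p ∈ primesUpTo n, log p / p := by
  rw [primesUpTo_eq_primesLE, Nat.floor_natCast]
  have hn0 : (0 : ℝ) < n := mod_cast hn
  have hfactorial : n * log n - n ≤ log n.factorial := by
    have h := pow_div_factorial_le_exp (n : ℝ) hn0.le n
    rw [← log_le_iff_le_exp (by positivity), log_div (by positivity) (by positivity), log_pow] at h
    linarith
  have hterm : ∀ p ∈ n.primesLE, n.factorial.factorization p * log p ≤
      (n : ℝ) * (log p / p + log p / (p * (p - 1))) := by
    intro p hp
    have hprime := Nat.prime_of_mem_primesLE hp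
    have hp1 : (0 : ℝ) < p - 1 := by linarith [show (1 : ℝ) < p from mod_cast hprime.one_lt]
    have hval : (n.factorial.factorization p : ℝ) ≤ n / (p - 1) := by
      calc (n.factorial.factorization p : ℝ) ≤ (n / (p - 1) : ℕ) :=
            mod_cast Nat.factorization_factorial_le_div_pred hprime n
        _ ≤ n / (p - 1 : ℕ) := Nat.cast_div_le
        _ = n / (p - 1) := by rw [Nat.cast_pred hprime.pos]
    calc n.factorial.factorization p * log p ≤ n / (p - 1) * log p := by gcongr
      _ = n * (log p / p + log p / (p * (p - 1))) := by
        have : (p : ℝ) ≠ 0 := mod_cast hprime.ne_zero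
        field_simp
        ring
  have hsum := sum_le_sum hterm
  rw [← log_factorial_eq_sum_primesLE, ← mul_sum, sum_add_distrib] at hsum
  have htail := mul_le_mul_of_nonneg_left (sum_primesLE_log_div_mul_sub_one_le n) hn0.le
  refine le_of_mul_le_mul_left ?_ hn0
  linarith

theorem log_sub_one_le_log_floor {x : ℝ} (hx : 1 ≤ x) : log x - 1 ≤ log ⌊x⌋₊ := by
  have hfloor : (1 : ℝ) ≤ ⌊x⌋₊ := mod_cast (Nat.one_le_floor_iff x).2 hx
  have hle : x ≤ 2 * ⌊x⌋₊ := by linarith [Nat.lt_floor_add_one x]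
  have hlog := log_le_log (by linarith) hle
  rw [log_mul (by norm_num) (by positivity)] at hlog
  linarith [log_two_lt_d9]

theorem primesUpTo_floor (x : ℝ) : primesUpTo (⌊x⌋₊ : ℝ) = primesUpTo x := by
  rw [primesUpTo_eq_primesLE, primesUpTo_eq_primesLE, Nat.floor_natCast]

theorem sum_log_div_primesUpTo_le {x : ℝ} (hx : 1 ≤ x) :
    ∑ p ∈ primesUpTo x, log p / p ≤ log x + 2 := by
  have hfloor := (Nat.one_le_floor_iff x).2 hx
  have hlog : log ⌊x⌋₊ ≤ log x := log_le_log (mod_cast hfloor) (Nat.floor_le (by linarith))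
  rw [← primesUpTo_floor]
  linarith [sum_log_div_primesUpTo_natCast_le hfloor]

theorem log_sub_four_le_sum_log_div_primesUpTo {x : ℝ} (hx : 1 ≤ x) :
    log x - 4 ≤ ∑ p ∈ primesUpTo x, log p / p := by
  rw [← primesUpTo_floor]
  linarith [log_sub_three_le_sum_log_div_primesUpTo_natCast ((Nat.one_le_floor_iff x).2 hx),
    log_sub_one_le_log_floor hx]

theorem sum_log_div_primesIoc_le {x y : ℝ} (hx : 1 ≤ x) (hxy : x ≤ y) :
    ∑ p ∈ primesIoc x y, log p / p ≤ log (y / x) + 6 := by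
  rw [log_div (by linarith) (by linarith)]
  linarith [sum_primesUpTo_add_sum_primesIoc hxy fun p => log p / p,
    sum_log_div_primesUpTo_le (hx.trans hxy), log_sub_four_le_sum_log_div_primesUpTo hx]

theorem two_thirds_le_log {x : ℝ} (hx : 2 ≤ x) : 2 / 3 ≤ log x := by
  linarith [log_two_gt_d9, log_le_log (by norm_num) hx]

theorem hasDerivAt_inv_log {t : ℝ} (ht : 1 < t) :
    HasDerivAt (fun t => (log t)⁻¹) (-(t * log t ^ 2)⁻¹) t := by
  refine ((hasDerivAt_log (by linarith : t ≠ 0)).fun_inv (log_pos ht).ne').congr_deriv ?_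
  rw [mul_inv, neg_div, div_eq_mul_inv]

theorem hasDerivAt_log_log_sub {t : ℝ} (ht : 1 < t) (c : ℝ) :
    HasDerivAt (fun t => log (log t) - c * (log t)⁻¹) ((t * log t ^ 2)⁻¹ * (log t + c)) t := by
  have hlog : log t ≠ 0 := (log_pos ht).ne'
  have ht0 : t ≠ 0 := by linarith
  refine (((hasDerivAt_log ht0).log hlog).sub
    ((hasDerivAt_inv_log ht).const_mul c)).congr_deriv ?_
  field_simp
  ring

theorem continuousOn_inv_mul_log_sq {x y : ℝ} (hx : 1 < x) :
    ContinuousOn (fun t => (t * log t ^ 2)⁻¹) (Set.Icc x y) := by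
  intro t ht
  have ht1 : 1 < t := hx.trans_le ht.1
  have hlog := (log_pos ht1).ne'
  have ht0 : t ≠ 0 := by linarith
  exact ContinuousAt.continuousWithinAt (by fun_prop (disch := positivity))

theorem integrableOn_inv_mul_log_sq_mul {x y : ℝ} (hx : 1 < x) (c : ℝ) :
    IntegrableOn (fun t => (t * log t ^ 2)⁻¹ * (log t + c)) (Set.Ioc x y) := by
  refine (ContinuousOn.integrableOn_Icc ?_).mono_set Set.Ioc_subset_Icc_self
  refine (continuousOn_inv_mul_log_sq hx).mul ((continuousOn_log.mono ?_).add continuousOn_const)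
  intro t ht
  simp only [Set.mem_compl_iff, Set.mem_singleton_iff]
  linarith [ht.1]

theorem integral_inv_mul_log_sq_mul {x y : ℝ} (hx : 1 < x) (hxy : x ≤ y) (c : ℝ) :
    ∫ t in Set.Ioc x y, (t * log t ^ 2)⁻¹ * (log t + c) =
      log (log y / log x) - c * ((log y)⁻¹ - (log x)⁻¹) := by
  rw [← intervalIntegral.integral_of_le hxy, intervalIntegral.integral_eq_sub_of_hasDerivAt
    (f := fun t => log (log t) - c * (log t)⁻¹)]
  · rw [log_div (log_pos (hx.trans_le hxy)).ne' (log_pos hx).ne']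
    ring
  · intro t ht
    rw [Set.uIcc_of_le hxy] at ht
    exact hasDerivAt_log_log_sub (hx.trans_le ht.1) c
  · exact (intervalIntegrable_iff_integrableOn_Ioc_of_le hxy).2
      (integrableOn_inv_mul_log_sq_mul hx c)

theorem sum_primesUpTo_log_div_eq_sum_Icc (t : ℝ) :
    ∑ p ∈ primesUpTo t, log p / p =
      ∑ k ∈ Icc 0 ⌊t⌋₊, if k.Prime then log k / k else 0 := by
  rw [← sum_filter, primesUpTo_eq_primesLE]
  refine sum_congr ?_ fun _ _ => rfl
  ext p
  simp [Nat.mem_primesLE]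

theorem integrableOn_inv_mul_log_sq_mul_sum {x y : ℝ} (hx : 1 < x) :
    IntegrableOn (fun t => (t * log t ^ 2)⁻¹ * ∑ p ∈ primesUpTo t, log p / p) (Set.Ioc x y) := by
  simp only [sum_primesUpTo_log_div_eq_sum_Icc]
  exact (integrableOn_mul_sum_Icc _ (by linarith)
    (continuousOn_inv_mul_log_sq hx).integrableOn_Icc).mono_set Set.Ioc_subset_Icc_self

theorem sum_inv_primesIoc_eq {x y : ℝ} (hx : 1 < x) (hxy : x ≤ y) :
    ∑ p ∈ primesIoc x y, (1 : ℝ) / p =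
      (log y)⁻¹ * ∑ p ∈ primesUpTo y, log p / p - (log x)⁻¹ * ∑ p ∈ primesUpTo x, log p / p +
        ∫ t in Set.Ioc x y, (t * log t ^ 2)⁻¹ * ∑ p ∈ primesUpTo t, log p / p := by
  have hderiv : Set.EqOn (deriv fun t => (log t)⁻¹) (fun t => -(t * log t ^ 2)⁻¹) (Set.Icc x y) :=
    fun t ht => (hasDerivAt_inv_log (hx.trans_le ht.1)).deriv
  have habel := sum_mul_eq_sub_sub_integral_mul (fun k => if k.Prime then log k / k else 0)
    (f := fun t => (log t)⁻¹) (by linarith) hxy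
    (fun t ht => (hasDerivAt_inv_log (hx.trans_le ht.1)).differentiableAt)
    ((integrableOn_congr_fun hderiv measurableSet_Icc).2
      (continuousOn_inv_mul_log_sq hx).neg.integrableOn_Icc)
  have hterm : ∑ p ∈ primesIoc x y, (1 : ℝ) / p =
      ∑ k ∈ Ioc ⌊x⌋₊ ⌊y⌋₊, (log k)⁻¹ * if k.Prime then log k / k else 0 := by
    simp only [mul_ite, mul_zero, ← sum_filter]
    refine sum_congr rfl fun p hp => ?_
    have hlog : log p ≠ 0 := (log_pos (mod_cast (mem_primesIoc.1 hp).1.one_lt)).ne'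
    field_simp
  simp only [sum_primesUpTo_log_div_eq_sum_Icc]
  rw [hterm, habel, sub_eq_add_neg, ← integral_neg, setIntegral_congr_fun measurableSet_Ioc]
  intro t ht
  simp only [hderiv (Set.Ioc_subset_Icc_self ht), neg_mul, neg_neg]

theorem abs_sum_inv_primesIoc_sub_log_le {x y : ℝ} (hx : 2 ≤ x) (hxy : x ≤ y) :
    |∑ p ∈ primesIoc x y, (1 : ℝ) / p - log (log y / log x)| ≤ 9 := by
  have hx1 : 1 < x := by linarith
  have hlogx : 0 < log x := log_pos hx1
  have hlogy : 0 < log y := log_pos (hx1.trans_le hxy)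
  have hupper : ∫ t in Set.Ioc x y, (t * log t ^ 2)⁻¹ * ∑ p ∈ primesUpTo t, log p / p ≤
      ∫ t in Set.Ioc x y, (t * log t ^ 2)⁻¹ * (log t + 2) := by
    refine setIntegral_mono_on (integrableOn_inv_mul_log_sq_mul_sum hx1)
      (integrableOn_inv_mul_log_sq_mul hx1 2) measurableSet_Ioc fun t ht => ?_
    have ht0 : 1 ≤ t := by linarith [ht.1]
    gcongr
    exact sum_log_div_primesUpTo_le ht0
  have hlower : ∫ t in Set.Ioc x y, (t * log t ^ 2)⁻¹ * (log t + -4) ≤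
      ∫ t in Set.Ioc x y, (t * log t ^ 2)⁻¹ * ∑ p ∈ primesUpTo t, log p / p := by
    refine setIntegral_mono_on (integrableOn_inv_mul_log_sq_mul hx1 (-4))
      (integrableOn_inv_mul_log_sq_mul_sum hx1) measurableSet_Ioc fun t ht => ?_
    have ht0 : 1 ≤ t := by linarith [ht.1]
    gcongr
    linarith [log_sub_four_le_sum_log_div_primesUpTo ht0]
  rw [integral_inv_mul_log_sq_mul hx1 hxy] at hupper hlower
  have hinv : (log x)⁻¹ ≤ 3 / 2 := by
    rw [inv_le_comm₀ hlogx (by norm_num)]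
    linarith [two_thirds_le_log hx]
  have hendpoint {z : ℝ} (hz : 1 ≤ z) (hlog : 0 < log z) :
      1 - 4 * (log z)⁻¹ ≤ (log z)⁻¹ * ∑ p ∈ primesUpTo z, log p / p ∧
        (log z)⁻¹ * ∑ p ∈ primesUpTo z, log p / p ≤ 1 + 2 * (log z)⁻¹ := by
    rw [inv_mul_eq_div, le_div_iff₀ hlog, div_le_iff₀ hlog, sub_mul, add_mul,
      inv_mul_cancel_right₀ hlog.ne', inv_mul_cancel_right₀ hlog.ne', one_mul]
    exact ⟨log_sub_four_le_sum_log_div_primesUpTo hz, by linarith [sum_log_div_primesUpTo_le hz]⟩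
  have hy := hendpoint (hx1.le.trans hxy) hlogy
  have hx' := hendpoint hx1.le hlogx
  rw [sum_inv_primesIoc_eq hx1 hxy, abs_le]
  constructor <;> linarith

theorem abs_sum_inv_primesUpTo_sub_log_log_le {x : ℝ} (hx : 2 ≤ x) :
    |∑ p ∈ primesUpTo x, (1 : ℝ) / p - log (log x)| ≤ 10 := by
  have htwo : ∑ p ∈ primesUpTo (2 : ℝ), (1 : ℝ) / p = 1 / 2 := by
    have hprimes : primesUpTo (2 : ℝ) = {2} := by
      rw [primesUpTo_eq_primesLE, Nat.floor_ofNat]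
      decide
    rw [hprimes, sum_singleton, Nat.cast_ofNat]
  have hlog_two : 0 < log 2 := log_pos one_lt_two
  have hupper := log_le_sub_one_of_pos hlog_two
  have hlower := one_sub_inv_le_log_of_pos hlog_two
  have hinv : (log 2)⁻¹ ≤ 3 / 2 := by
    rw [inv_le_comm₀ hlog_two (by norm_num)]
    linarith [log_two_gt_d9]
  have hIoc := abs_le.1 (abs_sum_inv_primesIoc_sub_log_le le_rfl hx)
  rw [log_div (log_pos (by linarith)).ne' hlog_two.ne'] at hIoc
  rw [← sum_primesUpTo_add_sum_primesIoc hx, htwo, abs_le]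
  constructor <;> linarith [log_two_lt_d9]

end Mertens

section SelbergSieve

open Finset

variable {α ι : Type*}

theorem sum_sum_sum_mul_mul_eq_sum_mul_sq {κ : Type*} (R : Finset ι) (Q : Finset κ) (w : κ → ℝ)
    (f : κ → ι → ℝ) :
    ∑ i ∈ R, ∑ j ∈ R, ∑ k ∈ Q, w k * (f k i * f k j) = ∑ k ∈ Q, w k * (∑ i ∈ R, f k i) ^ 2 := by
  simp_rw [sum_comm (s := R) (t := Q), sq, sum_mul_sum, mul_sum]

/-- The multiplicative function `h(V) = ∏ ρ / (1 - ρ)` that is dual to the density `∏ ρ` in the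
diagonalisation of Selberg's quadratic form. -/
noncomputable def selbergTerm (ρ : α → ℝ) (V : Finset α) : ℝ := ∏ p ∈ V, ρ p / (1 - ρ p)

/-- The denominator of the main term in Selberg's sieve, where `R` is the family of admissible
sifting levels. -/
noncomputable def selbergSum (R : Finset (Finset α)) (ρ : α → ℝ) : ℝ := ∑ V ∈ R, selbergTerm ρ V

theorem selbergTerm_pos {ρ : α → ℝ} {V : Finset α} (hρ : ∀ p ∈ V, 0 < ρ p ∧ ρ p < 1) :
    0 < selbergTerm ρ V :=
  prod_pos fun p hp => div_pos (hρ p hp).1 (sub_pos.2 (hρ p hp).2)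

theorem inv_prod_eq_sum_powerset_inv_selbergTerm {ρ : α → ℝ} {S : Finset α}
    (hρ : ∀ p ∈ S, ρ p ≠ 0) :
    (∏ p ∈ S, ρ p)⁻¹ = ∑ V ∈ S.powerset, (selbergTerm ρ V)⁻¹ := by
  have hfactor : ∀ p ∈ S, (ρ p)⁻¹ = 1 + (ρ p / (1 - ρ p))⁻¹ := fun p hp => by
    have := hρ p hp
    rw [inv_div]
    field_simp
    ring
  simp only [selbergTerm, ← prod_inv_distrib]
  rw [prod_congr rfl hfactor, prod_one_add]

variable {P : Finset α} {R : Finset (Finset α)} {ρ : α → ℝ}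

theorem selbergSum_pos (hR : R ⊆ P.powerset) (hne : R.Nonempty)
    (hρ : ∀ p ∈ P, 0 < ρ p ∧ ρ p < 1) : 0 < selbergSum R ρ :=
  sum_pos (fun _ hV => selbergTerm_pos fun p hp => hρ p (mem_powerset.1 (hR hV) hp)) hne

variable [DecidableEq α]

theorem sum_powerset_superset_prod_mul_prod {A : Finset α} (hA : A ⊆ P) (f g : α → ℝ) :
    ∑ U ∈ P.powerset with A ⊆ U, (∏ p ∈ U, f p) * ∏ p ∈ P \ U, g p =
      (∏ p ∈ A, f p) * ∏ p ∈ P \ A, (f p + g p) := by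
  have hprod : ∏ p ∈ P, (f p + if p ∈ A then 0 else g p) =
      (∏ p ∈ A, f p) * ∏ p ∈ P \ A, (f p + g p) := by
    rw [← prod_sdiff hA, mul_comm]
    refine congrArg₂ _ (prod_congr rfl fun p hp => ?_) (prod_congr rfl fun p hp => ?_)
    · rw [if_pos hp, add_zero]
    · rw [if_neg (mem_sdiff.1 hp).2]
  rw [← hprod, prod_add, sum_filter]
  refine sum_congr rfl fun U _ => ?_
  split_ifs with hAU
  · exact congrArg _ (prod_congr rfl fun p hp => (if_neg fun h => (mem_sdiff.1 hp).2 (hAU h)).symm)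
  · obtain ⟨p, hp, hpU⟩ := not_subset.1 hAU
    refine (mul_eq_zero_of_right _ (prod_eq_zero (mem_sdiff.2 ⟨hA hp, hpU⟩) ?_)).symm
    exact if_pos hp

theorem sum_powerset_superset_neg_one_pow_card (V W : Finset α) :
    ∑ S ∈ W.powerset with V ⊆ S, (-1 : ℝ) ^ #S = if V = W then (-1) ^ #V else 0 := by
  by_cases hVW : V ⊆ W
  · have h := sum_powerset_superset_prod_mul_prod hVW (fun _ => (-1 : ℝ)) fun _ => 1
    simp only [prod_const, one_pow, mul_one, neg_add_cancel, zero_pow_eq, card_eq_zero,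
      sdiff_eq_empty_iff_subset] at h
    rw [h, mul_ite, mul_one, mul_zero]
    exact if_congr ⟨hVW.antisymm, fun h => h ▸ subset_rfl⟩ rfl rfl
  · rw [if_neg (by rintro rfl; exact hVW subset_rfl), filter_eq_empty_iff.2, sum_empty]
    exact fun S hS hVS => hVW (hVS.trans (mem_powerset.1 hS))

theorem prod_one_sub_le_sum_sum_mul_prod_union (hR : R ⊆ P.powerset) (hempty : ∅ ∈ R)
    {l : Finset α → ℝ} (hl : l ∅ = 1) {β : α → ℝ} (hβ : ∀ p ∈ P, 0 ≤ β p ∧ β p ≤ 1) :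
    ∏ p ∈ P, (1 - β p) ≤ ∑ S ∈ R, ∑ T ∈ R, l S * l T * ∏ p ∈ S ∪ T, β p := by
  let w (U : Finset α) : ℝ := (∏ p ∈ U, β p) * ∏ p ∈ P \ U, (1 - β p)
  have hw : ∀ U ∈ P.powerset, 0 ≤ w U := fun U hU => by
    refine mul_nonneg (prod_nonneg fun p hp => (hβ p (mem_powerset.1 hU hp)).1)
      (prod_nonneg fun p hp => ?_)
    linarith [(hβ p (mem_sdiff.1 hp).1).2]
  have hunion : ∀ S ∈ R, ∀ T ∈ R, l S * l T * ∏ p ∈ S ∪ T, β p =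
      ∑ U ∈ P.powerset, w U * ((if S ⊆ U then l S else 0) * (if T ⊆ U then l T else 0)) := by
    intro S hS T hT
    have h := sum_powerset_superset_prod_mul_prod
      (union_subset (mem_powerset.1 (hR hS)) (mem_powerset.1 (hR hT))) β fun p => 1 - β p
    simp only [add_sub_cancel, prod_const_one, mul_one] at h
    rw [← h, sum_filter, mul_sum]
    refine sum_congr rfl fun U _ => ?_
    by_cases hSU : S ⊆ U <;> by_cases hTU : T ⊆ U <;>
      simp only [w, union_subset_iff, hSU, hTU, and_self, and_true, and_false, if_true, if_false,
        mul_zero, zero_mul]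
    ring
  calc ∏ p ∈ P, (1 - β p) = w ∅ * (∑ S ∈ R, if S ⊆ ∅ then l S else 0) ^ 2 := by
        simp only [w, prod_empty, sdiff_empty, one_mul, subset_empty, sum_ite_eq', hempty, if_true,
          hl, one_pow, mul_one]
    _ ≤ ∑ U ∈ P.powerset, w U * (∑ S ∈ R, if S ⊆ U then l S else 0) ^ 2 :=
        single_le_sum (f := fun U => w U * (∑ S ∈ R, if S ⊆ U then l S else 0) ^ 2)
          (fun U hU => mul_nonneg (hw U hU) (sq_nonneg _)) (empty_mem_powerset P)
    _ = ∑ S ∈ R, ∑ T ∈ R, l S * l T * ∏ p ∈ S ∪ T, β p := by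
        rw [← sum_sum_sum_mul_mul_eq_sum_mul_sq]
        exact (sum_congr rfl fun S hS => sum_congr rfl (hunion S hS)).symm

theorem sum_sum_div_prod_mul_prod_union (hR : R ⊆ P.powerset)
    (hlower : IsLowerSet (R : Set (Finset α))) (hρ : ∀ p ∈ P, ρ p ≠ 0) (c : Finset α → ℝ) :
    ∑ S ∈ R, ∑ T ∈ R, c S / (∏ p ∈ S, ρ p) * (c T / ∏ p ∈ T, ρ p) * ∏ p ∈ S ∪ T, ρ p =
      ∑ V ∈ R, (selbergTerm ρ V)⁻¹ * (∑ S ∈ R with V ⊆ S, c S) ^ 2 := by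
  have hprod : ∀ S ∈ R, ∏ p ∈ S, ρ p ≠ 0 := fun S hS =>
    prod_ne_zero_iff.2 fun p hp => hρ p (mem_powerset.1 (hR hS) hp)
  have hterm : ∀ S ∈ R, ∀ T ∈ R,
      c S / (∏ p ∈ S, ρ p) * (c T / ∏ p ∈ T, ρ p) * ∏ p ∈ S ∪ T, ρ p =
        ∑ V ∈ R, (selbergTerm ρ V)⁻¹ *
          ((if V ⊆ S then c S else 0) * (if V ⊆ T then c T else 0)) := by
    intro S hS T hT
    have hinter : S ∩ T ∈ R := hlower inter_subset_left hS
    have hgcd : c S / (∏ p ∈ S, ρ p) * (c T / ∏ p ∈ T, ρ p) * ∏ p ∈ S ∪ T, ρ p =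
        c S * c T * (∏ p ∈ S ∩ T, ρ p)⁻¹ := by
      have hS0 := hprod S hS
      have hT0 := hprod T hT
      have hinter0 := hprod _ hinter
      field_simp
      linear_combination (c S * c T) * prod_union_inter (s₁ := S) (s₂ := T) (f := ρ)
    have hpowerset : (S ∩ T).powerset = {V ∈ R | V ⊆ S ∩ T} := by
      ext V
      rw [mem_powerset, mem_filter]
      exact ⟨fun hV => ⟨hlower hV hinter, hV⟩, And.right⟩
    rw [hgcd, inv_prod_eq_sum_powerset_inv_selbergTerm fun p hp =>
      hρ p (mem_powerset.1 (hR hinter) hp), hpowerset, sum_filter, mul_sum]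
    refine sum_congr rfl fun V _ => ?_
    by_cases hVS : V ⊆ S <;> by_cases hVT : V ⊆ T <;>
      simp only [subset_inter_iff, hVS, hVT, and_self, and_true, and_false, if_true, if_false,
        mul_zero, zero_mul]
    ring
  simp_rw [sum_filter]
  rw [← sum_sum_sum_mul_mul_eq_sum_mul_sq]
  exact sum_congr rfl fun S hS => sum_congr rfl (hterm S hS)

/-- The minimiser of Selberg's quadratic form in the normalisation `c_S = λ_S ∏_{p ∈ S} ρ_p`,
where `λ_S` are the sieve weights. -/
noncomputable def selbergCoeff (R : Finset (Finset α)) (ρ : α → ℝ) (S : Finset α) : ℝ :=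
  (-1) ^ #S * ((∑ V ∈ R with S ⊆ V, selbergTerm ρ V) / selbergSum R ρ)

theorem sum_selbergCoeff_superset (hlower : IsLowerSet (R : Set (Finset α))) {V : Finset α}
    (hV : V ∈ R) :
    ∑ S ∈ R with V ⊆ S, selbergCoeff R ρ S = (-1) ^ #V * (selbergTerm ρ V / selbergSum R ρ) := by
  have hbelow : ∀ W ∈ R, {S ∈ {S ∈ R | V ⊆ S} | S ⊆ W} = {S ∈ W.powerset | V ⊆ S} := by
    intro W hW
    ext S
    simp only [mem_filter, mem_powerset]
    exact ⟨fun h => ⟨h.2, h.1.2⟩, fun h => ⟨⟨hlower h.1 hW, h.2⟩, h.1⟩⟩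
  calc ∑ S ∈ R with V ⊆ S, selbergCoeff R ρ S
      = ∑ W ∈ R, selbergTerm ρ W / selbergSum R ρ *
          ∑ S ∈ {S ∈ R | V ⊆ S} with S ⊆ W, (-1 : ℝ) ^ #S := by
        simp only [selbergCoeff, sum_div, mul_sum]
        rw [sum_comm' (t' := R) (s' := fun W => {S ∈ {S ∈ R | V ⊆ S} | S ⊆ W}) fun S W => by
          simp only [mem_filter]; tauto]
        exact sum_congr rfl fun W _ => sum_congr rfl fun S _ => mul_comm _ _
    _ = ∑ W ∈ R, selbergTerm ρ W / selbergSum R ρ * if V = W then (-1) ^ #V else 0 :=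
        sum_congr rfl fun W hW => by rw [hbelow W hW, sum_powerset_superset_neg_one_pow_card]
    _ = (-1) ^ #V * (selbergTerm ρ V / selbergSum R ρ) := by
        simp only [mul_ite, mul_zero, sum_ite_eq, hV, if_true]
        rw [mul_comm]

theorem selbergCoeff_empty (hsum : selbergSum R ρ ≠ 0) : selbergCoeff R ρ ∅ = 1 := by
  simp only [selbergCoeff, card_empty, pow_zero, one_mul, empty_subset, filter_true]
  exact div_self hsum

theorem abs_selbergCoeff_le_one (hR : R ⊆ P.powerset) (hρ : ∀ p ∈ P, 0 < ρ p ∧ ρ p < 1)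
    (S : Finset α) : |selbergCoeff R ρ S| ≤ 1 := by
  have hterm : ∀ V ∈ R, 0 ≤ selbergTerm ρ V := fun V hV =>
    (selbergTerm_pos fun p hp => hρ p (mem_powerset.1 (hR hV) hp)).le
  have hsum : 0 ≤ selbergSum R ρ := sum_nonneg hterm
  rw [selbergCoeff, abs_mul, abs_pow, abs_neg, abs_one, one_pow, one_mul, abs_of_nonneg
    (div_nonneg (sum_nonneg fun V hV => hterm V (mem_filter.1 hV).1) hsum)]
  exact div_le_one_of_le₀
    (sum_le_sum_of_subset_of_nonneg (filter_subset _ _) fun V hV _ => hterm V hV) hsum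

theorem sum_sum_selbergCoeff_div_prod_mul_prod_union (hR : R ⊆ P.powerset) (hne : R.Nonempty)
    (hlower : IsLowerSet (R : Set (Finset α))) (hρ : ∀ p ∈ P, 0 < ρ p ∧ ρ p < 1) :
    ∑ S ∈ R, ∑ T ∈ R, selbergCoeff R ρ S / (∏ p ∈ S, ρ p) *
      (selbergCoeff R ρ T / ∏ p ∈ T, ρ p) * ∏ p ∈ S ∪ T, ρ p = (selbergSum R ρ)⁻¹ := by
  have hsum := (selbergSum_pos hR hne hρ).ne'
  have hterm : ∀ V ∈ R, (selbergTerm ρ V)⁻¹ * (∑ S ∈ R with V ⊆ S, selbergCoeff R ρ S) ^ 2 =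
      selbergTerm ρ V / selbergSum R ρ ^ 2 := by
    intro V hV
    have := (selbergTerm_pos fun p hp => hρ p (mem_powerset.1 (hR hV) hp)).ne'
    rw [sum_selbergCoeff_superset hlower hV, mul_pow, ← pow_mul, mul_comm #V, pow_mul,
      neg_one_sq, one_pow]
    field_simp
  rw [sum_sum_div_prod_mul_prod_union hR hlower (fun p hp => (hρ p hp).1.ne'),
    sum_congr rfl hterm, ← sum_div, ← selbergSum]
  field_simp

theorem selberg_sieve (M : Finset ι) {X A : ℝ} (hρ : ∀ p ∈ P, 0 < ρ p ∧ ρ p < 1)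
    (hR : R ⊆ P.powerset) (hempty : ∅ ∈ R) (hlower : IsLowerSet (R : Set (Finset α)))
    {β : ι → α → ℝ} (hβ : ∀ m ∈ M, ∀ p ∈ P, 0 ≤ β m p ∧ β m p ≤ 1)
    (hrem : ∀ S ∈ R, ∀ T ∈ R, (∏ p ∈ S, ρ p)⁻¹ * (∏ p ∈ T, ρ p)⁻¹ *
      |∑ m ∈ M, ∏ p ∈ S ∪ T, β m p - X * ∏ p ∈ S ∪ T, ρ p| ≤ A) :
    ∑ m ∈ M, ∏ p ∈ P, (1 - β m p) ≤ X / selbergSum R ρ + #R ^ 2 * A := by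
  have hsum := (selbergSum_pos hR ⟨_, hempty⟩ hρ).ne'
  let l (S : Finset α) : ℝ := selbergCoeff R ρ S / ∏ p ∈ S, ρ p
  have hl_empty : l ∅ = 1 := by
    simp only [l, selbergCoeff_empty hsum, prod_empty, div_one]
  have hl_abs : ∀ S ∈ R, |l S| ≤ (∏ p ∈ S, ρ p)⁻¹ := fun S hS => by
    have hpos : 0 < ∏ p ∈ S, ρ p := prod_pos fun p hp => (hρ p (mem_powerset.1 (hR hS) hp)).1
    rw [abs_div, abs_of_pos hpos, ← one_div]
    gcongr
    exact abs_selbergCoeff_le_one hR hρ S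
  calc ∑ m ∈ M, ∏ p ∈ P, (1 - β m p)
      ≤ ∑ m ∈ M, ∑ S ∈ R, ∑ T ∈ R, l S * l T * ∏ p ∈ S ∪ T, β m p :=
        sum_le_sum fun m hm =>
          prod_one_sub_le_sum_sum_mul_prod_union hR hempty hl_empty (hβ m hm)
    _ = ∑ S ∈ R, ∑ T ∈ R, (X * (l S * l T * ∏ p ∈ S ∪ T, ρ p) +
          l S * l T * (∑ m ∈ M, ∏ p ∈ S ∪ T, β m p - X * ∏ p ∈ S ∪ T, ρ p)) := by
        simp_rw [sum_comm (s := M), ← mul_sum]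
        exact sum_congr rfl fun S _ => sum_congr rfl fun T _ => by ring
    _ ≤ ∑ S ∈ R, ∑ T ∈ R, (X * (l S * l T * ∏ p ∈ S ∪ T, ρ p) + A) := by
        gcongr with S hS T hT
        refine (le_abs_self _).trans (le_trans ?_ (hrem S hS T hT))
        rw [abs_mul, abs_mul]
        have hS_abs := hl_abs S hS
        have hT_abs := hl_abs T hT
        have := (abs_nonneg _).trans hS_abs
        gcongr
    _ = X / selbergSum R ρ + #R ^ 2 * A := by
        simp only [sum_add_distrib, ← mul_sum, l,
          sum_sum_selbergCoeff_div_prod_mul_prod_union hR ⟨_, hempty⟩ hlower hρ, sum_const,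
          nsmul_eq_mul]
        ring

end SelbergSieve

section ResidueClasses

open Finset

theorem abs_card_filter_modEq_sub_le_one (N c : ℕ) {r : ℕ} (hr : 0 < r) :
    |(#{m ∈ Ioc 0 N | m ≡ c [MOD r]} : ℝ) - N / r| ≤ 1 := by
  have hcard := congrArg (Int.cast : ℤ → ℚ) (Nat.Ioc_filter_modEq_card 0 N hr c)
  rw [max_eq_left (sub_nonneg.2 (Int.floor_le_floor (by gcongr; simp))), Int.cast_sub,
    Int.cast_natCast] at hcard
  have hq : |(#{m ∈ Ioc 0 N | m ≡ c [MOD r]} : ℚ) - N / r| ≤ 1 := by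
    have hsplit : ((N : ℚ) - c) / r = N / r + ((0 : ℕ) - c) / r := by
      rw [Nat.cast_zero]
      ring
    rw [hcard, abs_le]
    constructor <;> linarith [Int.floor_le (((N : ℚ) - c) / r),
      Int.lt_floor_add_one (((N : ℚ) - c) / r), Int.floor_le ((((0 : ℕ) : ℚ) - c) / r),
      Int.lt_floor_add_one ((((0 : ℕ) : ℚ) - c) / r)]
  have hreal := (Rat.cast_le (K := ℝ)).2 hq
  push_cast at hreal
  exact hreal

theorem abs_card_filter_forall_modEq_sub_le_one (N : ℕ) (r : ℕ → ℕ) {S : Finset ℕ}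
    (hS : ∀ p ∈ S, p.Prime) :
    |(#{m ∈ Ioc 0 N | ∀ p ∈ S, m ≡ r p [MOD p]} : ℝ) - N / ∏ p ∈ S, (p : ℝ)| ≤ 1 := by
  have hcoprime : (S : Set ℕ).Pairwise (Function.onFun Nat.Coprime fun p => p) :=
    fun p hp q hq => (Nat.coprime_primes (hS p hp) (hS q hq)).2
  obtain ⟨c, hc⟩ := Nat.chineseRemainderOfFinset r (fun p => p) S
    (fun p hp => (hS p hp).ne_zero) hcoprime
  have hcrt : ∀ m, (∀ p ∈ S, m ≡ r p [MOD p]) ↔ m ≡ c [MOD ∏ p ∈ S, p] := fun m => by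
    refine ⟨fun h => ?_, fun h p hp => (h.of_dvd (dvd_prod_of_mem _ hp)).trans (hc p hp)⟩
    rw [Nat.modEq_iff_dvd, Int.natCast_dvd]
    refine prod_primes_dvd _ (fun p hp => (hS p hp).prime) fun p hp => ?_
    rw [← Int.natCast_dvd, ← Nat.modEq_iff_dvd]
    exact (h p hp).trans (hc p hp).symm
  simp only [hcrt]
  have h := abs_card_filter_modEq_sub_le_one N c (prod_pos fun p hp => (hS p hp).pos)
  rwa [Nat.cast_prod] at h

theorem exists_modEq_iff_dvd_mul_add_one {p D : ℕ} (hp : p.Prime) (hD : ¬ p ∣ D) :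
    ∃ r, ∀ m, m ≡ r [MOD p] ↔ p ∣ D * m + 1 := by
  have := Fact.mk hp
  have hD0 : (D : ZMod p) ≠ 0 := by rwa [Ne, ZMod.natCast_eq_zero_iff]
  refine ⟨(-(D : ZMod p)⁻¹).val, fun m => ?_⟩
  rw [← ZMod.natCast_eq_natCast_iff, ← ZMod.natCast_eq_zero_iff, ZMod.natCast_val, ZMod.cast_id]
  push_cast
  rw [← mul_right_inj' hD0, mul_neg, mul_inv_cancel₀ hD0, eq_neg_iff_add_eq_zero]

theorem abs_card_filter_dvd_sub_le_one (N : ℕ) {D : ℕ} {S U : Finset ℕ}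
    (hS : ∀ p ∈ S, p.Prime) (hU : ∀ p ∈ U, ¬ p ∣ D) :
    |(#{m ∈ Ioc 0 N | ∀ p ∈ S, if p ∈ U then p ∣ D * m + 1 else p ∣ m} : ℝ) -
      N / ∏ p ∈ S, (p : ℝ)| ≤ 1 := by
  have hresidue : ∀ p, ∃ r, p ∈ S → ∀ m,
      (if p ∈ U then p ∣ D * m + 1 else p ∣ m) ↔ m ≡ r [MOD p] := fun p => by
    by_cases hpS : p ∈ S
    · by_cases hpU : p ∈ U
      · obtain ⟨r, hr⟩ := exists_modEq_iff_dvd_mul_add_one (hS p hpS) (hU p hpU)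
        exact ⟨r, fun _ m => by rw [if_pos hpU, hr]⟩
      · exact ⟨0, fun _ m => by rw [if_neg hpU, Nat.modEq_zero_iff_dvd]⟩
    · exact ⟨0, fun h => absurd h hpS⟩
  choose r hr using hresidue
  have hfilter : {m ∈ Ioc 0 N | ∀ p ∈ S, if p ∈ U then p ∣ D * m + 1 else p ∣ m} =
      {m ∈ Ioc 0 N | ∀ p ∈ S, m ≡ r p [MOD p]} :=
    filter_congr fun m _ => forall₂_congr fun p hp => hr p hp m
  rw [hfilter]
  exact abs_card_filter_forall_modEq_sub_le_one N r hS

/-- The proportion of the integer `m` that is sifted out at the prime `p`: everything if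
`p ∣ D m + 1`, and the fraction `g p` if `p ∣ m`. -/
noncomputable def siftWeight (D : ℕ) (g : ℕ → ℝ) (m p : ℕ) : ℝ :=
  (if p ∣ D * m + 1 then 1 else 0) + if p ∣ m then g p else 0

/-- The mean of `siftWeight D g m p` over `m`. -/
noncomputable def siftDensity (D : ℕ) (g : ℕ → ℝ) (p : ℕ) : ℝ :=
  (if p ∣ D then 0 else 1) / p + g p / p

variable {D : ℕ} {g : ℕ → ℝ} {S : Finset ℕ}

theorem prod_ite_mul_prod_sdiff_ite {U : Finset ℕ} (hU : U ⊆ S) (m : ℕ) :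
    (∏ p ∈ U, if p ∣ D * m + 1 then (1 : ℝ) else 0) * ∏ p ∈ S \ U, (if p ∣ m then g p else 0) =
      (∏ p ∈ S \ U, g p) *
        if ∀ p ∈ S, if p ∈ U then p ∣ D * m + 1 else p ∣ m then 1 else 0 := by
  split_ifs with h
  · rw [prod_eq_one fun p hp => if_pos (by simpa only [if_pos hp] using h p (hU hp)), one_mul,
      mul_one]
    refine prod_congr rfl fun p hp => if_pos ?_
    simpa only [if_neg (mem_sdiff.1 hp).2] using h p (mem_sdiff.1 hp).1
  · push Not at h
    obtain ⟨p, hpS, hp⟩ := h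
    by_cases hpU : p ∈ U
    · rw [if_pos hpU] at hp
      rw [prod_eq_zero hpU (if_neg hp), zero_mul, mul_zero]
    · rw [if_neg hpU] at hp
      rw [prod_eq_zero (mem_sdiff.2 ⟨hpS, hpU⟩) (if_neg hp), mul_zero, mul_zero]

theorem abs_sum_prod_ite_mul_prod_sdiff_ite_sub_le_one (N : ℕ) (hS : ∀ p ∈ S, p.Prime)
    (hg : ∀ p, 0 ≤ g p ∧ g p ≤ 1) {U : Finset ℕ} (hU : U ⊆ S) :
    |∑ m ∈ Ioc 0 N, (∏ p ∈ U, if p ∣ D * m + 1 then (1 : ℝ) else 0) *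
        ∏ p ∈ S \ U, (if p ∣ m then g p else 0) -
      N * ((∏ p ∈ U, (if p ∣ D then (0 : ℝ) else 1) / p) * ∏ p ∈ S \ U, g p / p)| ≤ 1 := by
  by_cases hUD : ∀ p ∈ U, ¬ p ∣ D
  · have hdensity : (∏ p ∈ U, (if p ∣ D then (0 : ℝ) else 1) / p) * ∏ p ∈ S \ U, g p / p =
        (∏ p ∈ S \ U, g p) / ∏ p ∈ S, (p : ℝ) := by
      rw [prod_congr rfl fun p hp => by rw [if_neg (hUD p hp)], prod_div_distrib,
        prod_div_distrib, prod_const_one, ← prod_sdiff hU, one_div_mul_eq_div, div_div]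
    have hprod_nonneg : 0 ≤ ∏ p ∈ S \ U, g p := prod_nonneg fun p _ => (hg p).1
    simp only [prod_ite_mul_prod_sdiff_ite hU, ← mul_sum, sum_boole]
    rw [hdensity, mul_div_left_comm, ← mul_sub, abs_mul, abs_of_nonneg hprod_nonneg]
    exact mul_le_one₀ (prod_le_one (fun p _ => (hg p).1) fun p _ => (hg p).2) (abs_nonneg _)
      (abs_card_filter_dvd_sub_le_one N hS hUD)
  · push Not at hUD
    obtain ⟨p, hp, hpD⟩ := hUD
    have hzero : ∀ m ∈ Ioc 0 N, (∏ p ∈ U, if p ∣ D * m + 1 then (1 : ℝ) else 0) *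
        ∏ p ∈ S \ U, (if p ∣ m then g p else 0) = 0 := fun m _ => by
      refine mul_eq_zero_of_left (prod_eq_zero hp (if_neg fun h => ?_)) _
      exact (hS p (hU hp)).not_dvd_one ((Nat.dvd_add_right (hpD.mul_right m)).1 h)
    rw [sum_eq_zero hzero, prod_eq_zero hp (by rw [if_pos hpD, zero_div]), zero_mul, mul_zero,
      sub_zero, abs_zero]
    exact zero_le_one

theorem abs_sum_prod_siftWeight_sub_le (N : ℕ) (hS : ∀ p ∈ S, p.Prime)
    (hg : ∀ p, 0 ≤ g p ∧ g p ≤ 1) :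
    |∑ m ∈ Ioc 0 N, ∏ p ∈ S, siftWeight D g m p - N * ∏ p ∈ S, siftDensity D g p| ≤ 2 ^ #S := by
  simp_rw [siftWeight, siftDensity, prod_add]
  rw [sum_comm, mul_sum, ← sum_sub_distrib]
  calc _ ≤ ∑ _U ∈ S.powerset, (1 : ℝ) := (abs_sum_le_sum_abs _ _).trans <| sum_le_sum fun _ hU =>
        abs_sum_prod_ite_mul_prod_sdiff_ite_sub_le_one N hS hg (mem_powerset.1 hU)
    _ = 2 ^ #S := by rw [sum_const, card_powerset, nsmul_one, Nat.cast_pow, Nat.cast_ofNat]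

end ResidueClasses

section RankinTrick

open Finset Real

/-- The subsets of `P` with product at most `y`; for a set `P` of primes they stand for the
squarefree integers up to `y` composed of primes in `P`. -/
noncomputable def smallProducts (P : Finset ℕ) (y : ℝ) : Finset (Finset ℕ) :=
  {V ∈ P.powerset | ∏ p ∈ V, (p : ℝ) ≤ y}

variable {P : Finset ℕ} {y z : ℝ}

theorem mem_smallProducts {V : Finset ℕ} :
    V ∈ smallProducts P y ↔ V ⊆ P ∧ ∏ p ∈ V, (p : ℝ) ≤ y := by
  rw [smallProducts, mem_filter, mem_powerset]

theorem smallProducts_subset_powerset : smallProducts P y ⊆ P.powerset := filter_subset _ _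

theorem empty_mem_smallProducts (hy : 1 ≤ y) : ∅ ∈ smallProducts P y :=
  mem_smallProducts.2 ⟨empty_subset P, by rwa [prod_empty]⟩

theorem isLowerSet_smallProducts (hP : ∀ p ∈ P, p.Prime) :
    IsLowerSet (smallProducts P y : Set (Finset ℕ)) := by
  intro S T hTS hS
  rw [mem_coe, mem_smallProducts] at hS ⊢
  refine ⟨hTS.trans hS.1, le_trans (prod_le_prod_of_subset_of_one_le hTS ?_ ?_) hS.2⟩
  · exact fun p _ => Nat.cast_nonneg p
  · exact fun p hp _ => mod_cast (hP p (hS.1 hp)).one_le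

theorem card_smallProducts_le (hP : ∀ p ∈ P, p.Prime) (hy : 0 ≤ y) :
    (#(smallProducts P y) : ℝ) ≤ y := by
  have hcard : #(smallProducts P y) ≤ #(Ioc 0 ⌊y⌋₊) := by
    refine card_le_card_of_injOn (fun V => ∏ p ∈ V, p) (fun V hV => ?_) fun V hV W hW h => ?_
    · obtain ⟨hVP, hVy⟩ := mem_smallProducts.1 hV
      rw [coe_Ioc, Set.mem_Ioc]
      exact ⟨prod_pos fun p hp => (hP p (hVP hp)).pos, Nat.le_floor (by rwa [Nat.cast_prod])⟩
    · rw [← Nat.primeFactors_prod fun p hp => hP p ((mem_smallProducts.1 hV).1 hp),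
        ← Nat.primeFactors_prod fun p hp => hP p ((mem_smallProducts.1 hW).1 hp)]
      exact congrArg _ h
  rw [Nat.card_Ioc, Nat.sub_zero] at hcard
  exact (Nat.cast_le.2 hcard).trans (Nat.floor_le hy)

theorem sum_prod_sub_sum_smallProducts_le {h : ℕ → ℝ} (hh : ∀ p ∈ P, 0 ≤ h p) (hy : 0 < y) {σ : ℝ}
    (hσ : 0 ≤ σ) :
    ∏ p ∈ P, (1 + h p) - ∑ V ∈ smallProducts P y, ∏ p ∈ V, h p ≤
      y ^ (-σ) * ∏ p ∈ P, (1 + h p * (p : ℝ) ^ σ) := by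
  have hnonneg : ∀ V ∈ P.powerset, 0 ≤ ∏ p ∈ V, h p := fun V hV =>
    prod_nonneg fun p hp => hh p (mem_powerset.1 hV hp)
  rw [prod_one_add, smallProducts, ← sum_filter_add_sum_filter_not P.powerset
    (fun V : Finset ℕ => ∏ p ∈ V, (p : ℝ) ≤ y), add_sub_cancel_left, prod_one_add, mul_sum]
  have hterm_nonneg : ∀ V ∈ P.powerset, 0 ≤ y ^ (-σ) * ∏ p ∈ V, h p * (p : ℝ) ^ σ :=
    fun V hV => by
      rw [prod_mul_distrib]
      have := hnonneg V hV
      positivity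
  refine (sum_le_sum fun V hV => ?_).trans
    (sum_le_sum_of_subset_of_nonneg (filter_subset _ _) fun V hV _ => hterm_nonneg V hV)
  obtain ⟨hVP, hVy⟩ := mem_filter.1 hV
  have hlarge : 1 ≤ y ^ (-σ) * (∏ p ∈ V, (p : ℝ)) ^ σ := by
    rw [rpow_neg hy.le, inv_mul_eq_div, ← div_rpow (by positivity) hy.le]
    exact one_le_rpow ((one_le_div hy).2 (not_le.1 hVy).le) hσ
  calc ∏ p ∈ V, h p ≤ (∏ p ∈ V, h p) * (y ^ (-σ) * (∏ p ∈ V, (p : ℝ)) ^ σ) :=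
        le_mul_of_one_le_right (hnonneg V hVP) hlarge
    _ = y ^ (-σ) * ∏ p ∈ V, h p * (p : ℝ) ^ σ := by
        rw [prod_mul_distrib, finsetProd_rpow _ _ fun p _ => Nat.cast_nonneg p]
        ring

theorem exp_sub_one_le_two_mul {u : ℝ} (h0 : 0 ≤ u) (h1 : u ≤ 1) : exp u - 1 ≤ 2 * u := by
  have h := (abs_le.1 (abs_exp_sub_one_sub_id_le (by rwa [abs_of_nonneg h0]))).2
  nlinarith

theorem rpow_inv_log_sub_one_le {p : ℝ} (hp : 1 ≤ p) (hpz : p ≤ z) :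
    p ^ (log z)⁻¹ - 1 ≤ 2 * (log p / log z) := by
  have hlog : log p ≤ log z := log_le_log (by linarith) hpz
  rw [rpow_def_of_pos (by linarith), ← div_eq_mul_inv]
  exact exp_sub_one_le_two_mul (div_nonneg (log_nonneg hp) (log_nonneg (hp.trans hpz)))
    (div_le_one_of_le₀ hlog (log_nonneg (hp.trans hpz)))

theorem sum_mul_two_mul_log_div_log_le (hz : 2 ≤ z) (hP : P ⊆ primesUpTo z) {h : ℕ → ℝ}
    (hh : ∀ p ∈ P, h p ≤ 6 / p) : ∑ p ∈ P, h p * (2 * (log p / log z)) ≤ 48 := by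
  have hlogz : 2 / 3 ≤ log z := two_thirds_le_log hz
  have hlogz0 : 0 < log z := by linarith
  calc ∑ p ∈ P, h p * (2 * (log p / log z)) ≤ ∑ p ∈ P, 12 / log z * (log p / p) :=
        sum_le_sum fun p hp => by
          have := log_natCast_nonneg p
          calc h p * (2 * (log p / log z)) ≤ 6 / p * (2 * (log p / log z)) := by
                gcongr
                exact hh p hp
            _ = 12 / log z * (log p / p) := by ring
    _ ≤ 12 / log z * ∑ p ∈ primesUpTo z, log p / p := by
        rw [← mul_sum]
        gcongr
    _ ≤ 12 / log z * (log z + 2) := by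
        gcongr
        exact sum_log_div_primesUpTo_le (by linarith)
    _ ≤ 48 := by
        rw [div_mul_eq_mul_div, div_le_iff₀ hlogz0]
        linarith

theorem prod_one_add_mul_rpow_le (hz : 2 ≤ z) (hP : P ⊆ primesUpTo z) {h : ℕ → ℝ}
    (hh : ∀ p ∈ P, 0 ≤ h p ∧ h p ≤ 6 / p) :
    ∏ p ∈ P, (1 + h p * (p : ℝ) ^ (log z)⁻¹) ≤ exp 48 * ∏ p ∈ P, (1 + h p) := by
  have hprod : 0 ≤ ∏ p ∈ P, (1 + h p) := prod_nonneg fun p hp => by linarith [(hh p hp).1]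
  calc ∏ p ∈ P, (1 + h p * (p : ℝ) ^ (log z)⁻¹)
      ≤ ∏ p ∈ P, exp (h p * (2 * (log p / log z))) * (1 + h p) := by
        refine prod_le_prod (fun p hp => ?_) fun p hp => ?_
        · have := (hh p hp).1
          positivity
        · obtain ⟨hprime, hpz⟩ := mem_primesUpTo.1 (hP hp)
          have hp1 : (1 : ℝ) ≤ p := mod_cast hprime.one_le
          have h0 := (hh p hp).1
          have hlog := mul_le_mul_of_nonneg_left (rpow_inv_log_sub_one_le hp1 hpz) h0
          have hnonneg : 0 ≤ h p * (2 * (log p / log z)) := by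
            have := log_nonneg hp1
            have := log_nonneg (hp1.trans hpz)
            positivity
          nlinarith [add_one_le_exp (h p * (2 * (log p / log z)))]
    _ = exp (∑ p ∈ P, h p * (2 * (log p / log z))) * ∏ p ∈ P, (1 + h p) := by
        rw [prod_mul_distrib, exp_sum]
    _ ≤ exp 48 * ∏ p ∈ P, (1 + h p) := by
        gcongr
        exact sum_mul_two_mul_log_div_log_le hz hP fun p hp => (hh p hp).2

theorem half_prod_one_add_le_sum_smallProducts (hz : 2 ≤ z) (hP : P ⊆ primesUpTo z) {h : ℕ → ℝ}
    (hh : ∀ p ∈ P, 0 ≤ h p ∧ h p ≤ 6 / p) :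
    1 / 2 * ∏ p ∈ P, (1 + h p) ≤ ∑ V ∈ smallProducts P (z ^ 50), ∏ p ∈ V, h p := by
  have hlogz : 0 < log z := log_pos (by linarith)
  have hprod : 0 ≤ ∏ p ∈ P, (1 + h p) := prod_nonneg fun p hp => by linarith [(hh p hp).1]
  have hrankin := sum_prod_sub_sum_smallProducts_le (fun p hp => (hh p hp).1)
    (show 0 < z ^ 50 by positivity) (inv_nonneg.2 hlogz.le)
  have hexponent : (z ^ 50) ^ (-(log z)⁻¹) = exp (-50) := by
    rw [rpow_def_of_pos (by positivity), log_pow]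
    congr 1
    field_simp
    norm_num
  have hexp : exp (-50) * exp 48 ≤ 1 / 2 := by
    rw [← exp_add, show (-50 + 48 : ℝ) = -2 by norm_num, exp_neg,
      inv_le_comm₀ (exp_pos _) (by norm_num)]
    linarith [add_one_le_exp (2 : ℝ)]
  have htail : exp (-50) * ∏ p ∈ P, (1 + h p * (p : ℝ) ^ (log z)⁻¹) ≤
      1 / 2 * ∏ p ∈ P, (1 + h p) := by
    calc _ ≤ exp (-50) * (exp 48 * ∏ p ∈ P, (1 + h p)) := by
          gcongr
          exact prod_one_add_mul_rpow_le hz hP hh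
      _ ≤ 1 / 2 * ∏ p ∈ P, (1 + h p) := by
          rw [← mul_assoc]
          gcongr
  rw [hexponent] at hrankin
  linarith

end RankinTrick

section SieveBound

open Finset Real

/-- The weights for which the sieve bound is proved: `g p` is either zero or bounded below, and the
prime `2` carries no weight, so that the sifted density at `2` stays away from `1`. -/
def IsSieveWeight (g : ℕ → ℝ) : Prop := g 2 = 0 ∧ ∀ p, g p = 0 ∨ 1 / 4 ≤ g p ∧ g p ≤ 1

/-- The primes up to `z` that sift out a positive proportion of the integers. -/
noncomputable def siftPrimes (D : ℕ) (g : ℕ → ℝ) (z : ℝ) : Finset ℕ :=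
  {p ∈ primesUpTo z | siftDensity D g p ≠ 0}

variable {D N p : ℕ} {g : ℕ → ℝ} {y z : ℝ} {S T : Finset ℕ}

theorem IsSieveWeight.nonneg_and_le_one (hg : IsSieveWeight g) (p : ℕ) : 0 ≤ g p ∧ g p ≤ 1 := by
  rcases hg.2 p with h | h <;> constructor <;> linarith

theorem siftPrimes_subset : siftPrimes D g z ⊆ primesUpTo z := filter_subset _ _

theorem prime_of_mem_siftPrimes (hp : p ∈ siftPrimes D g z) : p.Prime :=
  (mem_primesUpTo.1 (siftPrimes_subset hp)).1

theorem siftDensity_eq_div (D : ℕ) (g : ℕ → ℝ) (p : ℕ) :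
    siftDensity D g p = ((if p ∣ D then 0 else 1) + g p) / p := by
  rw [siftDensity, add_div]

theorem siftDensity_bounds (hg : IsSieveWeight g) (hp : p ∈ siftPrimes D g z) :
    1 / (4 * (p : ℝ)) ≤ siftDensity D g p ∧ siftDensity D g p ≤ 2 / 3 ∧
      siftDensity D g p ≤ 2 / p := by
  have hprime := prime_of_mem_siftPrimes hp
  have hp0 : (0 : ℝ) < p := mod_cast hprime.pos
  obtain ⟨hg0, hg1⟩ := hg.nonneg_and_le_one p
  have hne : siftDensity D g p ≠ 0 := (mem_filter.1 hp).2
  rw [siftDensity_eq_div] at hne ⊢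
  have hlower : (1 : ℝ) / 4 ≤ (if p ∣ D then 0 else 1) + g p := by
    split_ifs with hpD
    · rcases hg.2 p with h | h
      · simp [hpD, h] at hne
      · linarith
    · linarith
  have hupper : (if p ∣ D then (0 : ℝ) else 1) + g p ≤ 2 := by split_ifs <;> linarith
  refine ⟨?_, ?_, by gcongr⟩
  · rw [← div_div]
    gcongr
  · rw [div_le_iff₀ hp0]
    rcases hprime.two_le.eq_or_lt with rfl | h3
    · rw [hg.1]
      split_ifs <;> norm_num
    · have : (3 : ℝ) ≤ p := mod_cast h3
      linarith

theorem siftDensity_pos (hg : IsSieveWeight g) (hp : p ∈ siftPrimes D g z) :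
    0 < siftDensity D g p := by
  have : (0 : ℝ) < p := mod_cast (prime_of_mem_siftPrimes hp).pos
  exact lt_of_lt_of_le (by positivity) (siftDensity_bounds hg hp).1

theorem siftWeight_nonneg_and_le_one (hg : 0 ≤ g p ∧ g p ≤ 1) (hp : p.Prime) (m : ℕ) :
    0 ≤ siftWeight D g m p ∧ siftWeight D g m p ≤ 1 := by
  rw [siftWeight]
  by_cases hpm : p ∣ m
  · have hndvd : ¬ p ∣ D * m + 1 := fun h =>
      hp.not_dvd_one ((Nat.dvd_add_right (hpm.mul_left D)).1 h)
    rwa [if_neg hndvd, if_pos hpm, zero_add]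
  · rw [if_neg hpm, add_zero]
    split_ifs <;> norm_num

theorem two_pow_card_le_of_mem_smallProducts {P : Finset ℕ} (hP : ∀ p ∈ P, p.Prime)
    (hS : S ∈ smallProducts P y) : (2 : ℝ) ^ #S ≤ y := by
  obtain ⟨hSP, hSy⟩ := mem_smallProducts.1 hS
  rw [← prod_const]
  exact (prod_le_prod (fun _ _ => zero_le_two) fun p hp => mod_cast (hP p (hSP hp)).two_le).trans
    hSy

theorem inv_prod_siftDensity_le (hg : IsSieveWeight g)
    (hS : S ∈ smallProducts (siftPrimes D g z) y) : (∏ p ∈ S, siftDensity D g p)⁻¹ ≤ y ^ 3 := by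
  obtain ⟨hSP, hSy⟩ := mem_smallProducts.1 hS
  have : 0 ≤ ∏ p ∈ S, (p : ℝ) := prod_nonneg fun p _ => Nat.cast_nonneg p
  calc (∏ p ∈ S, siftDensity D g p)⁻¹ = ∏ p ∈ S, (siftDensity D g p)⁻¹ :=
        (prod_inv_distrib ..).symm
    _ ≤ ∏ p ∈ S, (p : ℝ) ^ 3 := by
        refine prod_le_prod (fun p hp => (inv_pos.2 (siftDensity_pos hg (hSP hp))).le)
          fun p hp => ?_
        have hp2 : (2 : ℝ) ≤ p := mod_cast (prime_of_mem_siftPrimes (hSP hp)).two_le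
        calc (siftDensity D g p)⁻¹ ≤ (1 / (4 * (p : ℝ)))⁻¹ :=
              inv_anti₀ (by positivity) (siftDensity_bounds hg (hSP hp)).1
          _ = 4 * p := by rw [one_div, inv_inv]
          _ ≤ p ^ 3 := by nlinarith [pow_le_pow_left₀ zero_le_two hp2 2]
    _ = (∏ p ∈ S, (p : ℝ)) ^ 3 := prod_pow ..
    _ ≤ y ^ 3 := by gcongr

theorem inv_prod_mul_inv_prod_mul_abs_sum_sub_le (hg : IsSieveWeight g) (N : ℕ)
    (hS : S ∈ smallProducts (siftPrimes D g z) y) (hT : T ∈ smallProducts (siftPrimes D g z) y) :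
    (∏ p ∈ S, siftDensity D g p)⁻¹ * (∏ p ∈ T, siftDensity D g p)⁻¹ *
      |∑ m ∈ Ioc 0 N, ∏ p ∈ S ∪ T, siftWeight D g m p - N * ∏ p ∈ S ∪ T, siftDensity D g p| ≤
        y ^ 8 := by
  have hSP := (mem_smallProducts.1 hS).1
  have hTP := (mem_smallProducts.1 hT).1
  have hnonneg : ∀ V ⊆ siftPrimes D g z, 0 ≤ (∏ p ∈ V, siftDensity D g p)⁻¹ := fun V hV =>
    inv_nonneg.2 (prod_nonneg fun p hp => (siftDensity_pos hg (hV hp)).le)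
  have := hnonneg S hSP
  have := hnonneg T hTP
  have hSy := two_pow_card_le_of_mem_smallProducts (fun p => prime_of_mem_siftPrimes) hS
  have hTy := two_pow_card_le_of_mem_smallProducts (fun p => prime_of_mem_siftPrimes) hT
  have hy : 0 ≤ y := le_trans (by positivity) hSy
  have herror : |∑ m ∈ Ioc 0 N, ∏ p ∈ S ∪ T, siftWeight D g m p -
      N * ∏ p ∈ S ∪ T, siftDensity D g p| ≤ y * y :=
    calc _ ≤ (2 : ℝ) ^ #(S ∪ T) := abs_sum_prod_siftWeight_sub_le N
          (fun p hp => prime_of_mem_siftPrimes (union_subset hSP hTP hp)) hg.nonneg_and_le_one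
      _ ≤ 2 ^ (#S + #T) := pow_le_pow_right₀ one_le_two (card_union_le S T)
      _ ≤ y * y := by
          rw [pow_add]
          gcongr
  calc _ ≤ y ^ 3 * y ^ 3 * (y * y) := by
        gcongr
        exacts [inv_prod_siftDensity_le hg hS, inv_prod_siftDensity_le hg hT]
    _ = y ^ 8 := by ring

theorem half_inv_prod_one_sub_le_selbergSum (hg : IsSieveWeight g) (hz : 2 ≤ z) :
    1 / 2 * (∏ p ∈ siftPrimes D g z, (1 - siftDensity D g p))⁻¹ ≤
      selbergSum (smallProducts (siftPrimes D g z) (z ^ 50)) (siftDensity D g) := by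
  rw [← prod_inv_distrib]
  calc 1 / 2 * ∏ p ∈ siftPrimes D g z, (1 - siftDensity D g p)⁻¹
      = 1 / 2 * ∏ p ∈ siftPrimes D g z, (1 + siftDensity D g p / (1 - siftDensity D g p)) := by
        congr 1
        refine prod_congr rfl fun p hp => ?_
        have : 1 - siftDensity D g p ≠ 0 := by linarith [(siftDensity_bounds hg hp).2.1]
        field_simp
        ring
    _ ≤ _ := half_prod_one_add_le_sum_smallProducts hz siftPrimes_subset fun p hp => by
        obtain ⟨-, hthird, hp2⟩ := siftDensity_bounds hg hp
        have h0 := siftDensity_pos hg hp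
        have h1 : 1 / 3 ≤ 1 - siftDensity D g p := by linarith
        refine ⟨div_nonneg h0.le (by linarith), ?_⟩
        calc siftDensity D g p / (1 - siftDensity D g p) ≤ 2 / p / (1 / 3) := by gcongr
          _ = 6 / p := by ring

theorem sum_prod_one_sub_siftWeight_le (hg : IsSieveWeight g) (N : ℕ) (hz : 2 ≤ z) :
    ∑ m ∈ Ioc 0 N, ∏ p ∈ siftPrimes D g z, (1 - siftWeight D g m p) ≤
      2 * N * ∏ p ∈ siftPrimes D g z, (1 - siftDensity D g p) + z ^ 500 := by
  set P := siftPrimes D g z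
  set R := smallProducts P (z ^ 50)
  have hP : ∀ p ∈ P, p.Prime := fun p => prime_of_mem_siftPrimes
  have hprod : 0 < ∏ p ∈ P, (1 - siftDensity D g p) :=
    prod_pos fun p hp => by linarith [(siftDensity_bounds hg hp).2.1]
  have hsieve := selberg_sieve (Ioc 0 N) (X := N) (R := R)
    (fun p hp => ⟨siftDensity_pos hg hp, by linarith [(siftDensity_bounds hg hp).2.1]⟩)
    smallProducts_subset_powerset (empty_mem_smallProducts (one_le_pow₀ (show 1 ≤ z by linarith)))
    (isLowerSet_smallProducts hP)
    (fun m _ p hp => siftWeight_nonneg_and_le_one (hg.nonneg_and_le_one p) (hP p hp) m)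
    (fun S hS T hT => inv_prod_mul_inv_prod_mul_abs_sum_sub_le hg N hS hT)
  have hmain : N / selbergSum R (siftDensity D g) ≤ 2 * N * ∏ p ∈ P, (1 - siftDensity D g p) :=
    calc N / selbergSum R (siftDensity D g)
        ≤ N / (1 / 2 * (∏ p ∈ P, (1 - siftDensity D g p))⁻¹) := by
          gcongr
          exact half_inv_prod_one_sub_le_selbergSum hg hz
      _ = 2 * N * ∏ p ∈ P, (1 - siftDensity D g p) := by field_simp
  have herror : (#R : ℝ) ^ 2 * (z ^ 50) ^ 8 ≤ z ^ 500 :=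
    calc (#R : ℝ) ^ 2 * (z ^ 50) ^ 8 ≤ (z ^ 50) ^ 2 * (z ^ 50) ^ 8 := by
          gcongr
          exact card_smallProducts_le hP (by positivity)
      _ = z ^ 500 := by ring
  linarith

theorem exp_sum_inv_le_div_totient (hD : D ≠ 0) {A : Finset ℕ} (hA : ∀ p ∈ A, p.Prime) :
    exp (∑ p ∈ A with p ∣ D, (1 : ℝ) / p) ≤ D / D.totient := by
  have htotient : (D.totient : ℝ) = D * ∏ p ∈ D.primeFactors, (1 - (p : ℝ)⁻¹) := by
    have h := congrArg (Rat.cast : ℚ → ℝ) (Nat.totient_eq_mul_prod_factors D)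
    push_cast at h
    exact h
  have hsub : {p ∈ A | p ∣ D} ⊆ D.primeFactors := fun p hp =>
    Nat.mem_primeFactors.2 ⟨hA p (mem_filter.1 hp).1, (mem_filter.1 hp).2, hD⟩
  rw [le_div_iff₀ (mod_cast Nat.totient_pos.2 (Nat.pos_of_ne_zero hD))]
  calc exp (∑ p ∈ A with p ∣ D, (1 : ℝ) / p) * D.totient
      ≤ exp (∑ p ∈ D.primeFactors, (1 : ℝ) / p) * D.totient := by gcongr
    _ = D * ∏ p ∈ D.primeFactors, exp (1 / p) * (1 - (p : ℝ)⁻¹) := by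
        rw [htotient, exp_sum, prod_mul_distrib]
        ring
    _ ≤ D * 1 := by
        refine mul_le_mul_of_nonneg_left (prod_le_one (fun p hp => ?_) fun p _ => ?_)
          (Nat.cast_nonneg D)
        · have hp1 : (1 : ℝ) ≤ p := mod_cast (Nat.prime_of_mem_primeFactors hp).one_le
          exact mul_nonneg (exp_pos _).le (sub_nonneg.2 (inv_le_one_of_one_le₀ hp1))
        · rw [← le_div_iff₀' (exp_pos _), one_div (exp _), ← exp_neg, one_div]
          exact one_sub_le_exp_neg _
    _ = D := mul_one _

theorem sum_siftDensity_siftPrimes (D : ℕ) (g : ℕ → ℝ) (z : ℝ) :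
    ∑ p ∈ siftPrimes D g z, siftDensity D g p =
      ∑ p ∈ primesUpTo z, (1 : ℝ) / p - ∑ p ∈ primesUpTo z with p ∣ D, (1 : ℝ) / p +
        ∑ p ∈ primesUpTo z, g p / p := by
  rw [siftPrimes, sum_filter_ne_zero, sum_filter, ← sum_sub_distrib, ← sum_add_distrib]
  refine sum_congr rfl fun p _ => ?_
  rw [siftDensity]
  split_ifs <;> ring

theorem prod_one_sub_siftDensity_le (hg : IsSieveWeight g) (hD : D ≠ 0) (hz : 2 ≤ z) :
    ∏ p ∈ siftPrimes D g z, (1 - siftDensity D g p) ≤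
      exp 10 / log z * (D / D.totient) * exp (-∑ p ∈ primesUpTo z, g p / p) := by
  have hlogz : 0 < log z := log_pos (by linarith)
  have hmertens := (abs_le.1 (abs_sum_inv_primesUpTo_sub_log_log_le hz)).1
  calc ∏ p ∈ siftPrimes D g z, (1 - siftDensity D g p)
      ≤ exp (-∑ p ∈ siftPrimes D g z, siftDensity D g p) := by
        rw [← sum_neg_distrib, exp_sum]
        exact prod_le_prod (fun p hp => by linarith [(siftDensity_bounds hg hp).2.1])
          fun p _ => one_sub_le_exp_neg _
    _ ≤ exp (10 - log (log z) + ∑ p ∈ primesUpTo z with p ∣ D, (1 : ℝ) / p +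
          -∑ p ∈ primesUpTo z, g p / p) := by
        rw [sum_siftDensity_siftPrimes]
        gcongr
        linarith
    _ = exp 10 / log z * exp (∑ p ∈ primesUpTo z with p ∣ D, (1 : ℝ) / p) *
          exp (-∑ p ∈ primesUpTo z, g p / p) := by
        rw [exp_add, exp_add, exp_sub, exp_log hlogz]
    _ ≤ _ := by
        gcongr
        exact exp_sum_inv_le_div_totient hD fun p hp => (mem_primesUpTo.1 hp).1

theorem prod_one_sub_eq_prod_one_sub_siftWeight (hg : IsSieveWeight g) (hD : D ≠ 0) {m : ℕ}
    (hm : (D * m + 1).Prime) (hzm : z < m) :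
    ∏ p ∈ primesUpTo z with p ∣ m, (1 - g p) =
      ∏ p ∈ siftPrimes D g z, (1 - siftWeight D g m p) := by
  have hndvd : ∀ p ∈ primesUpTo z, ¬ p ∣ D * m + 1 := fun p hp hdvd => by
    obtain ⟨hprime, hpz⟩ := mem_primesUpTo.1 hp
    have hpm : p < m := by exact_mod_cast hpz.trans_lt hzm
    have hle : m ≤ D * m := Nat.le_mul_of_pos_left m (Nat.pos_of_ne_zero hD)
    have := (Nat.prime_dvd_prime_iff_eq hprime hm).1 hdvd
    lia
  rw [siftPrimes, prod_filter, prod_filter]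
  refine prod_congr rfl fun p hp => ?_
  have hp0 : (p : ℝ) ≠ 0 := mod_cast (mem_primesUpTo.1 hp).1.ne_zero
  rw [siftWeight, if_neg (hndvd p hp), zero_add]
  by_cases hzero : siftDensity D g p = 0
  · have hgp : g p = 0 := by
      have hg0 := (hg.nonneg_and_le_one p).1
      rw [siftDensity_eq_div, div_eq_zero_iff, or_iff_left hp0] at hzero
      split_ifs at hzero <;> linarith
    simp [hzero, hgp]
  · rw [if_pos hzero]
    split_ifs <;> ring

theorem sum_prod_one_sub_le_add_sum_prod_one_sub_siftWeight (hg : IsSieveWeight g) (hD : D ≠ 0)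
    (N : ℕ) (hz : 0 ≤ z) :
    ∑ m ∈ Ioc 0 N with (D * m + 1).Prime, ∏ p ∈ primesUpTo z with p ∣ m, (1 - g p) ≤
      z + ∑ m ∈ Ioc 0 N, ∏ p ∈ siftPrimes D g z, (1 - siftWeight D g m p) := by
  have hnonneg : ∀ m, 0 ≤ ∏ p ∈ siftPrimes D g z, (1 - siftWeight D g m p) := fun m =>
    prod_nonneg fun p hp => sub_nonneg.2 (siftWeight_nonneg_and_le_one (hg.nonneg_and_le_one p)
      (prime_of_mem_siftPrimes hp) m).2
  have hcard : ∑ m ∈ Ioc 0 N, (if (m : ℝ) ≤ z then (1 : ℝ) else 0) ≤ z := by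
    have hsub : (Ioc 0 N).filter (fun m : ℕ => (m : ℝ) ≤ z) ⊆ Ioc 0 ⌊z⌋₊ := fun m hm => by
      rw [mem_filter, mem_Ioc] at hm
      exact mem_Ioc.2 ⟨hm.1.1, Nat.le_floor hm.2⟩
    have hle := card_le_card hsub
    rw [Nat.card_Ioc, Nat.sub_zero] at hle
    rw [sum_boole]
    exact (Nat.cast_le.2 hle).trans (Nat.floor_le hz)
  rw [sum_filter]
  refine (sum_le_sum fun m _ => ?_).trans (sum_add_distrib.trans_le (by gcongr))
  split_ifs with hprime hmz hmz
  · have hle : ∏ p ∈ primesUpTo z with p ∣ m, (1 - g p) ≤ 1 :=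
      prod_le_one (fun p _ => by linarith [(hg.nonneg_and_le_one p).2])
        fun p _ => by linarith [(hg.nonneg_and_le_one p).1]
    linarith [hnonneg m]
  · rw [zero_add, prod_one_sub_eq_prod_one_sub_siftWeight hg hD hprime (not_le.1 hmz)]
  all_goals linarith [hnonneg m]

theorem two_mul_pow_mul_log_sq_le (hz : 2 ≤ z) : 2 * z ^ 500 * log z ^ 2 ≤ z ^ 1000 := by
  have hlog : log z ≤ z := by linarith [log_le_sub_one_of_pos (show 0 < z by linarith)]
  have hlog0 : 0 ≤ log z := log_nonneg (by linarith)
  calc 2 * z ^ 500 * log z ^ 2 ≤ z * z ^ 500 * z ^ 2 := by gcongr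
    _ = z ^ 503 := by ring
    _ ≤ z ^ 1000 := pow_le_pow_right₀ (by linarith) (by norm_num)

theorem add_pow_le_mul_exp_neg_sum (hg : ∀ p, g p ≤ 1) (hz : 2 ≤ z) {X : ℝ} (hX : z ^ 1000 ≤ X) :
    z + z ^ 500 ≤ exp 10 * (X / log z) * exp (-∑ p ∈ primesUpTo z, g p / p) := by
  have hlogz : 0 < log z := log_pos (by linarith)
  have hsum : ∑ p ∈ primesUpTo z, g p / p ≤ log (log z) + 10 :=
    calc ∑ p ∈ primesUpTo z, g p / p ≤ ∑ p ∈ primesUpTo z, (1 : ℝ) / p :=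
          sum_le_sum fun p _ => by
            have := hg p
            gcongr
      _ ≤ log (log z) + 10 := by
          linarith [(abs_le.1 (abs_sum_inv_primesUpTo_sub_log_log_le hz)).2]
  have hX0 : 0 < X := lt_of_lt_of_le (by positivity) hX
  calc z + z ^ 500 ≤ 2 * z ^ 500 := by
        linarith [le_self_pow₀ (show 1 ≤ z by linarith) (show 500 ≠ 0 by norm_num)]
    _ ≤ X / log z ^ 2 := (le_div_iff₀ (by positivity)).2 ((two_mul_pow_mul_log_sq_le hz).trans hX)
    _ = exp 10 * (X / log z) * exp (-(log (log z) + 10)) := by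
        rw [neg_add, exp_add, exp_neg (log _), exp_log hlogz, exp_neg]
        field_simp
    _ ≤ exp 10 * (X / log z) * exp (-∑ p ∈ primesUpTo z, g p / p) := by gcongr

theorem sum_prime_prod_one_sub_le (hg : IsSieveWeight g) (hD : D ≠ 0) (hz : 2 ≤ z)
    (hN : z ^ 1000 ≤ N) :
    ∑ m ∈ Ioc 0 N with (D * m + 1).Prime, ∏ p ∈ primesUpTo z with p ∣ m, (1 - g p) ≤
      3 * exp 10 * (N / log z) * (D / D.totient) * exp (-∑ p ∈ primesUpTo z, g p / p) := by
  have hlogz : 0 < log z := log_pos (by linarith)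
  have hsift := sum_prod_one_sub_le_add_sum_prod_one_sub_siftWeight hg hD N (by linarith : 0 ≤ z)
  have hselberg := sum_prod_one_sub_siftWeight_le (D := D) hg N hz
  have hmain := mul_le_mul_of_nonneg_left (prod_one_sub_siftDensity_le hg hD hz)
    (show (0 : ℝ) ≤ 2 * N by positivity)
  have hrest := add_pow_le_mul_exp_neg_sum (fun p => (hg.nonneg_and_le_one p).2) hz hN
  have htotient : (1 : ℝ) ≤ D / D.totient :=
    (one_le_div (mod_cast Nat.totient_pos.2 (Nat.pos_of_ne_zero hD))).2
      (mod_cast D.totient_le)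
  have hrest' := hrest.trans (le_mul_of_one_le_right (by positivity) htotient)
  linear_combination hsift + hselberg + hmain + hrest'

end SieveBound

section SmoothNumbers

open Finset Real

theorem sum_inv_sq_primesUpTo_le (x : ℝ) : ∑ p ∈ primesUpTo x, 1 / (p : ℝ) ^ 2 ≤ 1 := by
  have hsub : primesUpTo x ⊆ Ioc 1 (max 1 ⌊x⌋₊) := fun p hp => by
    rw [mem_primesUpTo] at hp
    exact mem_Ioc.2 ⟨hp.1.one_lt, le_max_of_le_right (Nat.le_floor hp.2)⟩
  calc ∑ p ∈ primesUpTo x, 1 / (p : ℝ) ^ 2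
      ≤ ∑ n ∈ Ioc 1 (max 1 ⌊x⌋₊), 1 / (n : ℝ) ^ 2 :=
        sum_le_sum_of_subset_of_nonneg hsub fun _ _ _ => by positivity
    _ ≤ ((1 : ℕ) : ℝ)⁻¹ - ((max 1 ⌊x⌋₊ : ℕ) : ℝ)⁻¹ := by
        simpa only [one_div] using sum_Ioc_inv_sq_le_sub one_ne_zero (le_max_left 1 ⌊x⌋₊)
    _ ≤ 1 := by
        rw [Nat.cast_one, inv_one, sub_le_self_iff]
        positivity

/-- `q` is the largest prime factor of `D`. -/
structure IsLargestPrimeFactor (q D : ℕ) : Prop where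
  ne_zero : D ≠ 0
  prime : q.Prime
  dvd : q ∣ D
  le_of_dvd : ∀ r : ℕ, r.Prime → r ∣ D → r ≤ q

/-- `D` consists of the smallest prime factors of `n`: `n = D * m`, where every prime factor of `D`
is at most every prime factor of `m`. -/
def IsInitialFactor (D n : ℕ) : Prop :=
  ∃ m, n = D * m ∧ ∀ q r : ℕ, q.Prime → r.Prime → q ∣ D → r ∣ m → q ≤ r

theorem exists_isLargestPrimeFactor {D : ℕ} (hD : 1 < D) : ∃ q, IsLargestPrimeFactor q D := by
  obtain ⟨q, hqmem, hqmax⟩ :=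
    D.primeFactors.exists_max_image id (Nat.nonempty_primeFactors.2 hD)
  obtain ⟨hq, hqD, hD0⟩ := Nat.mem_primeFactors.1 hqmem
  exact ⟨q, hD0, hq, hqD, fun r hr hrD => hqmax r (Nat.mem_primeFactors.2 ⟨hr, hrD, hD0⟩)⟩

theorem IsLargestPrimeFactor.mem_smoothNumbers {q k : ℕ} (h : IsLargestPrimeFactor q (q * k)) :
    k ∈ Nat.smoothNumbers (q + 1) :=
  Nat.mem_smoothNumbers_of_dvd (Nat.mem_smoothNumbers_iff_forall_le.2 ⟨h.ne_zero, fun p _ hp hpD =>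
    Nat.lt_succ_of_le (h.le_of_dvd p hp hpD)⟩) (dvd_mul_left k q)

theorem IsInitialFactor.div_largestPrimeFactor {D n q : ℕ} (hD : IsInitialFactor D n)
    (hq : IsLargestPrimeFactor q D) : IsInitialFactor (D / q) n := by
  obtain ⟨m, rfl, hle⟩ := hD
  obtain ⟨k, rfl⟩ := hq.dvd
  rw [Nat.mul_div_cancel_left _ hq.prime.pos]
  refine ⟨q * m, by ring, fun r l hr hl hrk hlm => ?_⟩
  obtain hlq | hlm := (Nat.Prime.dvd_mul hl).1 hlm
  · rw [(Nat.prime_dvd_prime_iff_eq hl hq.prime).1 hlq]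
    exact hq.le_of_dvd r hr (hrk.mul_left q)
  · exact hle r l hr hl (hrk.mul_left q) hlm

theorem dvd_of_forall_prime_lt {s k m q : ℕ} (hsn : s ∣ q * k * m) (hq : q.Prime)
    (hm : ∀ r : ℕ, r.Prime → r ∣ m → q ≤ r) (hs : ∀ r : ℕ, r.Prime → r ∣ s → r < q) : s ∣ k := by
  have hcop : Nat.Coprime (q * m) s := Nat.coprime_of_dvd fun r hr hrqm hrs => by
    refine (hs r hr hrs).not_ge ?_
    obtain hrq | hrm := (Nat.Prime.dvd_mul hr).1 hrqm
    · exact ((Nat.prime_dvd_prime_iff_eq hr hq).1 hrq).ge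
    · exact hm r hr hrm
  rw [show q * k * m = q * m * k by ring] at hsn
  exact hcop.symm.dvd_of_dvd_mul_left hsn

theorem exists_eq_mul_of_smooth_dvd {n s : ℕ} {w Y : ℝ} (hn : n ≠ 0) (hY : 1 ≤ Y) (hsn : s ∣ n)
    (hsw : ∀ r : ℕ, r.Prime → r ∣ s → r ≤ w) (hYs : Y < s) :
    ∃ D m q : ℕ, n = D * m ∧ IsLargestPrimeFactor q D ∧ q ≤ w ∧
      (∀ r : ℕ, r.Prime → r ∣ m → q ≤ r) ∧ Y < D ∧ D ≤ Y * q := by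
  have hex : ∃ D, IsInitialFactor D n ∧ Y < D :=
    ⟨n, ⟨1, (mul_one n).symm, fun _ r _ hr _ h => absurd (Nat.dvd_one.1 h) hr.ne_one⟩,
      hYs.trans_le (mod_cast Nat.le_of_dvd (Nat.pos_of_ne_zero hn) hsn)⟩
  obtain ⟨hinit, hYD⟩ := Nat.find_spec hex
  have hmin : ∀ D' < Nat.find hex, IsInitialFactor D' n → D' ≤ Y := fun D' hlt hD' =>
    not_lt.1 fun hY' => Nat.find_min hex hlt ⟨hD', hY'⟩
  set D := Nat.find hex
  have hD1 : 1 < D := mod_cast hY.trans_lt hYD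
  obtain ⟨q, hq⟩ := exists_isLargestPrimeFactor hD1
  have hDq : (D / q : ℕ) ≤ Y :=
    hmin _ (Nat.div_lt_self (by lia) hq.prime.one_lt) (hinit.div_largestPrimeFactor hq)
  obtain ⟨m, hnDm, hle⟩ := hinit
  obtain ⟨k, hk⟩ := hq.dvd
  have hqm : ∀ r : ℕ, r.Prime → r ∣ m → q ≤ r := fun r hr => hle q r hq.prime hr hq.dvd
  rw [hk, Nat.mul_div_cancel_left _ hq.prime.pos] at hDq
  refine ⟨D, m, q, hnDm, hq, ?_, hqm, hYD, ?_⟩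
  · by_contra! hwq
    have hsk : s ∣ k := dvd_of_forall_prime_lt (by rwa [← hk, ← hnDm]) hq.prime hqm
      fun r hr hrs => by exact_mod_cast (hsw r hr hrs).trans_lt hwq
    have hk0 : 0 < k := Nat.pos_of_ne_zero (by rintro rfl; lia)
    have : (s : ℝ) ≤ k := mod_cast Nat.le_of_dvd hk0 hsk
    linarith
  · rw [hk, Nat.cast_mul, mul_comm]
    gcongr

theorem hasSum_rpow_div_totient_prime_pow {p : ℕ} (hp : p.Prime) {σ : ℝ} (hσ : σ < 1) :
    HasSum (fun n : ℕ => ((p ^ n : ℕ) : ℝ) ^ σ / (p ^ n).totient)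
      (1 + (p : ℝ) ^ σ * (p / ((p - 1) * (p - (p : ℝ) ^ σ)))) := by
  have hp1 : (1 : ℝ) < p := mod_cast hp.one_lt
  have hp0 : (0 : ℝ) < p := by linarith
  have hu : (p : ℝ) ^ σ < p := by simpa using rpow_lt_rpow_of_exponent_lt hp1 hσ
  set u := (p : ℝ) ^ σ with hudef
  have hu0 : 0 < u := by positivity
  have hsub1 : (p : ℝ) - 1 ≠ 0 := by linarith
  have hsubu : (p : ℝ) - u ≠ 0 := by linarith
  have hterm : ∀ n : ℕ, ((p ^ (n + 1) : ℕ) : ℝ) ^ σ / (p ^ (n + 1)).totient =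
      u / (p - 1) * (u / p) ^ n := fun n => by
    rw [Nat.totient_prime_pow_succ hp, Nat.cast_pow, ← rpow_natCast_mul hp0.le, mul_comm,
      rpow_mul_natCast hp0.le, Nat.cast_mul, Nat.cast_pow, Nat.cast_sub hp.one_le, Nat.cast_one,
      div_pow, pow_succ, ← hudef]
    field_simp
  have hgeom := (hasSum_geometric_of_lt_one (show 0 ≤ u / p by positivity)
    ((div_lt_one hp0).2 hu)).mul_left (u / (p - 1))
  simp_rw [← hterm] at hgeom
  have hvalue : u / (p - 1) * (1 - u / p)⁻¹ = u * (p / ((p - 1) * (p - u))) := by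
    rw [one_sub_div hp0.ne', inv_div]
    field_simp
  simpa only [pow_zero, Nat.cast_one, one_rpow, Nat.totient_one, div_one, hvalue] using
    hgeom.zero_add (f := fun n : ℕ => ((p ^ n : ℕ) : ℝ) ^ σ / (p ^ n).totient)

theorem tsum_rpow_div_totient_prime_pow_le {p : ℕ} (hp : p.Prime) {σ : ℝ} (hσ0 : 0 ≤ σ)
    (hσ : σ < 1) (hσp : σ * log p ≤ 1 / 4) :
    ∑' n : ℕ, ((p ^ n : ℕ) : ℝ) ^ σ / (p ^ n).totient ≤
      exp (1 / p + 2 * σ * (log p / p) + 30 * (1 / (p : ℝ) ^ 2)) := by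
  have hp2 : (2 : ℝ) ≤ p := mod_cast hp.two_le
  have hp0 : (0 : ℝ) < p := by linarith
  have hlog : 0 ≤ σ * log p := mul_nonneg hσ0 (log_nonneg (by linarith))
  have hu : (p : ℝ) ^ σ ≤ 1 + 2 * (σ * log p) := by
    rw [rpow_def_of_pos hp0, mul_comm]
    linarith [exp_sub_one_le_two_mul hlog (by linarith)]
  have hfrac : (p : ℝ) / ((p - 1) * (p - (p : ℝ) ^ σ)) ≤ 1 / p + 20 * (1 / (p : ℝ) ^ 2) := by
    calc (p : ℝ) / ((p - 1) * (p - (p : ℝ) ^ σ)) ≤ p / ((p - 1) * (p - 3 / 2)) := by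
          have : 0 < (p : ℝ) - 1 := by linarith
          have : 0 < (p : ℝ) - 3 / 2 := by linarith
          gcongr
          linarith
      _ ≤ 1 / p + 20 * (1 / (p : ℝ) ^ 2) := by
          rw [div_le_iff₀ (mul_pos (by linarith) (by linarith))]
          field_simp
          nlinarith [sq_nonneg ((p : ℝ) - 2)]
  rw [(hasSum_rpow_div_totient_prime_pow hp hσ).tsum_eq]
  calc 1 + (p : ℝ) ^ σ * (p / ((p - 1) * (p - (p : ℝ) ^ σ)))
      ≤ 1 + (p : ℝ) ^ σ * (1 / p + 20 * (1 / (p : ℝ) ^ 2)) := by gcongr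
    _ = (p : ℝ) ^ σ * (1 / p) + (p : ℝ) ^ σ * (20 * (1 / (p : ℝ) ^ 2)) + 1 := by ring
    _ ≤ (1 + 2 * (σ * log p)) * (1 / p) + 3 / 2 * (20 * (1 / (p : ℝ) ^ 2)) + 1 := by
        gcongr
        linarith
    _ = 1 / p + 2 * σ * (log p / p) + 30 * (1 / (p : ℝ) ^ 2) + 1 := by ring
    _ ≤ _ := add_one_le_exp _

theorem sum_smoothNumbers_le_prod_tsum {f : ℕ → ℝ} (hf0 : ∀ n, 0 ≤ f n) (hf1 : f 1 = 1)
    (hmul : ∀ {m n : ℕ}, m.Coprime n → f (m * n) = f m * f n)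
    (hsum : ∀ {p : ℕ}, p.Prime → Summable fun n => f (p ^ n)) {q : ℕ} {A : Finset ℕ}
    (hA : ∀ D ∈ A, D ∈ Nat.smoothNumbers (q + 1)) :
    ∑ D ∈ A, f D ≤ ∏ p ∈ primesUpTo q, ∑' n, f (p ^ n) := by
  have hprimes : primesUpTo (q : ℝ) = (q + 1).primesBelow := by
    ext p
    rw [Nat.mem_primesBelow, mem_primesUpTo, Nat.cast_le, Nat.lt_succ_iff, and_comm]
  have hnorm : ∀ {p : ℕ}, p.Prime → Summable fun n => ‖f (p ^ n)‖ := fun hp => by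
    simpa only [norm_of_nonneg (hf0 _)] using hsum hp
  obtain ⟨-, h⟩ :=
    EulerProduct.summable_and_hasSum_smoothNumbers_prod_primesBelow_tsum hf1 hmul hnorm (q + 1)
  rw [hprimes, ← sum_subtype_of_mem f hA]
  exact sum_le_hasSum (A.subtype (· ∈ Nat.smoothNumbers (q + 1))) (fun D _ => hf0 D) h

theorem sum_rankin_exponent_le {x : ℝ} (hx : 2 ≤ x) :
    ∑ p ∈ primesUpTo x, (1 / (p : ℝ) + 2 * (1 / (4 * log x)) * (log p / p) +
      30 * (1 / (p : ℝ) ^ 2)) ≤ 45 + log (log x) := by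
  have hlog := two_thirds_le_log hx
  set σ := 1 / (4 * log x) with hσdef
  have : 0 ≤ σ := by positivity
  rw [sum_add_distrib, sum_add_distrib, ← mul_sum, ← mul_sum]
  have hinv := (abs_le.1 (abs_sum_inv_primesUpTo_sub_log_log_le hx)).2
  have hlogs := mul_le_mul_of_nonneg_left
    (sum_log_div_primesUpTo_le (show 1 ≤ x by linarith)) (show 0 ≤ 2 * σ by positivity)
  have hσlog : 2 * σ * (log x + 2) = 1 / 2 + 1 / log x := by
    rw [hσdef]
    field_simp
    ring
  have : 1 / log x ≤ 3 / 2 := by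
    rw [div_le_iff₀ (by linarith)]
    linarith
  linarith [sum_inv_sq_primesUpTo_le x]

theorem sum_rpow_div_totient_smoothNumbers_le {q : ℕ} (hq : 2 ≤ q) {A : Finset ℕ}
    (hA : ∀ D ∈ A, D ∈ Nat.smoothNumbers (q + 1)) :
    ∑ D ∈ A, (D : ℝ) ^ (1 / (4 * log q)) / D.totient ≤ exp 45 * log q := by
  have hq2 : (2 : ℝ) ≤ q := mod_cast hq
  have hlog := two_thirds_le_log hq2
  have hlog0 : 0 < log q := by linarith
  set σ := 1 / (4 * log q) with hσdef
  have hσ0 : 0 < σ := by positivity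
  have hσ1 : σ < 1 := (div_lt_one (by positivity)).2 (by linarith)
  have hσp : ∀ p ∈ primesUpTo q, σ * log p ≤ 1 / 4 := fun p hp => by
    rw [mem_primesUpTo] at hp
    have : log p ≤ log q := log_le_log (mod_cast hp.1.pos) hp.2
    rw [hσdef, div_mul_eq_mul_div, one_mul, div_le_iff₀ (by positivity)]
    linarith
  calc ∑ D ∈ A, (D : ℝ) ^ σ / D.totient
      ≤ ∏ p ∈ primesUpTo q, ∑' n : ℕ, ((p ^ n : ℕ) : ℝ) ^ σ / (p ^ n).totient :=
        sum_smoothNumbers_le_prod_tsum (f := fun n : ℕ => (n : ℝ) ^ σ / n.totient)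
          (fun n => by positivity) (by simp)
          (fun hmn => by
            rw [Nat.totient_mul hmn, Nat.cast_mul, mul_rpow (by positivity) (by positivity),
              Nat.cast_mul, mul_div_mul_comm])
          (fun hp => (hasSum_rpow_div_totient_prime_pow hp hσ1).summable) hA
    _ ≤ ∏ p ∈ primesUpTo q, exp (1 / p + 2 * σ * (log p / p) + 30 * (1 / (p : ℝ) ^ 2)) :=
        prod_le_prod (fun p _ => tsum_nonneg fun n => by positivity) fun p hp =>
          tsum_rpow_div_totient_prime_pow_le (mem_primesUpTo.1 hp).1 hσ0.le hσ1 (hσp p hp)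
    _ ≤ exp (45 + log (log q)) := by
        rw [← exp_sum]
        exact exp_le_exp.2 (sum_rankin_exponent_le hq2)
    _ = exp 45 * log q := by rw [exp_add, exp_log hlog0]

theorem inv_totient_prime_mul_le {q k : ℕ} (hq : q.Prime) (hk : k ≠ 0) :
    1 / ((q * k).totient : ℝ) ≤ 2 / q * (1 / k.totient) := by
  have hq2 : (2 : ℝ) ≤ q := mod_cast hq.two_le
  have : (0 : ℝ) < k.totient := mod_cast Nat.totient_pos.2 (Nat.pos_of_ne_zero hk)
  have hsuper : ((q : ℝ) - 1) * k.totient ≤ (q * k).totient := by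
    have h := Nat.totient_super_multiplicative q k
    rw [Nat.totient_prime hq] at h
    have := Nat.cast_le (α := ℝ).2 h
    rwa [Nat.cast_mul, Nat.cast_sub hq.one_le, Nat.cast_one] at this
  calc 1 / ((q * k).totient : ℝ) ≤ 1 / (q / 2 * k.totient) := by
        refine one_div_le_one_div_of_le (by positivity) (le_trans ?_ hsuper)
        gcongr
        linarith
    _ = 2 / q * (1 / k.totient) := by field_simp

theorem inv_totient_prime_mul_le_rpow {q k : ℕ} (hq : q.Prime) (hk : k ≠ 0) {Y σ : ℝ} (hY : 0 < Y)
    (hσ : 0 ≤ σ) (hqσ : (q : ℝ) ^ σ ≤ 2) (hYk : Y ≤ (q * k : ℕ)) :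
    1 / ((q * k).totient : ℝ) ≤ 4 / q * Y ^ (-σ) * ((k : ℝ) ^ σ / k.totient) := by
  have hrankin : 1 ≤ Y ^ (-σ) * (2 * (k : ℝ) ^ σ) :=
    calc 1 ≤ Y ^ (-σ) * ((q * k : ℕ) : ℝ) ^ σ := by
          rw [rpow_neg hY.le, inv_mul_eq_div, one_le_div (by positivity)]
          gcongr
      _ ≤ Y ^ (-σ) * (2 * (k : ℝ) ^ σ) := by
          rw [Nat.cast_mul, mul_rpow (by positivity) (by positivity)]
          gcongr
  calc 1 / ((q * k).totient : ℝ) ≤ 2 / q * (1 / k.totient) := inv_totient_prime_mul_le hq hk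
    _ ≤ 2 / q * (1 / k.totient) * (Y ^ (-σ) * (2 * (k : ℝ) ^ σ)) :=
        le_mul_of_one_le_right (by positivity) hrankin
    _ = 4 / q * Y ^ (-σ) * ((k : ℝ) ^ σ / k.totient) := by ring

theorem sum_one_div_totient_le {q : ℕ} (hq : q.Prime) {Y : ℝ} (hY : 0 < Y) {A : Finset ℕ}
    (hA : ∀ D ∈ A, IsLargestPrimeFactor q D ∧ Y < D) :
    ∑ D ∈ A, 1 / (D.totient : ℝ) ≤
      4 * exp 45 * (log q / q) * exp (-(log Y / (4 * log q))) := by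
  have hq2 : (2 : ℝ) ≤ q := mod_cast hq.two_le
  have hlog : 0 < log q := log_pos (by linarith)
  set σ := 1 / (4 * log q) with hσdef
  have hσ0 : 0 < σ := by positivity
  have hqσ : (q : ℝ) ^ σ ≤ 2 := by
    rw [rpow_def_of_pos (by linarith), hσdef, show log q * (1 / (4 * log q)) = 1 / 4 by field_simp]
    linarith [exp_sub_one_le_two_mul (show (0 : ℝ) ≤ 1 / 4 by norm_num) (by norm_num)]
  have hYσ : exp (-(log Y / (4 * log q))) = Y ^ (-σ) := by
    rw [rpow_def_of_pos hY, hσdef]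
    ring_nf
  have hrankin : ∀ D ∈ A, 1 / (D.totient : ℝ) ≤
      4 / q * Y ^ (-σ) * (((D / q : ℕ) : ℝ) ^ σ / (D / q).totient) := fun D hD => by
    obtain ⟨hlargest, hYD⟩ := hA D hD
    obtain ⟨k, rfl⟩ := hlargest.dvd
    rw [Nat.mul_div_cancel_left _ hq.pos]
    exact inv_totient_prime_mul_le_rpow hq (right_ne_zero_of_mul hlargest.ne_zero) hY hσ0.le hqσ
      hYD.le
  have hinj : Set.InjOn (· / q) (A : Set ℕ) := fun D hD E hE h =>
    Nat.div_left_inj (hA D hD).1.dvd (hA E hE).1.dvd |>.1 h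
  have hsmooth : ∀ k ∈ A.image (· / q), k ∈ Nat.smoothNumbers (q + 1) := fun k hk => by
    obtain ⟨D, hD, rfl⟩ := mem_image.1 hk
    have hlargest := (hA D hD).1
    obtain ⟨k, rfl⟩ := hlargest.dvd
    simpa only [Nat.mul_div_cancel_left _ hq.pos] using hlargest.mem_smoothNumbers
  have hsum := sum_rpow_div_totient_smoothNumbers_le hq.two_le hsmooth
  rw [sum_image hinj] at hsum
  rw [hYσ]
  calc ∑ D ∈ A, 1 / (D.totient : ℝ)
      ≤ ∑ D ∈ A, 4 / q * Y ^ (-σ) * (((D / q : ℕ) : ℝ) ^ σ / (D / q).totient) :=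
        sum_le_sum hrankin
    _ ≤ 4 / q * Y ^ (-σ) * (exp 45 * log q) := by
        rw [← mul_sum]
        gcongr
    _ = 4 * exp 45 * (log q / q) * Y ^ (-σ) := by ring

end SmoothNumbers

section SmoothDivisors

open Finset Real

theorem isSieveWeight_ite {c : ℝ} (hc : 1 / 4 ≤ c) (hc1 : c ≤ 1) {P : ℕ → Prop}
    [DecidablePred P] (h2 : ¬P 2) :
    IsSieveWeight fun p => if P p then c else 0 := by
  refine ⟨if_neg h2, fun p => ?_⟩
  by_cases h : P p
  · exact Or.inr (by simp only [h, if_true]; exact ⟨hc, hc1⟩)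
  · exact Or.inl (if_neg h)

theorem sum_prime_prod_one_sub_le_div_log {g : ℕ → ℝ} (hg : IsSieveWeight g) {D : ℕ} (hD : D ≠ 0)
    {z t : ℝ} (hz : 2 ≤ z) (ht : D * z ^ 1001 ≤ t) :
    ∑ m ∈ Ioc 0 ⌊t / D⌋₊ with (D * m + 1).Prime, ∏ p ∈ primesUpTo z with p ∣ m, (1 - g p) ≤
      3 * exp 10 * (t / log z) * (1 / D.totient) * exp (-∑ p ∈ primesUpTo z, g p / p) := by
  have hD0 : (0 : ℝ) < D := mod_cast Nat.pos_of_ne_zero hD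
  have ht0 : 0 < t := lt_of_lt_of_le (by positivity) ht
  have hlog : 0 < log z := log_pos (by linarith)
  have hzN : z ^ 1000 ≤ ⌊t / D⌋₊ := by
    have hfloor := Nat.lt_floor_add_one (t / D)
    have : z ^ 1001 ≤ t / D := by rwa [le_div_iff₀ hD0, mul_comm]
    have : 1 ≤ z ^ 1000 := one_le_pow₀ (by linarith)
    have : z ^ 1000 * 2 ≤ z ^ 1001 := by
      rw [pow_succ z 1000]
      gcongr
    linarith
  have hN : (⌊t / D⌋₊ : ℝ) ≤ t / D := Nat.floor_le (by positivity)
  calc _ ≤ 3 * exp 10 * (⌊t / D⌋₊ / log z) * (D / D.totient) *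
        exp (-∑ p ∈ primesUpTo z, g p / p) := sum_prime_prod_one_sub_le hg hD hz hzN
    _ ≤ 3 * exp 10 * (t / D / log z) * (D / D.totient) *
        exp (-∑ p ∈ primesUpTo z, g p / p) := by gcongr
    _ = _ := by field_simp

theorem log_log_sub_le_sum_odd_primes {q : ℕ} {z : ℝ} (hq : 2 ≤ q) (hqz : q ≤ z) :
    log (log q) - 11 ≤ ∑ p ∈ primesUpTo z, (if 2 < p ∧ p < q then (1 : ℝ) else 0) / p := by
  have hexceptions : ∑ p ∈ primesUpTo q with ¬(2 < p ∧ p < q), (1 : ℝ) / p ≤ 1 := by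
    have hsub : {p ∈ primesUpTo q | ¬(2 < p ∧ p < q)} ⊆ {2, q} := fun p hp => by
      rw [mem_filter, mem_primesUpTo, Nat.cast_le] at hp
      have := hp.1.1.two_le
      rw [mem_insert, mem_singleton]
      lia
    calc _ ≤ #{p ∈ primesUpTo q | ¬(2 < p ∧ p < q)} • ((1 : ℝ) / 2) :=
          sum_le_card_nsmul _ _ _ fun p hp => by
            have : (2 : ℝ) ≤ p :=
              mod_cast (mem_primesUpTo.1 (mem_filter.1 hp).1).1.two_le
            gcongr
      _ ≤ 2 • ((1 : ℝ) / 2) := by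
          gcongr
          exact (card_le_card hsub).trans card_le_two
      _ = 1 := by norm_num
  have hmain : ∑ p ∈ primesUpTo q with 2 < p ∧ p < q, (1 : ℝ) / p ≤
      ∑ p ∈ primesUpTo z, (if 2 < p ∧ p < q then (1 : ℝ) else 0) / p := by
    simp only [ite_div, zero_div, ← sum_filter]
    exact sum_le_sum_of_subset_of_nonneg (filter_subset_filter _ (primesUpTo_mono hqz))
      fun _ _ _ => by positivity
  have hmertens :=
    (abs_le.1 (abs_sum_inv_primesUpTo_sub_log_log_le (show (2 : ℝ) ≤ q from mod_cast hq))).1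
  have := sum_filter_add_sum_filter_not (primesUpTo q) (fun p => 2 < p ∧ p < q)
    fun p : ℕ => (1 : ℝ) / p
  linarith

/-- The `m ≤ t / D` without prime factors below `q` for which `D * m + 1` is prime. -/
noncomputable def roughCofactors (t : ℝ) (D q : ℕ) : Finset ℕ :=
  {m ∈ Ioc 0 ⌊t / D⌋₊ | (D * m + 1).Prime ∧ ∀ r : ℕ, r.Prime → r ∣ m → q ≤ r}

theorem card_roughCofactors_le {t z : ℝ} {D q : ℕ} (hD : D ≠ 0) (hq : 2 ≤ q) (hqz : q ≤ z)
    (ht : D * z ^ 1001 ≤ t) :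
    (#(roughCofactors t D q) : ℝ) ≤
      3 * exp 21 * (t / log z) * (1 / D.totient) * (1 / log q) := by
  have hq2 : (2 : ℝ) ≤ q := mod_cast hq
  have hlogq : 0 < log q := log_pos (by linarith)
  have hlogz : 0 < log z := log_pos (by linarith)
  have ht0 : 0 ≤ t := le_trans (mul_nonneg D.cast_nonneg (pow_nonneg (by linarith) _)) ht
  let g : ℕ → ℝ := fun p => if 2 < p ∧ p < q then 1 else 0
  have hg : IsSieveWeight g := isSieveWeight_ite (P := fun p => 2 < p ∧ p < q) (by norm_num) le_rfl
    fun h => lt_irrefl 2 h.1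
  have hprod : ∀ m ∈ roughCofactors t D q, ∏ p ∈ primesUpTo z with p ∣ m, (1 - g p) = 1 :=
    fun m hm => prod_eq_one fun p hp => by
      rw [mem_filter, mem_primesUpTo] at hp
      have := (mem_filter.1 hm).2.2 p hp.1.1 hp.2
      rw [sub_eq_self]
      exact if_neg (by lia)
  have hsub : roughCofactors t D q ⊆ {m ∈ Ioc 0 ⌊t / D⌋₊ | (D * m + 1).Prime} := fun m hm =>
    mem_filter.2 ⟨(mem_filter.1 hm).1, (mem_filter.1 hm).2.1⟩
  calc (#(roughCofactors t D q) : ℝ)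
      = ∑ m ∈ roughCofactors t D q, ∏ p ∈ primesUpTo z with p ∣ m, (1 - g p) := by
        rw [sum_congr rfl hprod, sum_const, nsmul_one]
    _ ≤ ∑ m ∈ Ioc 0 ⌊t / D⌋₊ with (D * m + 1).Prime,
          ∏ p ∈ primesUpTo z with p ∣ m, (1 - g p) :=
        sum_le_sum_of_subset_of_nonneg hsub fun m _ _ =>
          prod_nonneg fun p _ => sub_nonneg.2 (hg.nonneg_and_le_one p).2
    _ ≤ 3 * exp 10 * (t / log z) * (1 / D.totient) * exp (-∑ p ∈ primesUpTo z, g p / p) :=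
        sum_prime_prod_one_sub_le_div_log hg hD (hq2.trans hqz) ht
    _ ≤ 3 * exp 10 * (t / log z) * (1 / D.totient) * exp (11 - log (log q)) := by
        gcongr
        linarith [log_log_sub_le_sum_odd_primes hq hqz]
    _ = 3 * exp 21 * (t / log z) * (1 / D.totient) * (1 / log q) := by
        rw [exp_sub, exp_log hlogq, show (21 : ℝ) = 10 + 11 by norm_num, exp_add]
        ring

/-- The integers in `(Y, q * Y]` with largest prime factor `q`. -/
noncomputable def smoothKernels (Y : ℝ) (q : ℕ) : Finset ℕ :=
  {D ∈ Ioc 0 ⌊Y * q⌋₊ | IsLargestPrimeFactor q D ∧ Y < D}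

/-- The primes `p ≤ t` for which `p - 1` has a `w`-smooth divisor exceeding `Y`. -/
noncomputable def primesWithSmoothDivisor (t w Y : ℝ) : Finset ℕ :=
  {p ∈ primesUpTo t | ∃ s : ℕ, s ∣ p - 1 ∧ (∀ r : ℕ, r.Prime → r ∣ s → r ≤ w) ∧ Y < s}

theorem primesWithSmoothDivisor_subset {t w Y : ℝ} (hY : 1 ≤ Y) :
    primesWithSmoothDivisor t w Y ⊆ (primesUpTo w).biUnion fun q =>
      (smoothKernels Y q).biUnion fun D => (roughCofactors t D q).image fun m => D * m + 1 := by
  intro p hp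
  obtain ⟨hp, s, hsp, hsw, hYs⟩ := mem_filter.1 hp
  obtain ⟨hprime, hpt⟩ := mem_primesUpTo.1 hp
  have hp2 := hprime.two_le
  obtain ⟨D, m, q, hpDm, hlargest, hqw, hrough, hYD, hDY⟩ :=
    exists_eq_mul_of_smooth_dvd (by lia) hY hsp hsw hYs
  have hD0 := Nat.pos_of_ne_zero hlargest.ne_zero
  have hm0 : 0 < m := Nat.pos_of_ne_zero (by rintro rfl; lia)
  have hmp : D * m + 1 = p := by lia
  have hmt : (m : ℝ) ≤ t / D := by
    have : ((D * m : ℕ) : ℝ) ≤ p := mod_cast by lia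
    rw [le_div_iff₀ (mod_cast hD0), mul_comm]
    exact_mod_cast this.trans hpt
  simp only [mem_biUnion, mem_image]
  exact ⟨q, mem_primesUpTo.2 ⟨hlargest.prime, hqw⟩, D,
    mem_filter.2 ⟨mem_Ioc.2 ⟨hD0, Nat.le_floor hDY⟩, hlargest, hYD⟩, m,
    mem_filter.2 ⟨mem_Ioc.2 ⟨hm0, Nat.le_floor hmt⟩, by rwa [hmp], hrough⟩, hmp⟩

theorem card_primesWithSmoothDivisor_le_sum {t w Y : ℝ} (hY : 1 ≤ Y) :
    (#(primesWithSmoothDivisor t w Y) : ℝ) ≤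
      ∑ q ∈ primesUpTo w, ∑ D ∈ smoothKernels Y q, (#(roughCofactors t D q) : ℝ) := by
  have h : #(primesWithSmoothDivisor t w Y) ≤
      ∑ q ∈ primesUpTo w, ∑ D ∈ smoothKernels Y q, #(roughCofactors t D q) :=
    (card_le_card (primesWithSmoothDivisor_subset hY)).trans <| card_biUnion_le.trans <|
      sum_le_sum fun _ _ => card_biUnion_le.trans <| sum_le_sum fun _ _ => card_image_le
  exact_mod_cast h

theorem exp_neg_mul_le_exp_neg_div {a b : ℝ} (ha : 1 ≤ a) (hb : 1 ≤ b) :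
    exp (-(b * a)) ≤ exp (-b) / a := by
  have : a ≤ exp (b * (a - 1)) := by nlinarith [add_one_le_exp (b * (a - 1))]
  rw [show -(b * a) = -b - b * (a - 1) by ring, exp_sub]
  gcongr

theorem exp_neg_div_le_exp_neg_div_div {a b c : ℝ} (ha : 0 < a) (hab : a ≤ b) (hbc : 4 * b ≤ c) :
    exp (-(c / (4 * a))) ≤ exp (-(c / (4 * b))) / (b / a) := by
  have hb : 0 < b := ha.trans_le hab
  have h := exp_neg_mul_le_exp_neg_div ((one_le_div ha).2 hab) ((one_le_div (by linarith)).2 hbc)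
  rwa [show c / (4 * b) * (b / a) = c / (4 * a) by field_simp] at h

theorem sum_card_roughCofactors_le {t w z Y : ℝ} {q : ℕ} (hq : q.Prime) (hqw : q ≤ w)
    (hwz : w ≤ z) (hwY : w ^ 4 ≤ Y) (ht : Y * w * z ^ 1001 ≤ t) :
    ∑ D ∈ smoothKernels Y q, (#(roughCofactors t D q) : ℝ) ≤
      12 * exp 66 * (t / log z) * (exp (-(log Y / (4 * log w))) / log w) * (log q / q) := by
  have hq2 : (2 : ℝ) ≤ q := mod_cast hq.two_le
  have hY : 0 < Y := lt_of_lt_of_le (pow_pos (by linarith) 4) hwY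
  have hlogq : 0 < log q := log_pos (by linarith)
  have hlogqw : log q ≤ log w := log_le_log (by linarith) hqw
  have hlogz : 0 < log z := log_pos (by linarith)
  have ht0 : 0 ≤ t :=
    le_trans (mul_nonneg (mul_nonneg hY.le (by linarith)) (pow_nonneg (by linarith) _)) ht
  have hlogY : 4 * log w ≤ log Y := by
    have := log_le_log (pow_pos (by linarith) 4) hwY
    rwa [log_pow, Nat.cast_ofNat] at this
  have hcofactors : ∀ D ∈ smoothKernels Y q, (#(roughCofactors t D q) : ℝ) ≤
      3 * exp 21 * (t / log z) * (1 / D.totient) * (1 / log q) := fun D hD => by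
    obtain ⟨hmem, hlargest, -⟩ := mem_filter.1 hD
    have hDY : (D : ℝ) ≤ Y * q := (Nat.le_floor_iff (by positivity)).1 (mem_Ioc.1 hmem).2
    refine card_roughCofactors_le hlargest.ne_zero hq.two_le (hqw.trans hwz) (le_trans ?_ ht)
    have : 0 ≤ z := by linarith
    gcongr
    exact hDY.trans (by gcongr)
  have hdecay := exp_neg_div_le_exp_neg_div_div hlogq hlogqw hlogY
  calc ∑ D ∈ smoothKernels Y q, (#(roughCofactors t D q) : ℝ)
      ≤ ∑ D ∈ smoothKernels Y q, 3 * exp 21 * (t / log z) * (1 / D.totient) * (1 / log q) :=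
        sum_le_sum hcofactors
    _ = 3 * exp 21 * (t / log z) * (1 / log q) *
          ∑ D ∈ smoothKernels Y q, 1 / (D.totient : ℝ) := by
        rw [mul_sum]
        exact sum_congr rfl fun D _ => by ring
    _ ≤ 3 * exp 21 * (t / log z) * (1 / log q) * (4 * exp 45 * (log q / q) *
          (exp (-(log Y / (4 * log w))) / (log w / log q))) := by
        gcongr
        exact (sum_one_div_totient_le hq hY fun D hD => (mem_filter.1 hD).2).trans (by gcongr)
    _ = 12 * exp 66 * (t / log z) * (exp (-(log Y / (4 * log w))) / log w) * (log q / q) := by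
        rw [show (66 : ℝ) = 21 + 45 by norm_num, exp_add]
        field_simp
        ring

theorem card_primesWithSmoothDivisor_le {t w z Y : ℝ} (hw : 2 ≤ w) (hwz : w ≤ z)
    (hwY : w ^ 4 ≤ Y) (ht : Y * w * z ^ 1001 ≤ t) :
    (#(primesWithSmoothDivisor t w Y) : ℝ) ≤
      48 * exp 66 * exp (-(log Y / (4 * log w))) * (t / log z) := by
  have hlogw := two_thirds_le_log hw
  have hlogz : 0 < log z := log_pos (by linarith)
  have hY : 1 ≤ Y := (one_le_pow₀ (by linarith)).trans hwY
  have ht0 : 0 ≤ t := le_trans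
    (mul_nonneg (mul_nonneg (by linarith) (by linarith)) (pow_nonneg (by linarith) _)) ht
  have hmertens := sum_log_div_primesUpTo_le (show 1 ≤ w by linarith)
  calc (#(primesWithSmoothDivisor t w Y) : ℝ)
      ≤ ∑ q ∈ primesUpTo w, ∑ D ∈ smoothKernels Y q, (#(roughCofactors t D q) : ℝ) :=
        card_primesWithSmoothDivisor_le_sum hY
    _ ≤ ∑ q ∈ primesUpTo w, 12 * exp 66 * (t / log z) *
          (exp (-(log Y / (4 * log w))) / log w) * (log q / q) :=
        sum_le_sum fun q hq => sum_card_roughCofactors_le (mem_primesUpTo.1 hq).1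
          (mem_primesUpTo.1 hq).2 hwz hwY ht
    _ ≤ 12 * exp 66 * (t / log z) * (exp (-(log Y / (4 * log w))) / log w) * (4 * log w) := by
        rw [← mul_sum]
        gcongr
        linarith
    _ = 48 * exp 66 * exp (-(log Y / (4 * log w))) * (t / log z) := by
        field_simp
        ring

theorem card_exists_sq_dvd_le (N : ℕ) {w : ℝ} (hw : 2 ≤ w) :
    (#{n ∈ Ioc 0 N | ∃ q : ℕ, w < q ∧ q ^ 2 ∣ n} : ℝ) ≤ 2 * N / w := by
  have hfloor : w / 2 ≤ ⌊w⌋₊ := by linarith [Nat.lt_floor_add_one w]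
  have hfloor0 : ⌊w⌋₊ ≠ 0 := (Nat.floor_pos.2 (by linarith)).ne'
  have hcover : {n ∈ Ioc 0 N | ∃ q : ℕ, w < q ∧ q ^ 2 ∣ n} ⊆
      (Ioc ⌊w⌋₊ (max ⌊w⌋₊ N)).biUnion fun q => {n ∈ Ioc 0 N | q ^ 2 ∣ n} := fun n hn => by
    obtain ⟨hn, q, hwq, hqn⟩ := mem_filter.1 hn
    have hqN : q ≤ N := (Nat.le_self_pow two_ne_zero q).trans
      ((Nat.le_of_dvd (mem_Ioc.1 hn).1 hqn).trans (mem_Ioc.1 hn).2)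
    exact mem_biUnion.2 ⟨q, mem_Ioc.2 ⟨(Nat.floor_lt (by linarith)).2 hwq,
      hqN.trans (le_max_right _ _)⟩, mem_filter.2 ⟨hn, hqn⟩⟩
  calc (#{n ∈ Ioc 0 N | ∃ q : ℕ, w < q ∧ q ^ 2 ∣ n} : ℝ)
      ≤ ∑ q ∈ Ioc ⌊w⌋₊ (max ⌊w⌋₊ N), (#{n ∈ Ioc 0 N | q ^ 2 ∣ n} : ℝ) :=
        mod_cast (card_le_card hcover).trans card_biUnion_le
    _ ≤ ∑ q ∈ Ioc ⌊w⌋₊ (max ⌊w⌋₊ N), N * ((q : ℝ) ^ 2)⁻¹ :=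
        sum_le_sum fun q _ => by
          rw [Nat.Ioc_filter_dvd_card_eq_div, ← div_eq_mul_inv]
          exact_mod_cast Nat.cast_div_le
    _ ≤ N * ((⌊w⌋₊ : ℝ)⁻¹ - ((max ⌊w⌋₊ N : ℕ) : ℝ)⁻¹) := by
        rw [← mul_sum]
        gcongr
        exact sum_Ioc_inv_sq_le_sub hfloor0 (le_max_left _ _)
    _ ≤ N * (w / 2)⁻¹ := by
        gcongr
        refine (sub_le_self _ (by positivity)).trans ?_
        gcongr
    _ = 2 * N / w := by rw [inv_div]; ring

theorem card_primes_exists_sq_dvd_sub_one_le {t w : ℝ} (ht : 0 ≤ t) (hw : 2 ≤ w) :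
    (#{p ∈ primesUpTo t | ∃ q : ℕ, w < q ∧ q ^ 2 ∣ p - 1} : ℝ) ≤ 2 * t / w := by
  have hmaps : ∀ p ∈ {p ∈ primesUpTo t | ∃ q : ℕ, w < q ∧ q ^ 2 ∣ p - 1},
      p - 1 ∈ {n ∈ Ioc 0 ⌊t⌋₊ | ∃ q : ℕ, w < q ∧ q ^ 2 ∣ n} := fun p hp => by
    obtain ⟨hp, hsq⟩ := mem_filter.1 hp
    obtain ⟨hprime, hpt⟩ := mem_primesUpTo.1 hp
    exact mem_filter.2 ⟨mem_Ioc.2 ⟨Nat.sub_pos_of_lt hprime.one_lt,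
      (p.sub_le 1).trans (Nat.le_floor hpt)⟩, hsq⟩
  have hinj : Set.InjOn (fun p : ℕ => p - 1)
      ({p ∈ primesUpTo t | ∃ q : ℕ, w < q ∧ q ^ 2 ∣ p - 1} : Finset ℕ) := fun p hp q hq h => by
    have := (mem_primesUpTo.1 (mem_filter.1 hp).1).1.pos
    have := (mem_primesUpTo.1 (mem_filter.1 hq).1).1.pos
    simp only at h
    lia
  calc _ ≤ (#{n ∈ Ioc 0 ⌊t⌋₊ | ∃ q : ℕ, w < q ∧ q ^ 2 ∣ n} : ℝ) :=
        mod_cast card_le_card_of_injOn _ hmaps hinj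
    _ ≤ 2 * ⌊t⌋₊ / w := card_exists_sq_dvd_le _ hw
    _ ≤ 2 * t / w := by
        gcongr
        exact Nat.floor_le ht

end SmoothDivisors

section WeightedSubsets

open Finset Real

/-- The number of prime factors of `n` in the window `(w, t]`. -/
noncomputable def windowOmega (w t : ℝ) (n : ℕ) : ℕ := #{q ∈ primesIoc w t | q ∣ n}

/-- The density with which `p - 1` is divisible by all members of a set `V` of primes, each of
them being counted with weight `y`. -/
noncomputable def subsetWeight (y : ℝ) (V : Finset ℕ) : ℝ := ∏ p ∈ V, y / ((p : ℝ) - 1)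

/-- The primes `p ≤ t` for which no `q > w` satisfies `q ^ 2 ∣ p - 1`. -/
noncomputable def primesSquarefreeAbove (w t : ℝ) : Finset ℕ :=
  {p ∈ primesUpTo t | ∀ q : ℕ, w < q → ¬q ^ 2 ∣ p - 1}

variable {y w z t Y Z : ℝ} {V Q : Finset ℕ}

theorem filter_lt_primesUpTo (w z : ℝ) : {p ∈ primesUpTo z | w < (p : ℕ)} = primesIoc w z := by
  ext p
  rw [mem_filter, mem_primesUpTo, mem_primesIoc]
  tauto

theorem prime_of_mem_primesIoc (hV : V ⊆ primesIoc w t) : ∀ p ∈ V, p.Prime :=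
  fun _ hp => (mem_primesIoc.1 (hV hp)).1

theorem totient_prod_of_primes (hV : ∀ p ∈ V, p.Prime) :
    ((∏ p ∈ V, p).totient : ℝ) = ∏ p ∈ V, ((p : ℝ) - 1) := by
  induction V using Finset.induction_on with
  | empty => simp
  | insert q V hq ih =>
    obtain ⟨hqprime, hV⟩ := (forall_mem_insert _ _ _).1 hV
    have hcop : q.Coprime (∏ p ∈ V, p) := Nat.Coprime.prod_right fun p hp =>
      (Nat.coprime_primes hqprime (hV p hp)).2 fun h => hq (h ▸ hp)
    rw [prod_insert hq, prod_insert hq, Nat.totient_mul hcop, Nat.cast_mul, ih hV,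
      Nat.totient_prime hqprime, Nat.cast_sub hqprime.one_le, Nat.cast_one]

theorem subsetWeight_eq_pow_div_totient (hV : ∀ p ∈ V, p.Prime) :
    subsetWeight y V = y ^ #V * (1 / (∏ p ∈ V, p).totient) := by
  rw [subsetWeight, totient_prod_of_primes hV, prod_div_distrib, prod_const, mul_one_div]

theorem subsetWeight_nonneg (hy : 0 ≤ y) (hV : ∀ p ∈ V, p.Prime) : 0 ≤ subsetWeight y V := by
  rw [subsetWeight_eq_pow_div_totient hV]
  positivity

theorem prod_sieve_weight_eq_pow_windowOmega (y w z : ℝ) (m : ℕ) :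
    ∏ p ∈ primesUpTo z with p ∣ m, (1 - if w < p then 1 - y else 0) = y ^ windowOmega w z m := by
  have hterm : ∀ p : ℕ, (1 - if w < p then 1 - y else 0) = if w < p then y else 1 := fun p => by
    split_ifs <;> ring
  rw [prod_congr rfl fun p _ => hterm p, ← prod_filter, prod_const, filter_comm,
    filter_lt_primesUpTo, windowOmega]

theorem card_add_windowOmega_le (hV : V ⊆ primesIoc w t) (hzt : z ≤ t) {m : ℕ}
    (hsq : ∀ q : ℕ, w < q → ¬q ^ 2 ∣ (∏ p ∈ V, p) * m) :
    #V + windowOmega w z m ≤ windowOmega w t ((∏ p ∈ V, p) * m) := by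
  have hdisj : Disjoint V {q ∈ primesIoc w z | q ∣ m} :=
    disjoint_left.2 fun q hqV hq => by
      refine hsq q (mem_primesIoc.1 (hV hqV)).2.1 ?_
      rw [sq]
      exact mul_dvd_mul (dvd_prod_of_mem _ hqV) (mem_filter.1 hq).2
  rw [windowOmega, ← card_union_of_disjoint hdisj]
  refine card_le_card (union_subset (fun q hq => ?_) fun q hq => ?_)
  · exact mem_filter.2 ⟨hV hq, (dvd_prod_of_mem _ hq).mul_right m⟩
  · obtain ⟨hq, hqm⟩ := mem_filter.1 hq
    rw [mem_primesIoc] at hq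
    exact mem_filter.2 ⟨mem_primesIoc.2 ⟨hq.1, hq.2.1, hq.2.2.trans hzt⟩, hqm.mul_left _⟩

theorem sum_prime_pow_windowOmega_le (hy : 0 ≤ y) (hy1 : y ≤ 3 / 4) (hw : 2 ≤ w) (hwz : w ≤ z)
    {D : ℕ} (hD : D ≠ 0) (ht : D * z ^ 1001 ≤ t) :
    ∑ m ∈ Ioc 0 ⌊t / D⌋₊ with (D * m + 1).Prime, y ^ windowOmega w z m ≤
      3 * exp 19 * (t / log z) * (log w / log z) ^ (1 - y) * (1 / D.totient) := by
  have hlogw : 0 < log w := log_pos (by linarith)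
  have hlogz : 0 < log z := log_pos (by linarith)
  have hsieve := sum_prime_prod_one_sub_le_div_log
    (isSieveWeight_ite (c := 1 - y) (P := fun p => w < p) (by linarith) (by linarith)
      (by push_cast; linarith)) hD (hw.trans hwz) ht
  simp only [prod_sieve_weight_eq_pow_windowOmega] at hsieve
  have hsum : ∑ p ∈ primesUpTo z, (if w < p then 1 - y else 0) / (p : ℝ) =
      (1 - y) * ∑ p ∈ primesIoc w z, (1 : ℝ) / p := by
    simp only [ite_div, zero_div]
    rw [← sum_filter, filter_lt_primesUpTo, mul_sum]
    exact sum_congr rfl fun p _ => (mul_one_div _ _).symm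
  have hexp : exp (-∑ p ∈ primesUpTo z, (if w < p then 1 - y else 0) / (p : ℝ)) ≤
      exp 9 * (log w / log z) ^ (1 - y) := by
    have hmertens := (abs_le.1 (abs_sum_inv_primesIoc_sub_log_le hw hwz)).1
    rw [← inv_div (log w), log_inv] at hmertens
    rw [rpow_def_of_pos (by positivity), ← exp_add, exp_le_exp, hsum]
    nlinarith
  have ht0 : 0 ≤ t := le_trans (mul_nonneg D.cast_nonneg (pow_nonneg (by linarith) _)) ht
  calc _ ≤ _ := hsieve
    _ ≤ 3 * exp 10 * (t / log z) * (1 / D.totient) *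
          (exp 9 * (log w / log z) ^ (1 - y)) := by gcongr
    _ = _ := by
        rw [show (19 : ℝ) = 10 + 9 by norm_num, exp_add]
        ring

theorem sum_sub_one_div_le {G : Finset ℕ} (hG : G ⊆ primesUpTo t) {D : ℕ} (hD : D ≠ 0)
    (hGD : ∀ p ∈ G, D ∣ p - 1) {f : ℕ → ℝ} (hf : ∀ m, 0 ≤ f m) :
    ∑ p ∈ G, f ((p - 1) / D) ≤ ∑ m ∈ Ioc 0 ⌊t / D⌋₊ with (D * m + 1).Prime, f m := by
  have hinj : Set.InjOn (fun p => (p - 1) / D) G := fun p hp q hq h => by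
    have := (mem_primesUpTo.1 (hG hp)).1.pos
    have := (mem_primesUpTo.1 (hG hq)).1.pos
    have := Nat.mul_div_cancel' (hGD p hp)
    have := Nat.mul_div_cancel' (hGD q hq)
    simp only at h
    rw [h] at *
    lia
  rw [← sum_image (g := fun p => (p - 1) / D) hinj]
  refine sum_le_sum_of_subset_of_nonneg (image_subset_iff.2 fun p hp => ?_) fun m _ _ => hf m
  obtain ⟨hprime, hpt⟩ := mem_primesUpTo.1 (hG hp)
  have := hprime.two_le
  have hDp := Nat.mul_div_cancel' (hGD p hp)
  refine mem_filter.2 ⟨mem_Ioc.2 ⟨Nat.pos_of_ne_zero fun h => ?_, Nat.le_floor ?_⟩, ?_⟩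
  · rw [h] at hDp
    lia
  · rw [le_div_iff₀ (mod_cast Nat.pos_of_ne_zero hD), mul_comm]
    exact le_trans (mod_cast by lia) hpt
  · rwa [hDp, Nat.sub_add_cancel hprime.one_le]

theorem sum_pow_windowOmega_sub_one_le (hy : 0 ≤ y) (hy1 : y ≤ 3 / 4) (hw : 2 ≤ w) (hwz : w ≤ z)
    (hzt : z ≤ t) (hV : V ⊆ primesIoc w t) (ht : (∏ p ∈ V, (p : ℝ)) * z ^ 1001 ≤ t) :
    ∑ p ∈ primesSquarefreeAbove w t with (∏ q ∈ V, q) ∣ p - 1, y ^ windowOmega w t (p - 1) ≤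
      3 * exp 19 * (t / log z) * (log w / log z) ^ (1 - y) * subsetWeight y V := by
  have hVprime := prime_of_mem_primesIoc hV
  have hD0 : ∏ q ∈ V, q ≠ 0 := prod_ne_zero_iff.2 fun q hq => (hVprime q hq).ne_zero
  rw [← Nat.cast_prod] at ht
  set D := ∏ q ∈ V, q
  set G := {p ∈ primesSquarefreeAbove w t | D ∣ p - 1}
  have hGD : ∀ p ∈ G, D ∣ p - 1 := fun p hp => (mem_filter.1 hp).2
  have hG : G ⊆ primesUpTo t := (filter_subset _ _).trans (filter_subset _ _)
  have hpow : ∀ p ∈ G, y ^ windowOmega w t (p - 1) ≤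
      y ^ #V * y ^ windowOmega w z ((p - 1) / D) := fun p hp => by
    have hDp := Nat.mul_div_cancel' (hGD p hp)
    have hsq := (mem_filter.1 (mem_filter.1 hp).1).2
    rw [← pow_add]
    refine pow_le_pow_of_le_one hy (by linarith) ?_
    have := card_add_windowOmega_le hV hzt (m := (p - 1) / D) (by rwa [hDp])
    rwa [hDp] at this
  calc _ ≤ ∑ p ∈ G, y ^ #V * y ^ windowOmega w z ((p - 1) / D) := sum_le_sum hpow
    _ = y ^ #V * ∑ p ∈ G, y ^ windowOmega w z ((p - 1) / D) := (mul_sum _ _ _).symm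
    _ ≤ y ^ #V * ∑ m ∈ Ioc 0 ⌊t / D⌋₊ with (D * m + 1).Prime, y ^ windowOmega w z m := by
        gcongr
        exact sum_sub_one_div_le hG hD0 hGD fun m => pow_nonneg hy (windowOmega w z m)
    _ ≤ y ^ #V * (3 * exp 19 * (t / log z) * (log w / log z) ^ (1 - y) * (1 / D.totient)) := by
        gcongr
        exact sum_prime_pow_windowOmega_le hy hy1 hw hwz hD0 ht
    _ = _ := by
        rw [subsetWeight_eq_pow_div_totient hVprime]
        ring

theorem sum_card_mul_pow_windowOmega_le (hy : 0 ≤ y) (hy1 : y ≤ 3 / 4) (hw : 2 ≤ w) (hwz : w ≤ z)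
    (hzt : z ≤ t) {W : Finset (Finset ℕ)} (hW : W ⊆ (primesIoc w t).powerset)
    (ht : ∀ V ∈ W, (∏ p ∈ V, (p : ℝ)) * z ^ 1001 ≤ t) :
    ∑ p ∈ primesSquarefreeAbove w t,
        #{V ∈ W | (∏ q ∈ V, q) ∣ p - 1} * y ^ windowOmega w t (p - 1) ≤
      3 * exp 19 * (t / log z) * (log w / log z) ^ (1 - y) * ∑ V ∈ W, subsetWeight y V := by
  calc _ = ∑ V ∈ W, ∑ p ∈ primesSquarefreeAbove w t with (∏ q ∈ V, q) ∣ p - 1,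
          y ^ windowOmega w t (p - 1) := by
        simp only [← nsmul_eq_mul, ← sum_const, sum_filter]
        exact sum_comm
    _ ≤ ∑ V ∈ W, 3 * exp 19 * (t / log z) * (log w / log z) ^ (1 - y) * subsetWeight y V :=
        sum_le_sum fun V hV =>
          sum_pow_windowOmega_sub_one_le hy hy1 hw hwz hzt (mem_powerset.1 (hW hV)) (ht V hV)
    _ = _ := (mul_sum _ _ _).symm

theorem one_div_prime_sub_one_le {p : ℕ} (hp : p.Prime) :
    1 / ((p : ℝ) - 1) ≤ 1 / p + 2 * (1 / (p : ℝ) ^ 2) := by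
  have hp2 : (2 : ℝ) ≤ p := mod_cast hp.two_le
  rw [div_le_iff₀ (by linarith), ← sub_nonneg]
  have : (1 / p + 2 * (1 / (p : ℝ) ^ 2)) * (p - 1) - 1 = (p - 2) / (p : ℝ) ^ 2 := by
    field_simp
    ring
  rw [this]
  exact div_nonneg (by linarith) (by positivity)

theorem sum_powerset_subsetWeight_le (hy : 0 ≤ y) (hy1 : y ≤ 1) (hw : 2 ≤ w) (hwt : w ≤ t) :
    ∑ V ∈ (primesIoc w t).powerset, subsetWeight y V ≤ exp 11 * (log t / log w) ^ y := by
  have hlogw : 0 < log w := log_pos (by linarith)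
  have hlogt : 0 < log t := log_pos (by linarith)
  have hfactor : ∀ p ∈ primesIoc w t,
      1 + y / ((p : ℝ) - 1) ≤ exp (y * (1 / p + 2 * (1 / (p : ℝ) ^ 2))) := fun p hp => by
    have := mul_le_mul_of_nonneg_left (one_div_prime_sub_one_le (mem_primesIoc.1 hp).1) hy
    rw [mul_one_div] at this
    linarith [add_one_le_exp (y * (1 / p + 2 * (1 / (p : ℝ) ^ 2)))]
  have hmertens := (abs_le.1 (abs_sum_inv_primesIoc_sub_log_le hw hwt)).2
  have hsq : ∑ p ∈ primesIoc w t, 1 / (p : ℝ) ^ 2 ≤ 1 := by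
    refine le_trans ?_ (sum_inv_sq_primesUpTo_le t)
    rw [← filter_lt_primesUpTo]
    exact sum_le_sum_of_subset_of_nonneg (filter_subset _ _) fun _ _ _ => by positivity
  calc ∑ V ∈ (primesIoc w t).powerset, subsetWeight y V
      = ∏ p ∈ primesIoc w t, (1 + y / ((p : ℝ) - 1)) := (prod_one_add _).symm
    _ ≤ ∏ p ∈ primesIoc w t, exp (y * (1 / p + 2 * (1 / (p : ℝ) ^ 2))) :=
        prod_le_prod (fun p hp => by
          have : (1 : ℝ) ≤ p := mod_cast (mem_primesIoc.1 hp).1.one_le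
          have := div_nonneg hy (sub_nonneg.2 this)
          positivity) hfactor
    _ = exp (y * (∑ p ∈ primesIoc w t, (1 : ℝ) / p +
          2 * ∑ p ∈ primesIoc w t, 1 / (p : ℝ) ^ 2)) := by
        rw [← exp_sum, ← mul_sum, sum_add_distrib, ← mul_sum]
    _ ≤ exp (11 + log (log t / log w) * y) := by
        gcongr
        nlinarith
    _ = exp 11 * (log t / log w) ^ y := by
        rw [exp_add, rpow_def_of_pos (by positivity)]

theorem sum_log_div_filter_le (hQ : ∀ p ∈ Q, p.Prime) (hY : 1 ≤ Y) (hYZ : Y ≤ Z) {m : ℝ}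
    (hm : 1 ≤ m) :
    ∑ p ∈ Q with Y < (p : ℕ) * m ∧ p * m ≤ Z, log p / p ≤ log (Z / Y) + 6 := by
  have hsub : ∀ p ∈ Q, Y < p * m ∧ p * m ≤ Z → p ∈ primesIoc (Y / m) (Z / m) :=
    fun p hp h => mem_primesIoc.2
      ⟨hQ p hp, (div_lt_iff₀ (by linarith)).2 h.1, (le_div_iff₀ (by linarith)).2 h.2⟩
  have hterm : ∀ p : ℕ, 0 ≤ log p / p := fun p => div_nonneg (log_natCast_nonneg p) p.cast_nonneg
  have hsum : ∀ P : Finset ℕ, (∀ p ∈ Q, Y < p * m ∧ p * m ≤ Z → p ∈ P) →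
      ∑ p ∈ Q with Y < (p : ℕ) * m ∧ p * m ≤ Z, log p / p ≤ ∑ p ∈ P, log p / p := fun P hP =>
    sum_le_sum_of_subset_of_nonneg
      (fun p hp => hP p (mem_filter.1 hp).1 (mem_filter.1 hp).2) fun p _ _ => hterm p
  have hlog : 0 ≤ log (Z / Y) := log_nonneg ((one_le_div (by linarith)).2 hYZ)
  rcases le_or_gt 1 (Y / m) with hYm | hYm
  · refine (hsum _ hsub).trans ((sum_log_div_primesIoc_le hYm (by gcongr)).trans_eq ?_)
    rw [div_div_div_cancel_right₀ (by linarith)]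
  rcases lt_or_ge (Z / m) 1 with hZm | hZm
  · refine (hsum ∅ fun p hp h => ?_).trans ?_
    · have := (mem_primesIoc.1 (hsub p hp h)).2.2
      have : (1 : ℝ) ≤ p := mod_cast (hQ p hp).one_le
      linarith
    · rw [sum_empty]
      linarith
  · have hmY : Z / m ≤ Z / Y := by
      rw [div_lt_one (by linarith)] at hYm
      gcongr
      linarith
    have hupTo := hsum (primesUpTo (Z / m)) fun p hp h =>
      mem_primesUpTo.2 ⟨hQ p hp, (mem_primesIoc.1 (hsub p hp h)).2.2⟩
    linarith [sum_log_div_primesUpTo_le hZm, log_le_log (by linarith) hmY]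

end WeightedSubsets

section SubsetProducts

open Finset Real

variable {y w z t Y Z : ℝ} {V Q : Finset ℕ}

/-- The subsets of `Q` whose product lies in `(Y, Z]`. -/
noncomputable def subsetsWithProdIn (Q : Finset ℕ) (Y Z : ℝ) : Finset (Finset ℕ) :=
  {V ∈ Q.powerset | Y < ∏ p ∈ V, (p : ℝ) ∧ ∏ p ∈ V, (p : ℝ) ≤ Z}

theorem mem_subsetsWithProdIn :
    V ∈ subsetsWithProdIn Q Y Z ↔ V ⊆ Q ∧ Y < ∏ p ∈ V, (p : ℝ) ∧ ∏ p ∈ V, (p : ℝ) ≤ Z := by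
  rw [subsetsWithProdIn, mem_filter, mem_powerset]

theorem sum_subsetWeight_of_mem_le (hy : 0 ≤ y) (hQ : ∀ p ∈ Q, p.Prime) {p : ℕ} (hp : p ∈ Q) :
    ∑ V ∈ subsetsWithProdIn Q Y Z with p ∈ V, subsetWeight y V ≤
      y / ((p : ℝ) - 1) * ∑ U ∈ Q.powerset with
        Y < p * ∏ q ∈ U, ((q : ℕ) : ℝ) ∧ p * ∏ q ∈ U, (q : ℝ) ≤ Z, subsetWeight y U := by
  have hinj : Set.InjOn (fun V : Finset ℕ => V.erase p)
      ({V ∈ subsetsWithProdIn Q Y Z | p ∈ V} : Finset (Finset ℕ)) := fun V hV V' hV' h => by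
    have := congrArg (insert p) h
    simpa only [insert_erase (mem_filter.1 hV).2, insert_erase (mem_filter.1 hV').2] using this
  calc _ = ∑ V ∈ subsetsWithProdIn Q Y Z with p ∈ V,
          y / ((p : ℝ) - 1) * subsetWeight y (V.erase p) :=
        sum_congr rfl fun V hV => (mul_prod_erase V _ (mem_filter.1 hV).2).symm
    _ = y / ((p : ℝ) - 1) *
          ∑ U ∈ {V ∈ subsetsWithProdIn Q Y Z | p ∈ V}.image fun V => V.erase p,
            subsetWeight y U := by rw [sum_image hinj, mul_sum]
    _ ≤ _ := by
        have : (1 : ℝ) ≤ p := mod_cast (hQ p hp).one_le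
        refine mul_le_mul_of_nonneg_left (sum_le_sum_of_subset_of_nonneg
          (image_subset_iff.2 fun V hV => ?_) fun U hU _ => ?_) (div_nonneg hy (by linarith))
        · obtain ⟨hV, hpV⟩ := mem_filter.1 hV
          obtain ⟨hVQ, hprod⟩ := mem_subsetsWithProdIn.1 hV
          rw [mem_filter, mem_powerset, mul_prod_erase V (fun q : ℕ => (q : ℝ)) hpV]
          exact ⟨(erase_subset p V).trans hVQ, hprod⟩
        · exact subsetWeight_nonneg hy fun q hq =>
            hQ q (mem_powerset.1 (mem_filter.1 hU).1 hq)

theorem log_mul_sum_subsetWeight_le_sum_log_mul (hy : 0 ≤ y) (hQ : ∀ p ∈ Q, p.Prime) (hY : 0 < Y) :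
    log Y * ∑ V ∈ subsetsWithProdIn Q Y Z, subsetWeight y V ≤
      ∑ p ∈ Q, log p * ∑ V ∈ subsetsWithProdIn Q Y Z with p ∈ V, subsetWeight y V := by
  have hlog : ∀ V ∈ subsetsWithProdIn Q Y Z,
      log Y * subsetWeight y V ≤ ∑ p ∈ V, log p * subsetWeight y V := fun V hV => by
    obtain ⟨hVQ, hYV, -⟩ := mem_subsetsWithProdIn.1 hV
    rw [← sum_mul, ← log_prod fun p hp => Nat.cast_ne_zero.2 (hQ p (hVQ hp)).ne_zero]
    gcongr
    exact subsetWeight_nonneg hy fun p hp => hQ p (hVQ hp)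
  rw [mul_sum]
  refine (sum_le_sum hlog).trans_eq ?_
  simp only [mul_sum]
  refine sum_comm' fun V p => ?_
  rw [mem_filter]
  exact ⟨fun h => ⟨h, (mem_subsetsWithProdIn.1 h.1).1 h.2⟩, fun h => h.1⟩

theorem sum_log_mul_div_filter_le (hy1 : y ≤ 1) (hQ : ∀ p ∈ Q, p.Prime) (hY : 1 ≤ Y) (hYZ : Y ≤ Z)
    {m : ℝ} (hm : 1 ≤ m) :
    ∑ p ∈ Q with Y < (p : ℕ) * m ∧ p * m ≤ Z, log p * (y / ((p : ℝ) - 1)) ≤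
      2 * (log (Z / Y) + 6) := by
  have hterm : ∀ p ∈ Q, log p * (y / ((p : ℝ) - 1)) ≤ 2 * (log p / p) := fun p hp => by
    have hp2 : (2 : ℝ) ≤ p := mod_cast (hQ p hp).two_le
    have : y / ((p : ℝ) - 1) ≤ 2 / p := by
      rw [div_le_div_iff₀ (by linarith) (by linarith)]
      nlinarith
    calc _ ≤ log p * (2 / p) := by
          gcongr
      _ = _ := by ring
  refine (sum_le_sum fun p hp => hterm p (mem_filter.1 hp).1).trans ?_
  rw [← mul_sum]
  gcongr
  exact sum_log_div_filter_le hQ hY hYZ hm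

-- Counting each `V` with weight `log (∏ p ∈ V, p) = ∑ p ∈ V, log p` saves a factor `log Y`.
theorem log_mul_sum_subsetWeight_le (hy : 0 ≤ y) (hy1 : y ≤ 1) (hQ : ∀ p ∈ Q, p.Prime)
    (hY : 1 ≤ Y) (hYZ : Y ≤ Z) :
    log Y * ∑ V ∈ subsetsWithProdIn Q Y Z, subsetWeight y V ≤
      2 * (log (Z / Y) + 6) * ∑ V ∈ Q.powerset, subsetWeight y V := by
  calc _ ≤ ∑ p ∈ Q, log p * ∑ V ∈ subsetsWithProdIn Q Y Z with p ∈ V, subsetWeight y V :=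
        log_mul_sum_subsetWeight_le_sum_log_mul hy hQ (by linarith)
    _ ≤ ∑ p ∈ Q, log p * (y / ((p : ℝ) - 1) * ∑ U ∈ Q.powerset with
          Y < p * ∏ q ∈ U, ((q : ℕ) : ℝ) ∧ p * ∏ q ∈ U, (q : ℝ) ≤ Z, subsetWeight y U) :=
        sum_le_sum fun p hp => mul_le_mul_of_nonneg_left (sum_subsetWeight_of_mem_le hy hQ hp)
          (log_natCast_nonneg p)
    _ = ∑ U ∈ Q.powerset, (∑ p ∈ Q with
          Y < (p : ℕ) * ∏ q ∈ U, (q : ℝ) ∧ p * ∏ q ∈ U, (q : ℝ) ≤ Z,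
            log p * (y / ((p : ℝ) - 1))) * subsetWeight y U := by
        simp only [← mul_assoc, mul_sum, sum_mul]
        refine sum_comm' fun p U => ?_
        simp only [mem_filter]
        tauto
    _ ≤ ∑ U ∈ Q.powerset, 2 * (log (Z / Y) + 6) * subsetWeight y U := by
        refine sum_le_sum fun U hU => mul_le_mul_of_nonneg_right ?_ (?_ : 0 ≤ subsetWeight y U)
        · refine sum_log_mul_div_filter_le hy1 hQ hY hYZ ?_
          exact Finset.one_le_prod fun q hq => mod_cast (hQ q (mem_powerset.1 hU hq)).one_le
        · exact subsetWeight_nonneg hy fun p hp => hQ p (mem_powerset.1 hU hp)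
    _ = _ := (mul_sum _ _ _).symm

theorem two_pow_card_le_two_mul_card_prod_le_sqrt {ι : Type*} {f : ι → ℝ} {F : Finset ι}
    (hF : ∏ i ∈ F, f i ≤ t) : 2 ^ #F ≤ 2 * #{V ∈ F.powerset | ∏ i ∈ V, f i ≤ √t} := by
  set S := {V ∈ F.powerset | ∏ i ∈ V, f i ≤ √t}
  have hcover : F.powerset ⊆ S ∪ S.image fun V => F \ V := fun V hV => by
    have hVF := mem_powerset.1 hV
    rcases le_or_gt (∏ i ∈ V, f i) (√t) with h | h
    · exact mem_union_left _ (mem_filter.2 ⟨hV, h⟩)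
    · refine mem_union_right _ (mem_image.2 ⟨F \ V, mem_filter.2
        ⟨mem_powerset.2 sdiff_subset, ?_⟩, Finset.sdiff_sdiff_eq_self hVF⟩)
      by_contra! h'
      have hlt := mul_lt_mul'' h' h (sqrt_nonneg t) (sqrt_nonneg t)
      rw [prod_sdiff hVF] at hlt
      have : t ≤ √t * √t := by
        rcases le_total 0 t with ht | ht
        · exact (mul_self_sqrt ht).ge
        · exact ht.trans (mul_self_nonneg _)
      linarith
  calc 2 ^ #F = #F.powerset := (card_powerset F).symm
    _ ≤ #S + #(S.image fun V => F \ V) := (card_le_card hcover).trans (card_union_le _ _)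
    _ ≤ 2 * #S := by
        rw [two_mul]
        exact Nat.add_le_add_left card_image_le _

end SubsetProducts

section DivisorsInWindow

open Finset Real

variable {y w z t Y Z S K : ℝ}

theorem two_pow_windowOmega_le (w : ℝ) {n : ℕ} (hn : n ≠ 0) (hnt : n ≤ t) :
    2 ^ windowOmega w t n ≤
      2 * #{V ∈ subsetsWithProdIn (primesIoc w t) 0 √t | (∏ q ∈ V, q) ∣ n} := by
  set F := {q ∈ primesIoc w t | q ∣ n}
  have hprime : ∀ q ∈ F, q.Prime := fun q hq => (mem_primesIoc.1 (mem_filter.1 hq).1).1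
  have hdvd : ∀ V ⊆ F, (∏ q ∈ V, q) ∣ n := fun V hV => Finset.prod_primes_dvd n
    (fun q hq => (hprime q (hV hq)).prime) fun q hq => (mem_filter.1 (hV hq)).2
  have hF : ∏ q ∈ F, (q : ℝ) ≤ t := by
    refine le_trans ?_ hnt
    rw [← Nat.cast_prod]
    exact_mod_cast Nat.le_of_dvd hn.bot_lt (hdvd F Subset.rfl)
  refine (two_pow_card_le_two_mul_card_prod_le_sqrt hF).trans
    (Nat.mul_le_mul_left 2 (card_le_card fun V hV => ?_))
  obtain ⟨hVF, hprod⟩ := mem_filter.1 hV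
  rw [mem_powerset] at hVF
  refine mem_filter.2 ⟨mem_subsetsWithProdIn.2 ⟨hVF.trans (filter_subset _ _), ?_, hprod⟩,
    hdvd V hVF⟩
  exact prod_pos fun q hq => Nat.cast_pos.2 (hprime q (hVF hq)).pos

theorem two_mul_rpow_le_of_lt_windowOmega (hy : 1 / 2 ≤ y) {n : ℕ} (hn : n ≠ 0) (hnt : n ≤ t)
    (hK : K < windowOmega w t n) :
    (2 * y) ^ K ≤ 2 * (#{V ∈ subsetsWithProdIn (primesIoc w t) 0 √t | (∏ q ∈ V, q) ∣ n} *
      y ^ windowOmega w t n) := by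
  have hpow := two_pow_windowOmega_le w hn hnt
  rw [← mul_assoc]
  calc (2 * y) ^ K ≤ (2 * y) ^ (windowOmega w t n : ℝ) :=
        rpow_le_rpow_of_exponent_le (by linarith) hK.le
    _ = 2 ^ windowOmega w t n * y ^ windowOmega w t n := by rw [rpow_natCast, mul_pow]
    _ ≤ _ := by
        gcongr
        exact_mod_cast hpow

theorem card_lt_windowOmega_mul_le (hy : 1 / 2 ≤ y) (hy1 : y ≤ 3 / 4) (hw : 2 ≤ w) (hwz : w ≤ z)
    (hzt : z ≤ t) (ht : √t * z ^ 1001 ≤ t) (K : ℝ) :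
    #{p ∈ primesSquarefreeAbove w t | K < windowOmega w t (p - 1)} * (2 * y) ^ K ≤
      6 * exp 30 * (t / log z) * (log w / log z) ^ (1 - y) * (log t / log w) ^ y := by
  set W := subsetsWithProdIn (primesIoc w t) 0 √t
  have hlogw : 0 < log w := log_pos (by linarith)
  have hlogz : 0 < log z := log_pos (by linarith)
  have hW : ∑ V ∈ W, subsetWeight y V ≤ exp 11 * (log t / log w) ^ y :=
    (sum_le_sum_of_subset_of_nonneg (filter_subset _ _) fun V hV _ =>
      subsetWeight_nonneg (by linarith) (prime_of_mem_primesIoc (mem_powerset.1 hV))).trans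
      (sum_powerset_subsetWeight_le (by linarith) (by linarith) hw (hwz.trans hzt))
  have hmarkov : ∀ p ∈ {p ∈ primesSquarefreeAbove w t | K < windowOmega w t (p - 1)},
      (2 * y) ^ K ≤ 2 * (#{V ∈ W | (∏ q ∈ V, q) ∣ p - 1} * y ^ windowOmega w t (p - 1)) :=
    fun p hp => by
      obtain ⟨hp, hK⟩ := mem_filter.1 hp
      obtain ⟨hpprime, hpt⟩ := mem_primesUpTo.1 (mem_filter.1 hp).1
      exact two_mul_rpow_le_of_lt_windowOmega hy (Nat.sub_ne_zero_of_lt hpprime.one_lt)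
        (le_trans (mod_cast Nat.sub_le p 1) hpt) hK
  rw [← nsmul_eq_mul]
  calc _ ≤ ∑ p ∈ primesSquarefreeAbove w t with K < windowOmega w t (p - 1),
          2 * (#{V ∈ W | (∏ q ∈ V, q) ∣ p - 1} * y ^ windowOmega w t (p - 1)) :=
        card_nsmul_le_sum _ _ _ hmarkov
    _ ≤ 2 * ∑ p ∈ primesSquarefreeAbove w t,
          #{V ∈ W | (∏ q ∈ V, q) ∣ p - 1} * y ^ windowOmega w t (p - 1) := by
        rw [← mul_sum]
        gcongr
        exact filter_subset _ _
    _ ≤ 2 * (3 * exp 19 * (t / log z) * (log w / log z) ^ (1 - y) *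
          (exp 11 * (log t / log w) ^ y)) := by
        refine mul_le_mul_of_nonneg_left ((sum_card_mul_pow_windowOmega_le (by linarith) hy1
          hw hwz hzt (filter_subset _ _) fun V hV => ?_).trans
          (mul_le_mul_of_nonneg_left hW ?_)) zero_le_two
        · exact (mul_le_mul_of_nonneg_right (mem_subsetsWithProdIn.1 hV).2.2
            (pow_nonneg (by linarith) _)).trans ht
        · have : 0 ≤ t := by linarith
          positivity
    _ = _ := by
        rw [show (30 : ℝ) = 19 + 11 by norm_num, exp_add]
        ring

theorem log_mul_sum_subsetsWithProdIn_primesIoc_le (hy : 0 ≤ y) (hy1 : y ≤ 1) (hw : 2 ≤ w)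
    (hwt : w ≤ t) (hY : 1 ≤ Y) (hYZ : Y ≤ Z) :
    log Y * ∑ V ∈ subsetsWithProdIn (primesIoc w t) Y Z, subsetWeight y V ≤
      2 * (log (Z / Y) + 6) * (exp 11 * (log t / log w) ^ y) := by
  have : 0 ≤ log (Z / Y) := log_nonneg ((one_le_div (by linarith)).2 hYZ)
  exact (log_mul_sum_subsetWeight_le hy hy1 (prime_of_mem_primesIoc Subset.rfl) hY hYZ).trans
    (mul_le_mul_of_nonneg_left (sum_powerset_subsetWeight_le hy hy1 hw hwt) (by positivity))

theorem log_mul_card_windowOmega_le_mul_le (hy : 0 < y) (hy1 : y ≤ 3 / 4) (hw : 2 ≤ w)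
    (hwz : w ≤ z) (hzt : z ≤ t) (hY : 1 ≤ Y) (hYZ : Y ≤ Z) (ht : Z * z ^ 1001 ≤ t) (K : ℝ) :
    log Y * (#{p ∈ primesSquarefreeAbove w t | windowOmega w t (p - 1) ≤ K ∧
        ∃ V ∈ subsetsWithProdIn (primesIoc w t) Y Z, (∏ q ∈ V, q) ∣ p - 1} * y ^ K) ≤
      6 * exp 30 * (t / log z) * (log w / log z) ^ (1 - y) * (log t / log w) ^ y *
        (log (Z / Y) + 6) := by
  set W := subsetsWithProdIn (primesIoc w t) Y Z
  have hlogw : 0 < log w := log_pos (by linarith)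
  have hlogz : 0 < log z := log_pos (by linarith)
  have hterm : ∀ p ∈ {p ∈ primesSquarefreeAbove w t | windowOmega w t (p - 1) ≤ K ∧
        ∃ V ∈ W, (∏ q ∈ V, q) ∣ p - 1},
      y ^ K ≤ #{V ∈ W | (∏ q ∈ V, q) ∣ p - 1} * y ^ windowOmega w t (p - 1) := fun p hp => by
    obtain ⟨-, hK, V, hV, hVp⟩ := mem_filter.1 hp
    have hcard : 0 < #{V ∈ W | (∏ q ∈ V, q) ∣ p - 1} :=
      card_pos.2 ⟨V, mem_filter.2 ⟨hV, hVp⟩⟩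
    calc y ^ K ≤ y ^ (windowOmega w t (p - 1) : ℝ) :=
          rpow_le_rpow_of_exponent_ge hy (by linarith) hK
      _ = y ^ windowOmega w t (p - 1) := rpow_natCast _ _
      _ ≤ _ := le_mul_of_one_le_left (by positivity) (mod_cast hcard)
  have hcount : #{p ∈ primesSquarefreeAbove w t | windowOmega w t (p - 1) ≤ K ∧
        ∃ V ∈ W, (∏ q ∈ V, q) ∣ p - 1} * y ^ K ≤
      3 * exp 19 * (t / log z) * (log w / log z) ^ (1 - y) * ∑ V ∈ W, subsetWeight y V := by
    rw [← nsmul_eq_mul]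
    refine (card_nsmul_le_sum _ _ _ hterm).trans ((sum_le_sum_of_subset_of_nonneg
      (filter_subset _ _) fun p _ _ => by positivity).trans
      (sum_card_mul_pow_windowOmega_le hy.le hy1 hw hwz hzt (filter_subset _ _) fun V hV => ?_))
    exact (mul_le_mul_of_nonneg_right (mem_subsetsWithProdIn.1 hV).2.2
      (pow_nonneg (by linarith) _)).trans ht
  have : 0 ≤ t := by linarith
  calc _ ≤ log Y * (3 * exp 19 * (t / log z) * (log w / log z) ^ (1 - y) *
          ∑ V ∈ W, subsetWeight y V) := mul_le_mul_of_nonneg_left hcount (log_nonneg hY)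
    _ = 3 * exp 19 * (t / log z) * (log w / log z) ^ (1 - y) *
          (log Y * ∑ V ∈ W, subsetWeight y V) := by ring
    _ ≤ 3 * exp 19 * (t / log z) * (log w / log z) ^ (1 - y) *
          (2 * (log (Z / Y) + 6) * (exp 11 * (log t / log w) ^ y)) := by
        refine mul_le_mul_of_nonneg_left (log_mul_sum_subsetsWithProdIn_primesIoc_le hy.le
          (by linarith) hw (hwz.trans hzt) hY hYZ) (by positivity)
    _ = _ := by
        rw [show (30 : ℝ) = 19 + 11 by norm_num, exp_add]
        ring

theorem exists_mem_subsetsWithProdIn_of_dvd_sub_one {p d : ℕ} (hS : 0 < S)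
    (hp : p ∈ primesSquarefreeAbove w t) (hsmooth : p ∉ primesWithSmoothDivisor t w S)
    (hd : d ∣ p - 1) (hYd : Y * S < d) (hdZ : d ≤ Z) :
    ∃ V ∈ subsetsWithProdIn (primesIoc w t) Y Z, (∏ q ∈ V, q) ∣ p - 1 := by
  obtain ⟨hp, hsq⟩ := mem_filter.1 hp
  obtain ⟨hpprime, hpt⟩ := mem_primesUpTo.1 hp
  have hp0 : 0 < p - 1 := Nat.sub_pos_of_lt hpprime.one_lt
  set V := {q ∈ primesIoc w t | q ∣ d}
  obtain ⟨s, hs⟩ : (∏ q ∈ V, q) ∣ d := Finset.prod_primes_dvd _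
    (fun q hq => (mem_primesIoc.1 (mem_filter.1 hq).1).1.prime) fun q hq => (mem_filter.1 hq).2
  have hsd : s ∣ d := Dvd.intro_left _ hs.symm
  have hssmooth : ∀ r : ℕ, r.Prime → r ∣ s → r ≤ w := fun r hr hrs => by
    by_contra! hwr
    have hrp : (r : ℝ) ≤ p :=
      mod_cast (Nat.le_of_dvd hp0 ((hrs.trans hsd).trans hd)).trans (Nat.sub_le p 1)
    have hrV : r ∈ V :=
      mem_filter.2 ⟨mem_primesIoc.2 ⟨hr, hwr, hrp.trans hpt⟩, hrs.trans hsd⟩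
    refine hsq r hwr (dvd_trans ?_ hd)
    rw [hs, sq]
    exact mul_dvd_mul (dvd_prod_of_mem _ hrV) hrs
  have hsS : (s : ℝ) ≤ S := by
    by_contra! hSs
    exact hsmooth (mem_filter.2 ⟨hp, s, hsd.trans hd, hssmooth, hSs⟩)
  have hVd : (∏ q ∈ V, q) ∣ d := Dvd.intro _ hs.symm
  refine ⟨V, mem_subsetsWithProdIn.2 ⟨filter_subset _ _, ?_, ?_⟩, hVd.trans hd⟩
  · refine lt_of_mul_lt_mul_right (hYd.trans_le ?_) hS.le
    calc (d : ℝ) = (∏ q ∈ V, (q : ℝ)) * s := by rw [← Nat.cast_prod, ← Nat.cast_mul, ← hs]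
      _ ≤ _ := by gcongr
  · refine le_trans ?_ hdZ
    rw [← Nat.cast_prod]
    exact_mod_cast Nat.le_of_dvd (Nat.pos_of_dvd_of_pos hd hp0) hVd

end DivisorsInWindow

section DivisorsNearTwoThirds

open Finset Real

variable {t e : ℝ}

/-- The primes `p ≤ t` such that `p - 1` has a divisor in `(Y, Z]`. -/
noncomputable def primesWithDivisorIn (t Y Z : ℝ) : Finset ℕ :=
  {p ∈ primesUpTo t | ∃ d : ℕ, d ∣ p - 1 ∧ Y < d ∧ d ≤ Z}

theorem log_bounds_of_le_exp (he : 0 < e) (heη : e ≤ exp (-24)) :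
    24 ≤ -log e ∧ 5000 * e ≤ 1 ∧ -(e * log e) ≤ 1 / 500 := by
  have hlog : 24 ≤ -log e := by linarith [(log_le_iff_le_exp he).2 heη]
  have hexp : e * exp (-log e) = 1 := by rw [exp_neg, exp_log he, mul_inv_cancel₀ he.ne']
  have hpow : (-log e) ^ 4 / 24 ≤ exp (-log e) := by
    simpa [Nat.factorial] using pow_div_factorial_le_exp (-log e) (by linarith) 4
  have hcube : (24 : ℝ) ^ 3 ≤ (-log e) ^ 3 := by gcongr
  have hlin : 576 * -log e ≤ exp (-log e) := by nlinarith
  have he_log : e * (576 * -log e) ≤ 1 := hexp ▸ mul_le_mul_of_nonneg_left hlin he.le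
  exact ⟨hlog, by nlinarith, by linarith⟩

theorem rpow_mul_rpow_pow_le (ht : 1 ≤ t) {s : ℝ} (hs : s ≤ 3 / 4) :
    t ^ s * (t ^ (1 / 5000 : ℝ)) ^ 1001 ≤ t := by
  rw [← rpow_mul_natCast (by linarith), ← rpow_add (by linarith)]
  exact (rpow_le_rpow_of_exponent_le ht (by norm_num; linarith)).trans_eq (rpow_one t)

theorem div_log_rpow (ht : 0 < t) (s : ℝ) : t / log (t ^ s) = s⁻¹ * (t / log t) := by
  rw [log_rpow ht, ← div_div, div_right_comm, div_eq_inv_mul]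

theorem card_primesWithSmoothDivisor_rpow_le (ht : 1 < t) (he : 0 < e) (heη : e ≤ exp (-24))
    (hw : 2 ≤ t ^ e) :
    #(primesWithSmoothDivisor t (t ^ e) (t ^ (-(e * log e) / 3))) ≤
      48 * exp 66 * 5000 * (e ^ (1 / 12 : ℝ) * (t / log t)) := by
  obtain ⟨hlog, he5000, helog⟩ := log_bounds_of_le_exp he heη
  have hlogt : 0 < log t := log_pos ht
  have ht0 : 0 < t := by linarith
  have hwY : (t ^ e) ^ 4 ≤ t ^ (-(e * log e) / 3) := by
    rw [← rpow_mul_natCast ht0.le]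
    refine rpow_le_rpow_of_exponent_le ht.le ?_
    push_cast
    nlinarith
  have hlevel : t ^ (-(e * log e) / 3) * t ^ e * (t ^ (1 / 5000 : ℝ)) ^ 1001 ≤ t := by
    rw [← rpow_add ht0]
    exact rpow_mul_rpow_pow_le ht.le (by linarith)
  refine (card_primesWithSmoothDivisor_le hw (rpow_le_rpow_of_exponent_le ht.le (by linarith)) hwY
    hlevel).trans_eq ?_
  have hexp : exp (-(log (t ^ (-(e * log e) / 3)) / (4 * log (t ^ e)))) = e ^ (1 / 12 : ℝ) := by
    rw [rpow_def_of_pos he, log_rpow ht0, log_rpow ht0]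
    congr 1
    field_simp
    ring
  rw [hexp, div_log_rpow ht0]
  ring

-- `18 / 25` approximates the optimal weight `1 / (2 log 2)`.
theorem rpow_le_rpow_neg_log_div_log_two (he : 0 < e) (he1 : e ≤ 1) :
    e ^ (-(21 / 40) : ℝ) ≤ (2 * (18 / 25) : ℝ) ^ (-log e / log 2) ∧
      e ^ (19 / 40 : ℝ) ≤ (18 / 25 : ℝ) ^ (-log e / log 2) := by
  have hlog2 : 0 < log 2 := log_pos one_lt_two
  have hK : log 2 * (-log e / log 2) = -log e := by field_simp
  have hK0 : 0 ≤ -log e / log 2 := div_nonneg (neg_nonneg.2 (log_nonpos he.le he1)) hlog2.le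
  have hlog : 21 / 40 * log 2 ≤ log (2 * (18 / 25)) := by
    have h := log_le_log (by positivity) (by norm_num : (2 : ℝ) ^ 21 ≤ (2 * (18 / 25)) ^ 40)
    rw [log_pow, log_pow] at h
    push_cast at h
    linarith
  have hmul := mul_le_mul_of_nonneg_right hlog hK0
  have hsplit : log (2 * (18 / 25)) = log 2 + log (18 / 25) := log_mul (by norm_num) (by norm_num)
  rw [rpow_def_of_pos he, rpow_def_of_pos he, rpow_def_of_pos (by norm_num),
    rpow_def_of_pos (by norm_num), exp_le_exp, exp_le_exp]
  constructor
  · linarith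
  · rw [hsplit, add_mul] at hmul
    linarith

theorem sieve_factor_rpow_le (ht : 1 < t) (he : 0 < e) :
    6 * exp 30 * (t / log (t ^ (1 / 5000 : ℝ))) *
        (log (t ^ e) / log (t ^ (1 / 5000 : ℝ))) ^ (1 - 18 / 25 : ℝ) *
        (log t / log (t ^ e)) ^ (18 / 25 : ℝ) ≤
      6 * exp 30 * 5000 ^ 2 * (t / log t) * e ^ (-(11 / 25) : ℝ) := by
  have hlogt : 0 < log t := log_pos ht
  have ht0 : 0 < t := by linarith
  have hwz : log (t ^ e) / log (t ^ (1 / 5000 : ℝ)) = 5000 * e := by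
    rw [log_rpow ht0, log_rpow ht0]
    field_simp
  have htw : log t / log (t ^ e) = e⁻¹ := by
    rw [log_rpow ht0]
    field_simp
  have h5000 : (5000 : ℝ) ^ (1 - 18 / 25 : ℝ) ≤ 5000 :=
    rpow_le_self_of_one_le (by norm_num) (by norm_num)
  have hexp : e ^ (1 - 18 / 25 : ℝ) * e⁻¹ ^ (18 / 25 : ℝ) = e ^ (-(11 / 25) : ℝ) := by
    rw [inv_rpow he.le, ← rpow_neg he.le, ← rpow_add he]
    norm_num
  rw [hwz, htw, div_log_rpow ht0, mul_rpow (by norm_num) he.le, ← hexp]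
  calc _ = 6 * exp 30 * 5000 * (t / log t) * (e ^ (1 - 18 / 25 : ℝ) * e⁻¹ ^ (18 / 25 : ℝ)) *
          (5000 : ℝ) ^ (1 - 18 / 25 : ℝ) := by
        rw [one_div, inv_inv]
        ring
    _ ≤ 6 * exp 30 * 5000 * (t / log t) * (e ^ (1 - 18 / 25 : ℝ) * e⁻¹ ^ (18 / 25 : ℝ)) * 5000 := by
        gcongr
    _ = _ := by ring

theorem card_lt_windowOmega_rpow_le (ht : 1 < t) (he : 0 < e) (heη : e ≤ exp (-24))
    (hw : 2 ≤ t ^ e) :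
    #{p ∈ primesSquarefreeAbove (t ^ e) t |
        -log e / log 2 < windowOmega (t ^ e) t (p - 1)} ≤
      6 * exp 30 * 5000 ^ 2 * (t / log t) * e ^ (17 / 200 : ℝ) := by
  obtain ⟨-, he5000, -⟩ := log_bounds_of_le_exp he heη
  have hexp : e ^ (-(11 / 25) : ℝ) = e ^ (17 / 200 : ℝ) * e ^ (-(21 / 40) : ℝ) := by
    rw [← rpow_add he]
    norm_num
  refine le_of_mul_le_mul_right ?_ (rpow_pos_of_pos he (-(21 / 40)))
  calc _ ≤ #{p ∈ primesSquarefreeAbove (t ^ e) t |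
            -log e / log 2 < windowOmega (t ^ e) t (p - 1)} *
          (2 * (18 / 25) : ℝ) ^ (-log e / log 2) := by
        gcongr
        exact (rpow_le_rpow_neg_log_div_log_two he (by linarith)).1
    _ ≤ _ := card_lt_windowOmega_mul_le (by norm_num) (by norm_num) hw
        (rpow_le_rpow_of_exponent_le ht.le (by linarith))
        ((rpow_le_rpow_of_exponent_le ht.le (by norm_num)).trans_eq (rpow_one t))
        (by rw [sqrt_eq_rpow]; exact rpow_mul_rpow_pow_le ht.le (by norm_num)) _
    _ ≤ _ := sieve_factor_rpow_le ht he
    _ = _ := by rw [hexp, ← mul_assoc]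

theorem log_div_rpow_add_six_le (ht : 0 < t) (hw : 2 ≤ t ^ e) (δ : ℝ) :
    log (t ^ (2 / 3 + 5 * e) / t ^ (2 / 3 - e - δ)) + 6 ≤ (15 * e + δ) * log t := by
  have hlog : 2 / 3 ≤ e * log t := by
    rw [← log_rpow ht]
    exact two_thirds_le_log hw
  rw [← rpow_sub ht, log_rpow ht]
  linarith

theorem log_mul_card_windowOmega_le_rpow_mul_le (ht : 1 < t) (he : 0 < e) (he1 : 5000 * e ≤ 1)
    (hw : 2 ≤ t ^ e) {δ : ℝ} (hδ : 0 ≤ δ) (hδ1 : δ ≤ 1 / 10) (K : ℝ) :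
    log t / 2 * (#{p ∈ primesSquarefreeAbove (t ^ e) t | windowOmega (t ^ e) t (p - 1) ≤ K ∧
        ∃ V ∈ subsetsWithProdIn (primesIoc (t ^ e) t) (t ^ (2 / 3 - e - δ)) (t ^ (2 / 3 + 5 * e)),
          (∏ q ∈ V, q) ∣ p - 1} * (18 / 25 : ℝ) ^ K) ≤
      6 * exp 30 * 5000 ^ 2 * (t / log t) * e ^ (-(11 / 25) : ℝ) * ((15 * e + δ) * log t) := by
  have hlogt : 0 < log t := log_pos ht
  have ht0 : 0 < t := by linarith
  have hY : 1 ≤ t ^ (2 / 3 - e - δ) := one_le_rpow ht.le (by linarith)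
  have hYZ : t ^ (2 / 3 - e - δ) ≤ t ^ (2 / 3 + 5 * e) :=
    rpow_le_rpow_of_exponent_le ht.le (by linarith)
  have hlogY : log t / 2 ≤ log (t ^ (2 / 3 - e - δ)) := by
    rw [log_rpow ht0]
    nlinarith
  have hlogZY : 0 ≤ log (t ^ (2 / 3 + 5 * e) / t ^ (2 / 3 - e - δ)) :=
    log_nonneg ((one_le_div (by linarith)).2 hYZ)
  calc _ ≤ log (t ^ (2 / 3 - e - δ)) * _ :=
        mul_le_mul_of_nonneg_right hlogY (by positivity)
    _ ≤ _ := log_mul_card_windowOmega_le_mul_le (by norm_num) (by norm_num) hw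
        (rpow_le_rpow_of_exponent_le ht.le (by linarith))
        ((rpow_le_rpow_of_exponent_le ht.le (by norm_num)).trans_eq (rpow_one t))
        hY hYZ (rpow_mul_rpow_pow_le ht.le (by linarith)) K
    _ ≤ _ := mul_le_mul (sieve_factor_rpow_le ht he) (log_div_rpow_add_six_le ht0 hw δ)
        (by linarith) (by positivity)

theorem card_windowOmega_le_rpow_le (ht : 1 < t) (he : 0 < e) (heη : e ≤ exp (-24))
    (hw : 2 ≤ t ^ e) :
    #{p ∈ primesSquarefreeAbove (t ^ e) t | windowOmega (t ^ e) t (p - 1) ≤ -log e / log 2 ∧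
        ∃ V ∈ subsetsWithProdIn (primesIoc (t ^ e) t) (t ^ (2 / 3 - e - -(e * log e) / 3))
          (t ^ (2 / 3 + 5 * e)), (∏ q ∈ V, q) ∣ p - 1} ≤
      6 * exp 30 * 5000 ^ 2 * (t / log t) * e ^ (17 / 200 : ℝ) * (2 * (15 - log e / 3)) := by
  obtain ⟨hlog, he5000, helog⟩ := log_bounds_of_le_exp he heη
  have hlogt : 0 < log t := log_pos ht
  have hexp : e ^ (-(11 / 25) : ℝ) * e = e ^ (17 / 200 : ℝ) * e ^ (19 / 40 : ℝ) := by
    rw [← rpow_add_one he.ne', ← rpow_add he]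
    norm_num
  refine le_of_mul_le_mul_right ?_ (mul_pos (half_pos hlogt) (rpow_pos_of_pos he (19 / 40)))
  rw [mul_left_comm]
  calc _ ≤ log t / 2 * (_ * (18 / 25 : ℝ) ^ (-log e / log 2)) := by
        gcongr
        exact (rpow_le_rpow_neg_log_div_log_two he (by linarith)).2
    _ ≤ 6 * exp 30 * 5000 ^ 2 * (t / log t) * e ^ (-(11 / 25) : ℝ) *
          ((15 * e + -(e * log e) / 3) * log t) :=
        log_mul_card_windowOmega_le_rpow_mul_le ht he he5000 hw (by nlinarith) (by linarith) _
    _ = 6 * exp 30 * 5000 ^ 2 * (t / log t) * (e ^ (-(11 / 25) : ℝ) * e) *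
          ((15 - log e / 3) * log t) := by ring
    _ = _ := by
        rw [hexp]
        ring

theorem rpow_mul_sub_log_le (he : 0 < e) (he1 : e ≤ 1) :
    e ^ (17 / 200 : ℝ) * (15 - log e / 3) ≤ 215 * e ^ (1 / 12 : ℝ) := by
  have hlog := (abs_lt.1 (abs_log_mul_self_rpow_lt e (1 / 600) he he1 (by norm_num))).1
  have hone : e ^ (1 / 600 : ℝ) ≤ 1 := rpow_le_one he.le he1 (by norm_num)
  have hexp : e ^ (17 / 200 : ℝ) = e ^ (1 / 600 : ℝ) * e ^ (1 / 12 : ℝ) := by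
    rw [← rpow_add he]
    norm_num
  calc _ = (15 * e ^ (1 / 600 : ℝ) - log e * e ^ (1 / 600 : ℝ) / 3) * e ^ (1 / 12 : ℝ) := by
        rw [hexp]
        ring
    _ ≤ _ := by
        gcongr
        norm_num at hlog
        linarith

theorem primesWithDivisorIn_subset (w K : ℝ) {t Y Z S : ℝ} (hS : 0 < S) :
    primesWithDivisorIn t (Y * S) Z ⊆
      {p ∈ primesUpTo t | ∃ q : ℕ, w < q ∧ q ^ 2 ∣ p - 1} ∪ primesWithSmoothDivisor t w S ∪
      ({p ∈ primesSquarefreeAbove w t | K < windowOmega w t (p - 1)} ∪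
       {p ∈ primesSquarefreeAbove w t | windowOmega w t (p - 1) ≤ K ∧
        ∃ V ∈ subsetsWithProdIn (primesIoc w t) Y Z, (∏ q ∈ V, q) ∣ p - 1}) := fun p hp => by
  obtain ⟨hp, d, hd, hYd, hdZ⟩ := mem_filter.1 hp
  by_cases hsq : ∃ q : ℕ, w < q ∧ q ^ 2 ∣ p - 1
  · exact mem_union_left _ (mem_union_left _ (mem_filter.2 ⟨hp, hsq⟩))
  by_cases hsmooth : p ∈ primesWithSmoothDivisor t w S
  · exact mem_union_left _ (mem_union_right _ hsmooth)
  push Not at hsq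
  have hp : p ∈ primesSquarefreeAbove w t := mem_filter.2 ⟨hp, hsq⟩
  refine mem_union_right _ ?_
  rcases lt_or_ge K (windowOmega w t (p - 1)) with hK | hK
  · exact mem_union_left _ (mem_filter.2 ⟨hp, hK⟩)
  · exact mem_union_right _ (mem_filter.2 ⟨hp, hK,
      exists_mem_subsetsWithProdIn_of_dvd_sub_one hS hp hsmooth hd hYd hdZ⟩)

theorem exists_card_primesWithDivisorIn_rpow_le : ∃ C : ℝ, 0 < C ∧ ∀ t e : ℝ, 1 < t → 0 < e →
    e ≤ exp (-24) → 2 ≤ t ^ e →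
    #(primesWithDivisorIn t (t ^ (2 / 3 - e)) (t ^ (2 / 3 + 5 * e))) ≤
      C * (e ^ (1 / 12 : ℝ) * (t / log t)) + 2 * t / t ^ e := by
  refine ⟨48 * exp 66 * 5000 + 6 * exp 30 * 5000 ^ 2 * 431, by positivity,
    fun t e ht he heη hw => ?_⟩
  have he1 : e ≤ 1 := heη.trans (exp_le_one_iff.2 (by norm_num))
  have hlogt : 0 < log t := log_pos ht
  have ht0 : 0 < t := by linarith
  have hcover := primesWithDivisorIn_subset (t ^ e) (-log e / log 2) (t := t)
    (Y := t ^ (2 / 3 - e - -(e * log e) / 3)) (Z := t ^ (2 / 3 + 5 * e))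
    (rpow_pos_of_pos ht0 (-(e * log e) / 3))
  rw [← rpow_add ht0, sub_add_cancel] at hcover
  have hcard := Nat.cast_le (α := ℝ).2 ((card_le_card hcover).trans ((card_union_le _ _).trans
    (add_le_add (card_union_le _ _) (card_union_le _ _))))
  have hsq := card_primes_exists_sq_dvd_sub_one_le ht0.le hw
  have hsmooth := card_primesWithSmoothDivisor_rpow_le ht he heη hw
  have hmany := card_lt_windowOmega_rpow_le ht he heη hw
  have hfew := card_windowOmega_le_rpow_le ht he heη hw
  have hmany' : e ^ (17 / 200 : ℝ) ≤ e ^ (1 / 12 : ℝ) :=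
    rpow_le_rpow_of_exponent_ge he he1 (by norm_num)
  have hfew' := rpow_mul_sub_log_le he he1
  simp only [Nat.cast_add] at hcard
  have hfactor : 0 < 6 * exp 30 * 5000 ^ 2 * (t / log t) := by positivity
  have := mul_le_mul_of_nonneg_left hmany' hfactor.le
  have := mul_le_mul_of_nonneg_left hfew' hfactor.le
  linarith

end DivisorsNearTwoThirds

section PairOrder

open Finset Real

theorem ellPair_dvd_sub_one {a b : ℤ} {p : ℕ} (hp : p.Prime) (hab : ¬(p : ℤ) ∣ a * b) :
    ellPair a b p ∣ p - 1 := by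
  have : Fact p.Prime := ⟨hp⟩
  have ha : (a : ZMod p) ≠ 0 := fun h =>
    hab (((ZMod.intCast_zmod_eq_zero_iff_dvd a p).1 h).mul_right b)
  have hb : (b : ZMod p) ≠ 0 := fun h =>
    hab (((ZMod.intCast_zmod_eq_zero_iff_dvd b p).1 h).mul_left a)
  let generators : Set (ZMod p)ˣ := {Units.mk0 _ ha, Units.mk0 _ hb}
  have hmap : Submonoid.closure {(a : ZMod p), (b : ZMod p)} =
      (Subgroup.closure generators).toSubmonoid.map (Units.coeHom (ZMod p)) := by
    rw [Subgroup.closure_toSubmonoid_of_finite, MonoidHom.map_mclosure, Set.image_pair]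
    rfl
  have hcard : ellPair a b p = Nat.card (Subgroup.closure generators) := by
    rw [ellPair, hmap]
    exact (Nat.card_congr (Submonoid.equivMapOfInjective _ (Units.coeHom (ZMod p))
      Units.val_injective).toEquiv).symm
  rw [hcard, ← ZMod.card_units, ← Nat.card_eq_fintype_card]
  exact Subgroup.card_subgroup_dvd_card _

theorem rpow_two_thirds_sub_le {t e p : ℝ} (ht : 1 < t) (hlog : 1 ≤ log t)
    (hte : log t ^ 2 ≤ t ^ e) (hp : 1 < p) (hlow : t / log t ≤ p) (hpt : p ≤ t) :
    t ^ (2 / 3 - e) ≤ p ^ (2 / 3 : ℝ) / log p := by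
  have ht0 : 0 < t := by linarith
  have hlogp : 0 < log p := log_pos hp
  have hroot : t ^ (2 / 3 : ℝ) / log t ≤ p ^ (2 / 3 : ℝ) := by
    calc t ^ (2 / 3 : ℝ) / log t ≤ t ^ (2 / 3 : ℝ) / log t ^ (2 / 3 : ℝ) := by
          gcongr
          exact rpow_le_self_of_one_le hlog (by norm_num)
      _ = (t / log t) ^ (2 / 3 : ℝ) := (div_rpow ht0.le (by linarith) _).symm
      _ ≤ p ^ (2 / 3 : ℝ) := by gcongr
  calc t ^ (2 / 3 - e) = t ^ (2 / 3 : ℝ) / t ^ e := rpow_sub ht0 _ _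
    _ ≤ t ^ (2 / 3 : ℝ) / log t ^ 2 := by gcongr
    _ = t ^ (2 / 3 : ℝ) / log t / log t := by rw [div_div, pow_two]
    _ ≤ p ^ (2 / 3 : ℝ) / log p := by gcongr

theorem VCond.mem_primesWithDivisorIn {a b : ℤ} {ε : ℝ → ℝ} {x t : ℝ} {p : ℕ}
    (hV : VCond a b ε x p) (hp : p.Prime) (hε : AntitoneOn ε (Set.Ici 1)) (hlog : 1 ≤ log t)
    (ht : 1 ≤ t / log t) (hε0 : 0 ≤ ε (t / log t)) (hte : log t ^ 2 ≤ t ^ ε (t / log t))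
    (hlow : t / log t < p) (hpt : p ≤ t) :
    p ∈ primesWithDivisorIn t (t ^ (2 / 3 - ε (t / log t)))
      (t ^ (2 / 3 + 5 * ε (t / log t))) := by
  obtain ⟨hU, hgt, hle⟩ := hV
  have hp1 : (1 : ℝ) < p := mod_cast hp.one_lt
  have hεp : ε p ≤ ε (t / log t) := hε (Set.mem_Ici.2 ht) (Set.mem_Ici.2 hp1.le) hlow.le
  refine mem_filter.2 ⟨mem_primesUpTo.2 ⟨hp, hpt⟩, ellPair a b p,
    ellPair_dvd_sub_one hp fun h => hU (Or.inl h), ?_, hle.trans ?_⟩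
  · exact (rpow_two_thirds_sub_le (hp1.trans_le hpt) hlog hte hp1 hlow.le hpt).trans_lt hgt
  · calc (p : ℝ) ^ (2 / 3 + 5 * ε p) ≤ (p : ℝ) ^ (2 / 3 + 5 * ε (t / log t)) := by
          gcongr
          exact hp1.le
      _ ≤ t ^ (2 / 3 + 5 * ε (t / log t)) := by
          gcongr

end PairOrder

section LargeParameter

open Finset Real

theorem tendsto_div_log_atTop : Tendsto (fun t => t / log t) atTop atTop := by
  have hinv : Tendsto (fun t => log t / t) atTop (nhdsWithin 0 (Set.Ioi 0)) := by
    refine tendsto_nhdsWithin_iff.2 ⟨isLittleO_log_id_atTop.tendsto_div_nhds_zero, ?_⟩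
    filter_upwards [eventually_gt_atTop 1] with t ht
    exact div_pos (log_pos ht) (by linarith)
  simpa only [Pi.inv_def, inv_div] using hinv.inv_tendsto_nhdsGT_zero

theorem eventually_two_mul_log_sq_le : ∀ᶠ u in atTop, 2 * log u ^ 2 ≤ u := by
  filter_upwards [eventually_gt_atTop 0,
    (isLittleO_pow_log_id_atTop (n := 2)).bound (show (0 : ℝ) < 1 / 2 by norm_num)] with u hu hsq
  rw [id, norm_eq_abs, norm_eq_abs, abs_of_nonneg (by positivity), abs_of_pos hu] at hsq
  linarith

theorem log_sq_le_rpow {t e : ℝ} (ht : 0 < t) (hloglog : 1 ≤ log (log t))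
    (hsq : 2 * log (log t) ^ 2 ≤ log t) (he : 1 / log (log t) ≤ e) : log t ^ 2 ≤ t ^ e := by
  have hlog : 0 < log t := by nlinarith
  have hexp : log (log t) * 2 ≤ log t * e := by
    calc log (log t) * 2 ≤ log t * (1 / log (log t)) := by
          rw [mul_one_div, le_div_iff₀ (by linarith)]
          linarith
      _ ≤ log t * e := by gcongr
  rw [rpow_def_of_pos ht, ← rpow_two, rpow_def_of_pos hlog]
  exact exp_le_exp.2 hexp

theorem two_mul_div_rpow_le {t e : ℝ} (ht : 0 ≤ t) (hloglog : 1 ≤ log (log t))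
    (hsq : 2 * log (log t) ^ 2 ≤ log t) (hte : log t ^ 2 ≤ t ^ e) :
    2 * t / t ^ e ≤ 1 / log (log t) * (t / log t) := by
  have hlog : 0 < log t := by nlinarith
  have hpow : 2 * (log (log t) * log t) ≤ t ^ e := by nlinarith
  calc 2 * t / t ^ e ≤ 2 * t / (2 * (log (log t) * log t)) := by gcongr
    _ = 1 / log (log t) * (t / log t) := by
        field_simp

theorem eventually_one_div_log_log_le {ε : ℝ → ℝ}
    (hε : ∀ t : ℝ, 1 ≤ t → 1 / log (log (log (100 * t))) ≤ ε t) :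
    ∀ᶠ t in atTop, 1 / log (log t) ≤ ε (t / log t) := by
  have hlim₁ := tendsto_log_atTop.comp
    (tendsto_div_log_atTop.const_mul_atTop (show (0 : ℝ) < 100 by norm_num))
  have hlim₂ := tendsto_log_atTop.comp hlim₁
  filter_upwards [eventually_gt_atTop 0, tendsto_log_atTop.eventually_ge_atTop 100,
    tendsto_div_log_atTop.eventually_ge_atTop 1,
    hlim₁.eventually_gt_atTop 0, hlim₂.eventually_gt_atTop 0,
    (tendsto_log_atTop.comp hlim₂).eventually_gt_atTop 0] with t ht0 hlog ht h₁ h₂ h₃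
  simp only [Function.comp_apply] at h₁ h₂ h₃
  have hle : 100 * (t / log t) ≤ t := by
    rw [← mul_div_assoc, div_le_iff₀ (by linarith)]
    nlinarith
  have hloglog : log (log (100 * (t / log t))) ≤ log (log t) :=
    log_le_log h₁ (log_le_log (by linarith) hle)
  refine (one_div_le_one_div_of_le h₃ ?_).trans (hε _ ht)
  linarith [log_le_sub_one_of_pos h₂]

theorem eventually_card_primesUpTo_div_log_le :
    ∀ᶠ t in atTop, #(primesUpTo (t / log t)) ≤ 1 / log (log t) * (t / log t) := by
  filter_upwards [tendsto_div_log_atTop.eventually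
      (Chebyshev.eventually_primeCounting_le one_pos), eventually_gt_atTop 0,
    tendsto_log_atTop.eventually eventually_two_mul_log_sq_le,
    (tendsto_log_atTop.comp tendsto_log_atTop).eventually_ge_atTop 2] with t hπ ht hsq hloglog
  rw [Function.comp_apply] at hloglog
  have hlog : 0 < log t := by nlinarith
  have hconst : log 4 + 1 ≤ 3 := by linarith [log_four_eq, log_two_lt_d9]
  have hratio : 3 ≤ 1 / log (log t) * (log t - log (log t)) := by
    rw [one_div_mul_eq_div, le_div_iff₀ (by linarith)]
    nlinarith
  rw [primesUpTo_eq_primesLE, Nat.primesLE_card_eq_primeCounting]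
  refine hπ.trans ?_
  rw [log_div ht.ne' hlog.ne', div_le_iff₀ (by nlinarith)]
  calc (log 4 + 1) * (t / log t)
      ≤ (1 / log (log t) * (log t - log (log t))) * (t / log t) := by
        gcongr
        exact hconst.trans hratio
    _ = _ := by ring

end LargeParameter

section Assembly

open Finset Real

theorem natCard_VCond_le {a b : ℤ} {ε : ℝ → ℝ} {x t : ℝ} (hε : AntitoneOn ε (Set.Ici 1))
    (hlog : 1 ≤ log t) (ht : 1 ≤ t / log t) (hε0 : 0 ≤ ε (t / log t))
    (hte : log t ^ 2 ≤ t ^ ε (t / log t)) :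
    Nat.card {p : ℕ | p.Prime ∧ (p : ℝ) ≤ x ∧ VCond a b ε x p ∧ (p : ℝ) ≤ t} ≤
      #(primesUpTo (t / log t)) + #(primesWithDivisorIn t (t ^ (2 / 3 - ε (t / log t)))
        (t ^ (2 / 3 + 5 * ε (t / log t)))) := by
  refine le_trans ?_ (card_union_le _ _)
  rw [Nat.card_coe_set_eq, ← Set.ncard_coe_finset]
  refine Set.ncard_le_ncard (fun p hp => ?_) (Finset.finite_toSet _)
  obtain ⟨hp, -, hV, hpt⟩ := hp
  rw [mem_coe, mem_union]
  rcases le_or_gt (p : ℝ) (t / log t) with hsmall | hlarge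
  · exact Or.inl (mem_primesUpTo.2 ⟨hp, hsmall⟩)
  · exact Or.inr (hV.mem_primesWithDivisorIn hp hε hlog ht hε0 hte hlarge hpt)

theorem exists_eventually_natCard_VCond_le {ε : ℝ → ℝ} (hεdec : AntitoneOn ε (Set.Ici 1))
    (hεlim : Tendsto ε atTop (nhds 0))
    (hεlow : ∀ t : ℝ, 1 ≤ t → 1 / log (log (log (100 * t))) ≤ ε t) :
    ∃ C : ℝ, 0 < C ∧ ∀ᶠ t : ℝ in atTop, ∀ (a b : ℤ) (x : ℝ),
      (Nat.card {p : ℕ | p.Prime ∧ (p : ℝ) ≤ x ∧ VCond a b ε x p ∧ (p : ℝ) ≤ t} : ℝ) ≤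
        C * ε (t / log t) ^ ((1 : ℝ) / 12) * t / log t := by
  obtain ⟨C, hC, hdivisor⟩ := exists_card_primesWithDivisorIn_rpow_le
  refine ⟨C + 2, by linarith, ?_⟩
  filter_upwards [eventually_card_primesUpTo_div_log_le, eventually_one_div_log_log_le hεlow,
    eventually_gt_atTop 1, tendsto_log_atTop.eventually eventually_two_mul_log_sq_le,
    (tendsto_log_atTop.comp tendsto_log_atTop).eventually_ge_atTop 1,
    (hεlim.comp tendsto_div_log_atTop).eventually (eventually_le_nhds (exp_pos (-24))),
    tendsto_div_log_atTop.eventually_ge_atTop 1]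
    with t hsmall hlow ht hsq hloglog hup htlog a b x
  simp only [Function.comp_apply] at hloglog hup
  have hlog : 2 ≤ log t := by nlinarith
  have hT : 0 < t / log t := by linarith
  set e := ε (t / log t) with he_def
  have he : 0 < e := lt_of_lt_of_le (by positivity) hlow
  have hpow : 1 / log (log t) ≤ e ^ (1 / 12 : ℝ) := hlow.trans
    (self_le_rpow_of_le_one he.le (hup.trans (exp_le_one_iff.2 (by norm_num))) (by norm_num))
  have hte : log t ^ 2 ≤ t ^ e := log_sq_le_rpow (by linarith) hloglog hsq hlow
  have hcard : (Nat.card {p : ℕ | p.Prime ∧ (p : ℝ) ≤ x ∧ VCond a b ε x p ∧ (p : ℝ) ≤ t} : ℝ) ≤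
      _ := Nat.cast_le.2 (natCard_VCond_le hεdec (by linarith) htlog he.le hte)
  rw [Nat.cast_add, ← he_def] at hcard
  have hdiv := hdivisor t e ht he hup (by nlinarith)
  have hrest := two_mul_div_rpow_le (by linarith) hloglog hsq hte
  have hpowT := mul_le_mul_of_nonneg_right hpow hT.le
  calc _ ≤ C * (e ^ (1 / 12 : ℝ) * (t / log t)) + 2 * (e ^ (1 / 12 : ℝ) * (t / log t)) := by
        linarith
    _ = _ := by ring

end Assembly

theorem stmt_19_general (ε : ℝ → ℝ) (hεdec : AntitoneOn ε (Set.Ici 1))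
    (hεlim : Tendsto ε atTop (nhds 0))
    (hεlow : ∀ t : ℝ, 1 ≤ t → 1 / Real.log (Real.log (Real.log (100 * t))) ≤ ε t) :
    ∃ C : ℝ, 0 < C ∧ ∃ x₀ : ℝ, ∀ (a b : ℤ) (x : ℝ), x₀ ≤ x →
      ∀ t : ℝ, Real.log (Real.log x) < t →
        (Nat.card {p : ℕ | Nat.Prime p ∧ (p : ℝ) ≤ x ∧ VCond a b ε x p ∧ (p : ℝ) ≤ t} : ℝ)
          ≤ C * (ε (t / Real.log t)) ^ ((1 : ℝ) / 12) * t / Real.log t := by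
  obtain ⟨C, hC, hbound⟩ := exists_eventually_natCard_VCond_le hεdec hεlim hεlow
  obtain ⟨T, hT⟩ := eventually_atTop.1 hbound
  obtain ⟨x₀, hx₀⟩ := eventually_atTop.1
    ((Real.tendsto_log_atTop.comp Real.tendsto_log_atTop).eventually_ge_atTop T)
  exact ⟨C, hC, x₀, fun a b x hx t ht => hT t ((hx₀ x hx).trans ht.le) a b x⟩

/-- **Lemma (bound for `π_V(t)`).** For `a, b` nonzero multiplicatively independent
integers and `ε` a weakly decreasing positive function tending to `0` with
`ε(t) ≥ 1/log log log(100t)` for `t ≥ 1`: for all large `x`, uniformly for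
`log log x < t ≤ x`, the number of primes `p ≤ t` in `V(x)` is
`O(ε(t/log t)^(1/12) · t/log t)`. -/
theorem stmt_19 (a b : ℤ) (ha : a ≠ 0) (hb : b ≠ 0)
    (hind : ∀ m n : ℤ, (a : ℚ) ^ m * (b : ℚ) ^ n = 1 → m = 0 ∧ n = 0)
    (ε : ℝ → ℝ) (hεpos : ∀ t : ℝ, 1 ≤ t → 0 < ε t)
    (hεdec : AntitoneOn ε (Set.Ici 1))
    (hεlim : Tendsto ε atTop (nhds 0))
    (hεlow : ∀ t : ℝ, 1 ≤ t → 1 / Real.log (Real.log (Real.log (100 * t))) ≤ ε t) :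
    ∃ C : ℝ, 0 < C ∧ ∃ x₀ : ℝ, ∀ x : ℝ, 16 ≤ x → x₀ ≤ x →
      ∀ t : ℝ, Real.log (Real.log x) < t → t ≤ x →
        (Nat.card {p : ℕ | Nat.Prime p ∧ (p : ℝ) ≤ x ∧ VCond a b ε x p ∧ (p : ℝ) ≤ t} : ℝ)
          ≤ C * (ε (t / Real.log t)) ^ ((1 : ℝ) / 12) * t / Real.log t := by
  obtain ⟨C, hC, x₀, hbound⟩ := stmt_19_general ε hεdec hεlim hεlow
  exact ⟨C, hC, x₀, fun x _ hx t ht _ => hbound a b x hx t ht⟩
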